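/- arXiv:1303.1551 — 3 statements merged into one kernel-verified Lean document; each statement's English description precedes it below -/
import Mathlib

section
/- For every finite automorphism-free tree T, a tree isomorphic to E7 can be obtained from T by successively deleting one leaf at a time in such a way that each intermediate tree is also automorphism-free; that is, there is a sequence of trees T_0 = T, T_1, ..., T_k with each T_{i+1} obtained from T_i by deleting a leaf, every T_i automorphism-free, and T_k isomorphic to E7. -/
open SimpleGraph

/-- A graph is automorphism-free if its only automorphism is the trivial (identity) one. -/
def AutFree {V : Type*} (G : SimpleGraph V) : Prop :=
  ∀ φ : G ≃g G, ∀ v : V, φ v = v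

/-- The tree `E7`: a vertex of degree three (vertex 0) with three disjoint
paths of lengths 1, 2, and 3 attached (the spider with legs 1, 2, 3). -/
def E7 : SimpleGraph (Fin 7) :=
  SimpleGraph.fromEdgeSet {s(0, 1), s(0, 2), s(2, 3), s(0, 4), s(4, 5), s(5, 6)}


/-- Rooted trees: `C a b` is obtained from `b` by attaching the root of `a` as a new child
of the root of `b`. -/
inductive RT where
  | nil : RT
  | C : RT → RT → RT

namespace RT

/-- vertices -/
def V : RT → Type
  | nil => Unit
  | C a b => V a ⊕ V b

/-- root -/
def root : (t : RT) → V t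
  | nil => ()
  | C _ b => Sum.inr (root b)

/-- size -/
def sz : RT → ℕ
  | nil => 1
  | C a b => sz a + sz b

/-- adjacency -/
def A : (t : RT) → V t → V t → Prop
  | nil => fun _ _ => False
  | C a b => fun x y =>
    match x, y with
    | Sum.inl x, Sum.inl y => A a x y
    | Sum.inr x, Sum.inr y => A b x y
    | Sum.inl x, Sum.inr y => x = root a ∧ y = root b
    | Sum.inr y, Sum.inl x => x = root a ∧ y = root b

theorem A_symm : ∀ (t : RT) (x y : V t), A t x y → A t y x
  | nil, _, _, h => h
  | C a _, Sum.inl x, Sum.inl y, h => A_symm a x y h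
  | C _ b, Sum.inr x, Sum.inr y, h => A_symm b x y h
  | C _ _, Sum.inl _, Sum.inr _, h => h
  | C _ _, Sum.inr _, Sum.inl _, h => h

theorem A_irrefl : ∀ (t : RT) (x : V t), ¬ A t x x
  | nil, _, h => h
  | C a _, Sum.inl x, h => A_irrefl a x h
  | C _ b, Sum.inr x, h => A_irrefl b x h

/-- the graph -/
def g (t : RT) : SimpleGraph (V t) where
  Adj := A t
  symm := ⟨fun x y h => A_symm t x y h⟩
  loopless := ⟨fun x h => A_irrefl t x h⟩

noncomputable instance fin : (t : RT) → Fintype (V t)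
  | nil => inferInstanceAs (Fintype Unit)
  | C a b => letI := fin a; letI := fin b; inferInstanceAs (Fintype (V a ⊕ V b))

theorem card_V : ∀ t : RT, Fintype.card (V t) = sz t
  | nil => rfl
  | C a b => by
    have h1 := card_V a
    have h2 := card_V b
    show Fintype.card (V a ⊕ V b) = sz a + sz b
    rw [Fintype.card_sum, h1, h2]

theorem sz_pos : ∀ t : RT, 1 ≤ sz t
  | nil => le_refl _
  | C a b => by have := sz_pos a; simp only [sz]; omega

theorem eq_nil_of_sz {t : RT} (h : sz t = 1) : t = nil := by
  cases t with
  | nil => rfl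
  | C a b => have := sz_pos a; have := sz_pos b; simp only [sz] at h; omega

/-- left inclusion -/
def L {a b : RT} (x : V a) : V (C a b) := Sum.inl x
/-- right inclusion -/
def R {a b : RT} (x : V b) : V (C a b) := Sum.inr x

theorem cases_C {a b : RT} (z : V (C a b)) : (∃ x : V a, z = L x) ∨ (∃ y : V b, z = R y) := by
  rcases z with x | y
  · exact Or.inl ⟨x, rfl⟩
  · exact Or.inr ⟨y, rfl⟩

section
variable {a b : RT}
@[simp] theorem root_C : root (C a b) = R (root b) := rfl
@[simp] theorem adj_LL {x y : V a} : (g (C a b)).Adj (L x) (L y) ↔ (g a).Adj x y := Iff.rfl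
@[simp] theorem adj_RR {x y : V b} : (g (C a b)).Adj (R x) (R y) ↔ (g b).Adj x y := Iff.rfl
@[simp] theorem adj_LR {x : V a} {y : V b} :
    (g (C a b)).Adj (L x) (R y) ↔ x = root a ∧ y = root b := Iff.rfl
@[simp] theorem adj_RL {x : V a} {y : V b} :
    (g (C a b)).Adj (R y) (L x) ↔ x = root a ∧ y = root b := Iff.rfl
@[simp] theorem L_inj {x y : V a} : (L x : V (C a b)) = L y ↔ x = y := Sum.inl_injective.eq_iff
@[simp] theorem R_inj {x y : V b} : (R x : V (C a b)) = R y ↔ x = y := Sum.inr_injective.eq_iff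
@[simp] theorem L_ne_R {x : V a} {y : V b} : (L x : V (C a b)) ≠ R y := Sum.inl_ne_inr
@[simp] theorem R_ne_L {x : V a} {y : V b} : (R y : V (C a b)) ≠ L x := Sum.inr_ne_inl
end

/-- connectedness, as an induction principle -/
theorem conn : ∀ (t : RT) (P : V t → Prop), P (root t) →
    (∀ x y, (g t).Adj x y → P x → P y) → ∀ x, P x
  | nil, _, h, _ => fun _ => h
  | C a b, P, h, hs => by
    have hb : ∀ y : V b, P (R y) := conn b (fun y => P (R y)) h
      (fun x y hxy hx => hs (R x) (R y) hxy hx)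
    have ha : ∀ y : V a, P (L y) := conn a (fun y => P (L y))
      (hs (R (root b)) (L (root a)) ⟨rfl, rfl⟩ h)
      (fun x y hxy hx => hs (L x) (L y) hxy hx)
    intro z
    rcases cases_C z with ⟨x, rfl⟩ | ⟨x, rfl⟩
    · exact ha x
    · exact hb x

/-- rooted isomorphism -/
def E (t s : RT) : Prop := ∃ φ : g t ≃g g s, φ (root t) = root s

/-- trivial rooted automorphism group -/
def Rigid (t : RT) : Prop := ∀ φ : g t ≃g g t, φ (root t) = root t → ∀ v, φ v = v

theorem E.refl (t : RT) : E t t := ⟨SimpleGraph.Iso.refl, rfl⟩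
theorem E.symm {t s : RT} (h : E t s) : E s t := by
  obtain ⟨φ, h⟩ := h
  exact ⟨φ.symm, by rw [← h]; simp⟩
theorem E.trans {t s u : RT} (h : E t s) (h' : E s u) : E t u := by
  obtain ⟨φ, h⟩ := h
  obtain ⟨ψ, h'⟩ := h'
  exact ⟨φ.trans ψ, by simp [h, h']⟩

theorem sz_iso {t s : RT} (φ : g t ≃g g s) : sz t = sz s := by
  rw [← card_V, ← card_V]; exact Fintype.card_congr φ.toEquiv

theorem E.sz {t s : RT} (h : E t s) : sz t = sz s := sz_iso h.choose

theorem Rigid.of_E {t s : RT} (h : E t s) (hr : Rigid t) : Rigid s := by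
  obtain ⟨φ, h⟩ := h
  intro ψ hψ v
  have := hr ((φ.trans ψ).trans φ.symm) (by simp [h, hψ]; rw [← h]; simp) (φ.symm v)
  simpa using this

theorem rr (t : RT) : (SimpleGraph.Iso.refl : g t ≃g g t) (root t) = root t := rfl

/-- gluing isomorphisms -/
def glue {a b a' b' : RT} (α : g a ≃g g a') (β : g b ≃g g b') (ha : α (root a) = root a')
    (hb : β (root b) = root b') : g (C a b) ≃g g (C a' b') where
  toEquiv := (Equiv.sumCongr α.toEquiv β.toEquiv : (V a ⊕ V b) ≃ (V a' ⊕ V b'))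
  map_rel_iff' := by
    have key1 : ∀ x, α x = root a' ↔ x = root a := fun x => by rw [← ha]; simp
    have key2 : ∀ x, β x = root b' ↔ x = root b := fun x => by rw [← hb]; simp
    rintro (x | x) (y | y)
    · exact α.map_rel_iff
    · show (α x = root a' ∧ β y = root b') ↔ (x = root a ∧ y = root b)
      rw [key1, key2]
    · show (α y = root a' ∧ β x = root b') ↔ (y = root a ∧ x = root b)
      rw [key1, key2]
    · exact β.map_rel_iff

@[simp] theorem glue_L {a b a' b' : RT} (α : g a ≃g g a') (β : g b ≃g g b')
    (ha : α (root a) = root a') (hb : β (root b) = root b') (x : V a) :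
    glue α β ha hb (L x) = L (α x) := rfl
@[simp] theorem glue_R {a b a' b' : RT} (α : g a ≃g g a') (β : g b ≃g g b')
    (ha : α (root a) = root a') (hb : β (root b) = root b') (x : V b) :
    glue α β ha hb (R x) = R (β x) := rfl

theorem E.C {a b a' b' : RT} (h : E a a') (h' : E b b') : E (C a b) (C a' b') := by
  obtain ⟨φ, h⟩ := h
  obtain ⟨ψ, h'⟩ := h'
  exact ⟨glue φ ψ h h', by simp [h']⟩

/-- sibling swap -/
def swp (a b c : RT) : g (C a (C b c)) ≃g g (C b (C a c)) where
  toEquiv := 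
    { toFun := fun z => match z with
        | Sum.inl x => Sum.inr (Sum.inl x)
        | Sum.inr (Sum.inl x) => Sum.inl x
        | Sum.inr (Sum.inr x) => Sum.inr (Sum.inr x)
      invFun := fun z => match z with
        | Sum.inl x => Sum.inr (Sum.inl x)
        | Sum.inr (Sum.inl x) => Sum.inl x
        | Sum.inr (Sum.inr x) => Sum.inr (Sum.inr x)
      left_inv := by rintro (x | x | x) <;> rfl
      right_inv := by rintro (x | x | x) <;> rfl }
  map_rel_iff' := by
    rintro (x | x | x) (y | y | y)
    · show (g (C b (C a c))).Adj (R (L x)) (R (L y)) ↔ (g (C a (C b c))).Adj (L x) (L y)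
      simp
    · show (g (C b (C a c))).Adj (R (L x)) (L y) ↔ (g (C a (C b c))).Adj (L x) (R (L y))
      simp
    · show (g (C b (C a c))).Adj (R (L x)) (R (R y)) ↔ (g (C a (C b c))).Adj (L x) (R (R y))
      simp
    · show (g (C b (C a c))).Adj (L x) (R (L y)) ↔ (g (C a (C b c))).Adj (R (L x)) (L y)
      simp
    · show (g (C b (C a c))).Adj (L x) (L y) ↔ (g (C a (C b c))).Adj (R (L x)) (R (L y))
      simp
    · show (g (C b (C a c))).Adj (L x) (R (R y)) ↔ (g (C a (C b c))).Adj (R (L x)) (R (R y))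
      simp
    · show (g (C b (C a c))).Adj (R (R x)) (R (L y)) ↔ (g (C a (C b c))).Adj (R (R x)) (L y)
      simp
    · show (g (C b (C a c))).Adj (R (R x)) (L y) ↔ (g (C a (C b c))).Adj (R (R x)) (R (L y))
      simp
    · show (g (C b (C a c))).Adj (R (R x)) (R (R y)) ↔ (g (C a (C b c))).Adj (R (R x)) (R (R y))
      simp

theorem E.swap (a b c : RT) : E (RT.C a (RT.C b c)) (RT.C b (RT.C a c)) := ⟨swp a b c, rfl⟩

/-- rerooting across an edge -/
def flp (a b : RT) : g (C a b) ≃g g (C b a) where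
  toEquiv := (Equiv.sumComm (V a) (V b) : V a ⊕ V b ≃ V b ⊕ V a)
  map_rel_iff' := by
    rintro (x | x) (y | y)
    · exact Iff.rfl
    · exact and_comm
    · exact and_comm
    · exact Iff.rfl

@[simp] theorem flp_L (a b : RT) (x : V a) : flp a b (L x) = R x := rfl
@[simp] theorem flp_R (a b : RT) (x : V b) : flp a b (R x) = L x := rfl
@[simp] theorem swp_L (a b c : RT) (x : V a) : swp a b c (L x) = R (L x) := rfl
@[simp] theorem swp_RL (a b c : RT) (x : V b) : swp a b c (R (L x)) = L x := rfl
@[simp] theorem swp_RR (a b c : RT) (x : V c) : swp a b c (R (R x)) = R (R x) := rfl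

theorem restrict_L {a b a' b' : RT} (φ : g (C a b) ≃g g (C a' b'))
    (h1 : φ (L (root a)) = L (root a')) (h2 : φ (R (root b)) = R (root b')) (x : V a) :
    ∃ y : V a', φ (L x) = L y := by
  refine conn a (fun x => ∃ y : V a', φ (L x) = L y) ⟨_, h1⟩ ?_ x
  rintro x y hxy ⟨x', hx'⟩
  have h : (g (C a' b')).Adj (φ (L x)) (φ (L y)) := φ.map_rel_iff.2 (adj_LL.2 hxy)
  rcases cases_C (φ (L y)) with h3 | ⟨z, hz⟩
  · exact h3
  · rw [hx', hz, adj_LR] at h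
    rw [h.2, ← h2] at hz
    exact absurd (φ.injective hz) L_ne_R

theorem restrict_R {a b a' b' : RT} (φ : g (C a b) ≃g g (C a' b'))
    (h1 : φ (L (root a)) = L (root a')) (h2 : φ (R (root b)) = R (root b')) (x : V b) :
    ∃ y : V b', φ (R x) = R y := by
  obtain ⟨y, hy⟩ := restrict_L (((flp b a).trans φ).trans (flp a' b')) (by simp [h2]) (by simp [h1]) x
  refine ⟨y, ?_⟩
  apply (flp a' b').injective
  simpa using hy

theorem restrict {a b a' b' : RT} (φ : g (C a b) ≃g g (C a' b'))
    (h1 : φ (L (root a)) = L (root a')) (h2 : φ (R (root b)) = R (root b')) :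
    ∃ α : g a ≃g g a', ∀ x, φ (L x) = L (α x) := by
  choose f hf using restrict_L φ h1 h2
  choose k hk using restrict_L φ.symm (by rw [← h1]; simp) (by rw [← h2]; simp)
  refine ⟨⟨⟨f, k, ?_, ?_⟩, ?_⟩, hf⟩
  · intro x
    have := hk (f x)
    rw [← hf] at this
    simpa using this.symm
  · intro x
    have := hf (k x)
    rw [← hk] at this
    simpa using this.symm
  · intro x y
    show (g a').Adj (f x) (f y) ↔ _
    rw [← adj_LL (b := b'), ← hf, ← hf, ← adj_LL (b := b)]
    exact φ.map_rel_iff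

theorem restrict' {a b a' b' : RT} (φ : g (C a b) ≃g g (C a' b'))
    (h1 : φ (L (root a)) = L (root a')) (h2 : φ (R (root b)) = R (root b')) :
    ∃ α : g b ≃g g b', ∀ x, φ (R x) = R (α x) := by
  obtain ⟨α, hα⟩ := restrict (((flp b a).trans φ).trans (flp a' b')) (by simp [h2]) (by simp [h1])
  refine ⟨α, fun x => ?_⟩
  apply (flp a' b').injective
  simpa using hα x

theorem E_of_restrict {a b a' b' : RT} (φ : g (C a b) ≃g g (C a' b'))
    (h1 : φ (L (root a)) = L (root a')) (h2 : φ (R (root b)) = R (root b')) :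
    E a a' ∧ E b b' := by
  obtain ⟨α, hα⟩ := restrict φ h1 h2
  obtain ⟨β, hβ⟩ := restrict' φ h1 h2
  exact ⟨⟨α, by rw [hα] at h1; simpa using h1⟩, ⟨β, by rw [hβ] at h2; simpa using h2⟩⟩

theorem extract : ∀ (t : RT) (x : V t), x ≠ root t → ∃ (a b : RT) (ψ : g t ≃g g (C a b)) (z : V a),
    ψ (root t) = root (C a b) ∧ ψ x = L z ∧ ((g t).Adj (root t) x → z = root a)
  | nil, _, h => absurd rfl h
  | C a b, x, h => by
    rcases cases_C x with ⟨x, rfl⟩ | ⟨x, rfl⟩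
    · exact ⟨a, b, SimpleGraph.Iso.refl, x, rfl, rfl, by simp⟩
    · obtain ⟨c, d, ψ, z, h1, h2, h3⟩ := extract b x (by simpa using h)
      refine ⟨c, C a d, (glue SimpleGraph.Iso.refl ψ (rr _) h1).trans (swp a c d), z, ?_, ?_, ?_⟩
      · simp [h1]
      · simp [h2]
      · simpa using h3

theorem E.cancel {a b a' b' : RT} (h : E (RT.C a b) (RT.C a' b')) :
    (E a a' ∧ E b b') ∨ ∃ c, E b (RT.C a' c) ∧ E b' (RT.C a c) := by
  obtain ⟨φ, h⟩ := h
  simp only [root_C] at h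
  rcases cases_C (φ (L (root a))) with ⟨x, hx⟩ | ⟨x, hx⟩
  · have : (g (RT.C a' b')).Adj (φ (L (root a))) (φ (R (root b))) := φ.map_rel_iff.2 (by simp)
    rw [hx, h] at this
    simp at this
    subst this
    exact Or.inl (E_of_restrict φ hx h)
  · have : (g (RT.C a' b')).Adj (φ (R (root b))) (φ (L (root a))) := φ.map_rel_iff.2 (by simp)
    rw [hx, h, adj_RR] at this
    obtain ⟨c, d, ψ, z, h1, h2, h3⟩ := extract b' x this.ne'
    obtain rfl := h3 this
    let Φ := (φ.trans (glue SimpleGraph.Iso.refl ψ (rr _) h1)).trans (swp a' c d)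
    have := E_of_restrict Φ (by simp [Φ, hx, h2]) (by simp [Φ, h, h1])
    refine Or.inr ⟨d, this.2, ?_⟩
    exact E.trans ⟨ψ, by simp [h1]⟩ (E.C this.1.symm (E.refl _))

theorem rigid_C {a b : RT} : Rigid (C a b) ↔
    Rigid a ∧ Rigid b ∧ ∀ c d, E b (C c d) → ¬ E a c := by
  constructor
  · intro h
    refine ⟨?_, ?_, ?_⟩
    · intro φ hφ v
      simpa using h (glue φ SimpleGraph.Iso.refl hφ (rr _)) (by simp) (L v)
    · intro φ hφ v
      simpa using h (glue SimpleGraph.Iso.refl φ (rr _) hφ) (by simp [hφ]) (R v)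
    · rintro c d hb ha
      have h' : Rigid (C a (C a d)) := h.of_E ((E.refl _).C (hb.trans (ha.symm.C (E.refl _))))
      have := h' (swp a a d) (by simp) (L (root a))
      simp at this
  · rintro ⟨ha, hb, hab⟩ φ hφ
    simp only [root_C] at hφ
    have key : φ (L (root a)) = L (root a) := by
      have : (g (C a b)).Adj (φ (R (root b))) (φ (L (root a))) := φ.map_rel_iff.2 (by simp)
      rcases cases_C (φ (L (root a))) with ⟨x, hx⟩ | ⟨x, hx⟩
      · rw [hx, hφ] at this
        simp at this
        rw [hx, this]
      · rw [hx, hφ, adj_RR] at this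
        obtain ⟨c, d, ψ, z, h1, h2, h3⟩ := extract b x this.ne'
        obtain rfl := h3 this
        let Φ := (φ.trans (glue SimpleGraph.Iso.refl ψ (rr _) h1)).trans (swp a c d)
        have := E_of_restrict Φ (by simp [Φ, hx, h2]) (by simp [Φ, hφ, h1])
        exact absurd this.1 (hab c d ⟨ψ, by simp [h1]⟩)
    obtain ⟨α, hα⟩ := restrict φ key hφ
    obtain ⟨β, hβ⟩ := restrict' φ key hφ
    intro v
    rcases cases_C v with ⟨x, rfl⟩ | ⟨x, rfl⟩
    · rw [hα, ha α (by rw [hα] at key; simpa using key)]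
    · rw [hβ, hb β (by rw [hβ] at hφ; simpa using hφ)]

/-- distance -/
def d : (t : RT) → V t → V t → ℕ
  | nil => fun _ _ => 0
  | C a b => fun x y =>
    match x, y with
    | Sum.inl x, Sum.inl y => d a x y
    | Sum.inr x, Sum.inr y => d b x y
    | Sum.inl x, Sum.inr y => d a x (root a) + 1 + d b (root b) y
    | Sum.inr y, Sum.inl x => d b y (root b) + 1 + d a (root a) x

section
variable {a b : RT}
@[simp] theorem d_LL (x y : V a) : d (C a b) (L x) (L y) = d a x y := rfl
@[simp] theorem d_RR (x y : V b) : d (C a b) (R x) (R y) = d b x y := rfl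
@[simp] theorem d_LR (x : V a) (y : V b) :
  d (C a b) (L x) (R y) = d a x (root a) + 1 + d b (root b) y := rfl
@[simp] theorem d_RL (x : V a) (y : V b) :
  d (C a b) (R y) (L x) = d b y (root b) + 1 + d a (root a) x := rfl
end

theorem d_self : ∀ (t : RT) (x : V t), d t x x = 0
  | nil, _ => rfl
  | C a _, Sum.inl x => d_self a x
  | C _ b, Sum.inr x => d_self b x

theorem d_symm : ∀ (t : RT) (x y : V t), d t x y = d t y x
  | nil, _, _ => rfl
  | C a b, x, y => by
    have ha := d_symm a
    have hb := d_symm b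
    rcases cases_C x with ⟨x, rfl⟩ | ⟨x, rfl⟩ <;> rcases cases_C y with ⟨y, rfl⟩ | ⟨y, rfl⟩
    · simp [ha x y]
    · simp only [d_LR, d_RL, ha x, hb y]; omega
    · simp only [d_LR, d_RL, ha y, hb x]; omega
    · simp [hb x y]

theorem d_tri : ∀ (t : RT) (x y z : V t), d t x z ≤ d t x y + d t y z
  | nil, _, _, _ => le_refl _
  | C a b, x, y, z => by
    have ha := d_tri a
    have hb := d_tri b
    rcases cases_C x with ⟨x, rfl⟩ | ⟨x, rfl⟩ <;> rcases cases_C y with ⟨y, rfl⟩ | ⟨y, rfl⟩ <;>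
      rcases cases_C z with ⟨z, rfl⟩ | ⟨z, rfl⟩ <;>
      simp only [d_LR, d_RL, d_LL, d_RR]
    · exact ha _ _ _
    · have := ha x y (root a); omega
    · have := ha x (root a) z; omega
    · have := hb (root b) y z; omega
    · have := ha (root a) y z; omega
    · have := hb x (root b) z; omega
    · have := hb x y (root b); omega
    · exact hb _ _ _

theorem d_pos : ∀ (t : RT) (x y : V t), x ≠ y → 0 < d t x y
  | nil, _, _, h => absurd rfl h
  | C a b, x, y, h => by
    rcases cases_C x with ⟨x, rfl⟩ | ⟨x, rfl⟩ <;> rcases cases_C y with ⟨y, rfl⟩ | ⟨y, rfl⟩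
    · exact d_pos a x y (by simpa using h)
    · simp only [d_LR]; omega
    · simp only [d_RL]; omega
    · exact d_pos b x y (by simpa using h)

theorem d_adj : ∀ (t : RT) (x y : V t), (g t).Adj x y → d t x y = 1
  | nil, _, _, h => h.elim
  | C a b, x, y, h => by
    rcases cases_C x with ⟨x, rfl⟩ | ⟨x, rfl⟩ <;> rcases cases_C y with ⟨y, rfl⟩ | ⟨y, rfl⟩
    · exact d_adj a x y h
    · obtain ⟨rfl, rfl⟩ := adj_LR.1 h
      simp [d_self]
    · obtain ⟨rfl, rfl⟩ := adj_RL.1 h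
      simp [d_self]
    · exact d_adj b x y h

theorem d_pred : ∀ (t : RT) (x y : V t), x ≠ y → ∃ z, (g t).Adj z y ∧ d t x y = d t x z + 1
  | nil, _, _, h => absurd rfl h
  | C a b, x, y, h => by
    rcases cases_C x with ⟨x, rfl⟩ | ⟨x, rfl⟩ <;> rcases cases_C y with ⟨y, rfl⟩ | ⟨y, rfl⟩
    · obtain ⟨z, h1, h2⟩ := d_pred a x y (by simpa using h)
      exact ⟨L z, h1, h2⟩
    · by_cases hy : root b = y
      · subst hy
        exact ⟨L (root a), by simp, by simp [d_self]⟩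
      · obtain ⟨z, h1, h2⟩ := d_pred b (root b) y hy
        exact ⟨R z, h1, by simp only [d_LR, h2]; omega⟩
    · by_cases hy : root a = y
      · subst hy
        exact ⟨R (root b), by simp, by simp [d_self]⟩
      · obtain ⟨z, h1, h2⟩ := d_pred a (root a) y hy
        exact ⟨L z, h1, by simp only [d_RL, h2]; omega⟩
    · obtain ⟨z, h1, h2⟩ := d_pred b x y (by simpa using h)
      exact ⟨R z, h1, h2⟩

theorem d_iso_le {t s : RT} (φ : g t ≃g g s) (x : V t) :
    ∀ (n : ℕ) (y : V t), d t x y = n → d s (φ x) (φ y) ≤ n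
  | 0, y, h => by
    have : x = y := by
      by_contra hne
      have := d_pos t x y hne
      omega
    subst this
    rw [d_self]
  | n + 1, y, h => by
    obtain ⟨z, h1, h2⟩ := d_pred t x y (by rintro rfl; rw [d_self] at h; omega)
    have h3 := d_iso_le φ x n z (by omega)
    have h4 := d_tri s (φ x) (φ z) (φ y)
    have h5 := d_adj s (φ z) (φ y) (φ.map_rel_iff.2 h1)
    omega

theorem d_iso {t s : RT} (φ : g t ≃g g s) (x y : V t) : d s (φ x) (φ y) = d t x y := by
  apply le_antisymm (d_iso_le φ x _ y rfl)
  simpa using d_iso_le φ.symm (φ x) _ (φ y) rfl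

/-- total distance -/
noncomputable def tot (t : RT) (x : V t) : ℕ := ∑ y, d t x y

theorem tot_iso {t s : RT} (φ : g t ≃g g s) (x : V t) : tot s (φ x) = tot t x := by
  unfold tot
  rw [← Equiv.sum_comp φ.toEquiv]
  exact Finset.sum_congr rfl (fun y _ => d_iso φ x y)

theorem sum_C {a b : RT} (f : V (C a b) → ℕ) : ∑ z, f z = ∑ x, f (L x) + ∑ y, f (R y) :=
  Fintype.sum_sum_type (α₁ := V a) (α₂ := V b) f

theorem tot_L {a b : RT} (x : V a) :
    tot (C a b) (L x) = tot a x + sz b * (d a x (root a) + 1) + tot b (root b) := by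
  simp [tot, sum_C, Finset.sum_add_distrib, card_V]
  ring

theorem tot_R {a b : RT} (y : V b) :
    tot (C a b) (R y) = tot b y + sz a * (d b y (root b) + 1) + tot a (root a) := by
  simp [tot, sum_C, Finset.sum_add_distrib, card_V]
  ring

theorem tot_root_le (a : RT) (x : V a) : tot a (root a) ≤ tot a x + sz a * d a x (root a) := by
  have : ∑ y, d a (root a) y ≤ ∑ y, (d a x y + d a x (root a)) := by
    apply Finset.sum_le_sum
    intro y _
    have := d_tri a (root a) x y
    rw [d_symm a (root a) x] at this
    omega
  simpa [tot, Finset.sum_add_distrib, card_V] using this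

theorem tot_root_lt (a : RT) (x : V a) (hx : x ≠ root a) :
    tot a (root a) < tot a x + sz a * d a x (root a) := by
  have : ∑ y, d a (root a) y < ∑ y, (d a x y + d a x (root a)) := by
    apply Finset.sum_lt_sum
    · intro y _
      have := d_tri a (root a) x y
      rw [d_symm a (root a) x] at this
      omega
    · refine ⟨root a, Finset.mem_univ _, ?_⟩
      have := d_pos a x _ hx
      rw [d_self]; omega
  simpa [tot, Finset.sum_add_distrib, card_V] using this

theorem tot_lt_of_sz {a b : RT} (h : sz a < sz b) (x : V a) :
    tot (C a b) (R (root b)) < tot (C a b) (L x) := by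
  rw [tot_L, tot_R, d_self]
  have := tot_root_le a x
  nlinarith [Nat.zero_le (d a x (root a))]

theorem tot_lt_of_sz' {a b : RT} (h : sz a = sz b) (x : V a) (hx : x ≠ root a) :
    tot (C a b) (R (root b)) < tot (C a b) (L x) := by
  rw [tot_L, tot_R, d_self, ← h]
  have := tot_root_lt a x hx
  nlinarith [Nat.zero_le (d a x (root a))]

theorem rigid_of_autFree {t : RT} (h : AutFree (g t)) : Rigid t := fun φ _ v => h φ v

/-- unicentroidal trees -/
theorem U1 {t : RT} (hc : ∀ a b, E t (C a b) → 2 * sz a < sz t) (hr : Rigid t) : AutFree (g t) := by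
  intro φ
  apply hr φ
  by_contra hne
  obtain ⟨a, b, ψ, z, h1, h2, -⟩ := extract t _ hne
  have hs := sz_iso ψ
  have := hc a b ⟨ψ, by simp [h1]⟩
  simp only [sz] at hs
  have h3 := tot_lt_of_sz (a := a) (b := b) (by omega) z
  rw [← root_C, ← h1, ← h2, tot_iso, tot_iso, tot_iso] at h3
  omega

/-- bicentroidal trees -/
theorem U2 {a b : RT} (hs : sz a = sz b) (ha : Rigid a) (hb : Rigid b) (hab : ¬ E a b) :
    AutFree (g (C a b)) := by
  intro φ
  have e1 : tot (C a b) (L (root a)) = tot (C a b) (R (root b)) := by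
    rw [tot_L, tot_R, d_self, d_self, hs]; omega
  have h1 : ∀ x : V a, x ≠ root a → tot (C a b) (R (root b)) < tot (C a b) (L x) :=
    tot_lt_of_sz' hs
  have h2 : ∀ x : V b, x ≠ root b → tot (C a b) (R (root b)) < tot (C a b) (R x) := by
    intro x hx
    have := tot_lt_of_sz' hs.symm x hx
    rw [← flp_L a b, ← flp_R a b, tot_iso, tot_iso] at this
    omega
  have h3 : ∀ z, tot (C a b) z = tot (C a b) (R (root b)) → z = L (root a) ∨ z = R (root b) := by
    intro z hz
    rcases cases_C z with ⟨x, rfl⟩ | ⟨x, rfl⟩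
    · by_cases hx : x = root a
      · exact Or.inl (by rw [hx])
      · have := h1 x hx; omega
    · by_cases hx : x = root b
      · exact Or.inr (by rw [hx])
      · have := h2 x hx; omega
  have i1 := h3 (φ (R (root b))) (tot_iso φ _)
  have i2 := h3 (φ (L (root a))) ((tot_iso φ _).trans e1)
  have i3 : φ (L (root a)) ≠ φ (R (root b)) := fun h => L_ne_R (φ.injective h)
  rcases i1 with i1 | i1
  · rcases i2 with i2 | i2
    · rw [i1, i2] at i3; exact absurd rfl i3
    · exfalso
      exact hab (E_of_restrict (φ.trans (flp a b)) (by simp [i2]) (by simp [i1])).1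
  · rcases i2 with i2 | i2
    · obtain ⟨α, hα⟩ := restrict φ i2 i1
      obtain ⟨β, hβ⟩ := restrict' φ i2 i1
      intro v
      rcases cases_C v with ⟨x, rfl⟩ | ⟨x, rfl⟩
      · rw [hα, ha α (by rw [hα] at i2; simpa using i2)]
      · rw [hβ, hb β (by rw [hβ] at i1; simpa using i1)]
    · rw [i1, i2] at i3; exact absurd rfl i3

theorem autFree_iso {U W : Type*} {G : SimpleGraph U} {H : SimpleGraph W} (φ : G ≃g H)
    (h : AutFree G) : AutFree H := by
  intro ψ v
  have := h ((φ.trans ψ).trans φ.symm) (φ.symm v)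
  simpa using this

theorem not_E_of_autFree {a b : RT} (h : AutFree (g (C a b))) : ¬ E a b := by
  rintro ⟨φ, hφ⟩
  have := h ((glue φ φ.symm hφ (by rw [← hφ]; simp)).trans (flp b a)) (R (root b))
  simp at this

end RT

namespace RT

/-- `t` is obtained from `t'` by attaching a leaf at `p` -/
def LDp (t t' : RT) (p : V t') : Prop := ∃ (f : V t' → V t) (l : V t),
  Function.Injective f ∧ (∀ x y, (g t).Adj (f x) (f y) ↔ (g t').Adj x y) ∧ f (root t') = root t ∧
  (∀ z, z = l ∨ ∃ x, z = f x) ∧ (∀ x, f x ≠ l) ∧ (∀ x, (g t).Adj l (f x) ↔ x = p)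

/-- `t'` is obtained from `t` by deleting a non-root leaf -/
def LD (t t' : RT) : Prop := ∃ p, LDp t t' p

theorem LDp.base (b : RT) : LDp (C nil b) b (root b) := by
  refine ⟨R, L (root nil), fun x y h => by simpa using h, by simp, rfl, ?_, by simp, by simp⟩
  intro z
  rcases cases_C z with ⟨x, rfl⟩ | ⟨x, rfl⟩
  · exact Or.inl rfl
  · exact Or.inr ⟨x, rfl⟩

theorem LDp.left {a a' : RT} {p : V a'} (h : LDp a a' p) (b : RT) :
    LDp (C a b) (C a' b) (L p) := by
  obtain ⟨f, l, h1, h2, h3, h4, h5, h6⟩ := h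
  let F : V (C a' b) → V (C a b) := fun z => Sum.map f id z
  have FL : ∀ x : V a', F (L x) = L (f x) := fun _ => rfl
  have FR : ∀ x : V b, F (R x) = R x := fun _ => rfl
  have h3' : ∀ x, f x = root a ↔ x = root a' := fun x => by rw [← h3]; exact h1.eq_iff
  have hl : l ≠ root a := by rw [← h3]; exact (h5 _).symm
  refine ⟨F, L l, Sum.map_injective.2 ⟨h1, Function.injective_id⟩, ?_, ?_, ?_, ?_, ?_⟩
  · intro x y
    rcases cases_C x with ⟨x, rfl⟩ | ⟨x, rfl⟩ <;> rcases cases_C y with ⟨y, rfl⟩ | ⟨y, rfl⟩ <;>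
      simp [FL, FR, h2, h3']
  · simp [FR]
  · intro x
    rcases cases_C x with ⟨x, rfl⟩ | ⟨x, rfl⟩
    · rcases h4 x with rfl | ⟨y, rfl⟩
      · exact Or.inl rfl
      · exact Or.inr ⟨L y, rfl⟩
    · exact Or.inr ⟨R x, rfl⟩
  · intro x
    rcases cases_C x with ⟨x, rfl⟩ | ⟨x, rfl⟩ <;> simp [FL, FR, h5]
  · intro x
    rcases cases_C x with ⟨x, rfl⟩ | ⟨x, rfl⟩ <;> simp [FL, FR, h6, hl]

theorem LDp.right {b b' : RT} {p : V b'} (h : LDp b b' p) (a : RT) :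
    LDp (C a b) (C a b') (R p) := by
  obtain ⟨f, l, h1, h2, h3, h4, h5, h6⟩ := h
  let F : V (C a b') → V (C a b) := fun z => Sum.map id f z
  have FL : ∀ x : V a, F (L x) = L x := fun _ => rfl
  have FR : ∀ x : V b', F (R x) = R (f x) := fun _ => rfl
  have h3' : ∀ x, f x = root b ↔ x = root b' := fun x => by rw [← h3]; exact h1.eq_iff
  have hl : l ≠ root b := by rw [← h3]; exact (h5 _).symm
  refine ⟨F, R l, Sum.map_injective.2 ⟨Function.injective_id, h1⟩, ?_, ?_, ?_, ?_, ?_⟩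
  · intro x y
    rcases cases_C x with ⟨x, rfl⟩ | ⟨x, rfl⟩ <;> rcases cases_C y with ⟨y, rfl⟩ | ⟨y, rfl⟩ <;>
      simp [FL, FR, h2, h3']
  · simp [FR, h3]
  · intro x
    rcases cases_C x with ⟨x, rfl⟩ | ⟨x, rfl⟩
    · exact Or.inr ⟨L x, rfl⟩
    · rcases h4 x with rfl | ⟨y, rfl⟩
      · exact Or.inl rfl
      · exact Or.inr ⟨R y, rfl⟩
  · intro x
    rcases cases_C x with ⟨x, rfl⟩ | ⟨x, rfl⟩ <;> simp [FL, FR, h5]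
  · intro x
    rcases cases_C x with ⟨x, rfl⟩ | ⟨x, rfl⟩ <;> simp [FL, FR, h6, hl]

theorem addLeaf : ∀ (t' : RT) (p : V t'), ∃ t, LDp t t' p
  | nil, _ => ⟨_, LDp.base nil⟩
  | C a b, p => by
    rcases cases_C p with ⟨x, rfl⟩ | ⟨x, rfl⟩
    · obtain ⟨t, ht⟩ := addLeaf a x
      exact ⟨_, ht.left b⟩
    · obtain ⟨t, ht⟩ := addLeaf b x
      exact ⟨_, ht.right a⟩

theorem LD.base (b : RT) : LD (C nil b) b := ⟨_, LDp.base b⟩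
theorem LD.left {a a' : RT} (h : LD a a') (b : RT) : LD (C a b) (C a' b) :=
  ⟨_, h.choose_spec.left b⟩
theorem LD.right {b b' : RT} (h : LD b b') (a : RT) : LD (C a b) (C a b') :=
  ⟨_, h.choose_spec.right a⟩

theorem LD.of_E {t s t' : RT} (h : LD s t') (hE : E t s) : LD t t' := by
  obtain ⟨φ, hφ⟩ := hE.symm
  obtain ⟨p, f, l, h1, h2, h3, h4, h5, h6⟩ := h
  have ha : ∀ x y, (g t).Adj (φ x) (φ y) ↔ (g s).Adj x y := fun x y => φ.map_rel_iff
  refine ⟨p, fun x => φ (f x), φ l, φ.injective.comp h1, ?_, ?_, ?_, ?_, ?_⟩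
  · intro x y
    rw [ha, h2]
  · show φ (f (root t')) = _
    rw [h3, hφ]
  · intro z
    obtain ⟨z, rfl⟩ := φ.surjective z
    rcases h4 z with rfl | ⟨x, rfl⟩
    · exact Or.inl rfl
    · exact Or.inr ⟨x, rfl⟩
  · intro x h
    exact h5 x (φ.injective h)
  · intro x
    rw [ha, h6]

theorem LD.sz {t t' : RT} (h : LD t t') : sz t = sz t' + 1 := by
  obtain ⟨p, f, l, h1, h2, h3, h4, h5, h6⟩ := h
  rw [← card_V, ← card_V, ← Fintype.card_option]
  symm
  refine Fintype.card_congr (Equiv.ofBijective (fun o => o.elim l f) ⟨?_, ?_⟩)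
  · rintro (_ | x) (_ | y) h
    · rfl
    · exact absurd h.symm (h5 y)
    · exact absurd h (h5 x)
    · exact congrArg some (h1 h)
  · intro z
    rcases h4 z with rfl | ⟨x, rfl⟩
    · exact ⟨none, rfl⟩
    · exact ⟨some x, rfl⟩

theorem E.child {a b c e : RT} (h : E (RT.C a b) (RT.C c e)) : E a c ∨ ∃ k, E b (RT.C c k) := by
  rcases h.cancel with h | ⟨k, h, _⟩
  · exact Or.inl h.1
  · exact Or.inr ⟨k, h⟩

theorem E.promote {a b c k : RT} (h : E b (RT.C c k)) : E (RT.C a b) (RT.C c (RT.C a k)) :=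
  ((E.refl a).C h).trans (E.swap _ _ _)

theorem E_nil_right {a c k : RT} (h : E (C a nil) (C c k)) : E a c ∧ k = nil := by
  rcases h.cancel with ⟨h1, h2⟩ | ⟨k, h, _⟩
  · exact ⟨h1, eq_nil_of_sz h2.symm.sz⟩
  · have := h.sz
    have := sz_pos c
    have := sz_pos k
    simp only [RT.sz] at *
    omega

theorem not_E_nil_C {a b : RT} : ¬ E nil (C a b) := by
  intro h
  have := h.sz
  have := sz_pos a
  have := sz_pos b
  simp only [RT.sz] at *
  omega

theorem rigid_nil : Rigid nil := fun _ _ _ => rfl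

theorem rigid_C_nil {a : RT} : Rigid (C a nil) ↔ Rigid a := by
  rw [rigid_C]
  exact ⟨fun h => h.1, fun h => ⟨h, rigid_nil, fun c k h => absurd h not_E_nil_C⟩⟩

theorem minChild (t : RT) (ht : t ≠ nil) :
    ∃ a b, E t (C a b) ∧ ∀ c k, E t (C c k) → sz a ≤ sz c := by
  classical
  have hex : ∃ n, ∃ a b, E t (C a b) ∧ sz a = n := by
    cases t with
    | nil => exact absurd rfl ht
    | C a b => exact ⟨_, a, b, E.refl _, rfl⟩
  obtain ⟨a, b, h, hs⟩ := Nat.find_spec hex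
  refine ⟨a, b, h, fun c k hc => ?_⟩
  rw [hs]
  exact Nat.find_min' hex ⟨c, k, hc, rfl⟩

theorem Rdel : ∀ (n : ℕ) (t : RT), sz t ≤ n → Rigid t → t ≠ nil →
    ∃ t', LD t t' ∧ Rigid t' ∧
      ∀ c k, E t' (C c k) → ∃ c' k', E t (C c' k') ∧ sz c ≤ sz c'
  | 0, t, h, _, _ => by have := sz_pos t; omega
  | n + 1, t, h, hr, hn => by
    obtain ⟨a, b, hab, hmin⟩ := minChild t hn
    have hr' := rigid_C.1 (hr.of_E hab)
    by_cases ha : a = nil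
    · subst ha
      refine ⟨b, (LD.base b).of_E hab, hr'.2.1, fun c k hc => ?_⟩
      exact ⟨c, _, hab.trans hc.promote, le_refl _⟩
    · have hs := hab.sz
      have := sz_pos b
      simp only [sz] at hs
      obtain ⟨a', h1, h2, -⟩ := Rdel n a (by omega) hr'.1 ha
      have h1s := h1.sz
      refine ⟨C a' b, (h1.left b).of_E hab, ?_, ?_⟩
      · refine rigid_C.2 ⟨h2, hr'.2.1, fun c k hc hE => ?_⟩
        have := hmin c _ (hab.trans hc.promote)
        have := hE.sz
        omega
      · intro c k hc
        rcases hc.child with hc | ⟨k', hc⟩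
        · refine ⟨a, b, hab, ?_⟩
          have := hc.sz
          omega
        · exact ⟨c, _, hab.trans hc.promote, le_refl _⟩

theorem Two : ∀ (n : ℕ) (a b : RT), sz a ≤ n → sz a = sz b → Rigid a → Rigid b → ¬ E a b →
    (∃ a', LD a a' ∧ Rigid a' ∧ ¬ E b (C a' nil)) ∨ (∃ b', LD b b' ∧ Rigid b' ∧ ¬ E a (C b' nil))
  | 0, a, _, h, _, _, _, _ => by have := sz_pos a; omega
  | n + 1, a, b, h, hs, ha, hb, hab => by
    have na : a ≠ nil := by
      rintro rfl
      rw [eq_nil_of_sz hs.symm] at hab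
      exact hab (E.refl _)
    have nb : b ≠ nil := by
      rintro rfl
      rw [eq_nil_of_sz hs] at hab
      exact hab (E.refl _)
    by_cases h1 : ∃ a₁, E a (C a₁ nil)
    · by_cases h2 : ∃ b₁, E b (C b₁ nil)
      · obtain ⟨a₁, h1⟩ := h1
        obtain ⟨b₁, h2⟩ := h2
        have s1 := h1.sz
        have s2 := h2.sz
        simp only [sz] at s1 s2
        rcases Two n a₁ b₁ (by omega) (by omega) (rigid_C_nil.1 (ha.of_E h1))
          (rigid_C_nil.1 (hb.of_E h2))
          (fun h => hab (h1.trans ((h.C (E.refl _)).trans h2.symm))) with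
          ⟨c, c1, c2, c3⟩ | ⟨c, c1, c2, c3⟩
        · refine Or.inl ⟨C c nil, (c1.left nil).of_E h1, rigid_C_nil.2 c2, fun hE => c3 ?_⟩
          exact (E_nil_right (h2.symm.trans hE)).1
        · refine Or.inr ⟨C c nil, (c1.left nil).of_E h2, rigid_C_nil.2 c2, fun hE => c3 ?_⟩
          exact (E_nil_right (h1.symm.trans hE)).1
      · obtain ⟨a', h3, h4, -⟩ := Rdel _ a le_rfl ha na
        exact Or.inl ⟨a', h3, h4, fun h => h2 ⟨_, h⟩⟩
    · obtain ⟨b', h3, h4, -⟩ := Rdel _ b le_rfl hb nb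
      exact Or.inr ⟨b', h3, h4, fun h => h1 ⟨_, h⟩⟩

/-- paths with `n + 1` vertices, rooted at an end -/
def P : ℕ → RT
  | 0 => nil
  | n + 1 => C (P n) nil

theorem sz_P : ∀ n, sz (P n) = n + 1
  | 0 => rfl
  | n + 1 => by simp [P, sz, sz_P n]

theorem rigid_P : ∀ n, Rigid (P n)
  | 0 => rigid_nil
  | n + 1 => rigid_C_nil.2 (rigid_P n)

theorem LD_P : ∀ n, LD (P (n + 1)) (P n)
  | 0 => LD.base nil
  | n + 1 => (LD_P n).left nil

theorem path_of : ∀ (n : ℕ) (e : RT), sz e = n + 1 → Rigid e →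
    (∀ e', LD e e' → Rigid e' → E e (C e' nil)) → E e (P n)
  | 0, e, hs, _, _ => by rw [eq_nil_of_sz hs]; exact E.refl _
  | n + 1, e, hs, hr, hall => by
    obtain ⟨e', h1, h2, -⟩ := Rdel _ e le_rfl hr (by rintro rfl; simp only [sz] at hs; omega)
    have h3 := hall e' h1 h2
    have h4 := h1.sz
    refine h3.trans (E.C (path_of n e' (by omega) h2 fun e'' k1 k2 => ?_) (E.refl _))
    have := hall (C e'' nil) ((k1.left nil).of_E h3) (rigid_C_nil.2 k2)
    exact (E_nil_right (h3.symm.trans this)).1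

theorem centroid_aux : ∀ (M : ℕ) (t : RT), (∀ a b, E t (C a b) → sz a ≤ M) →
    ∃ s, Nonempty (g t ≃g g s) ∧ ∀ a b, E s (C a b) → 2 * sz a ≤ sz s
  | 0, t, h => ⟨t, ⟨SimpleGraph.Iso.refl⟩, fun a b hab => by
      have := h a b hab
      have := sz_pos a
      omega⟩
  | M + 1, t, h => by
    by_cases hall : ∀ a b, E t (C a b) → 2 * sz a ≤ sz t
    · exact ⟨t, ⟨SimpleGraph.Iso.refl⟩, hall⟩
    · push Not at hall
      obtain ⟨a, b, hab, hlt⟩ := hall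
      have hM := h a b hab
      have hs := hab.sz
      simp only [sz] at hs
      obtain ⟨s, ⟨ψ⟩, h2⟩ := centroid_aux M (C b a) (by
        intro c k hc
        rcases hc.child with hc | ⟨k', hc⟩
        · have := hc.sz
          omega
        · have := sz_pos k'
          have := hc.sz
          simp only [sz] at this
          omega)
      obtain ⟨φ, -⟩ := hab
      exact ⟨s, ⟨(φ.trans (flp a b)).trans ψ⟩, h2⟩

theorem centroid (t : RT) : 
    ∃ s, Nonempty (g t ≃g g s) ∧ ∀ a b, E s (C a b) → 2 * sz a ≤ sz s :=
  centroid_aux (sz t) t (fun a b h => by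
    have := h.sz
    simp only [sz] at this
    omega)

/-- the conclusion of one step -/
def Good (t : RT) : Prop := ∃ s t', Nonempty (g t ≃g g s) ∧ LD s t' ∧ AutFree (g t')

theorem Good.of_iso {t s : RT} (φ : g t ≃g g s) (h : Good s) : Good t := by
  obtain ⟨u, t', ⟨ψ⟩, h⟩ := h
  exact ⟨u, t', ⟨φ.trans ψ⟩, h⟩

theorem Good.of_LD {t t' : RT} (h : LD t t') (h' : AutFree (g t')) : Good t :=
  ⟨t, t', ⟨SimpleGraph.Iso.refl⟩, h, h'⟩

theorem good_bi_aux {a b a' : RT} (hs : sz a = sz b) (hb : Rigid b) (h1 : LD a a') (h2 : Rigid a')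
    (h3 : ¬ E b (C a' nil)) : Good (C a b) := by
  have h1s := h1.sz
  refine Good.of_LD (h1.left b) (U1 ?_ (rigid_C.2 ⟨h2, hb, ?_⟩))
  · intro c k hc
    simp only [sz]
    rcases hc.child with hc | ⟨k', hc⟩
    · have := hc.sz
      omega
    · have := sz_pos k'
      have := hc.sz
      simp only [sz] at this
      omega
  · intro c k hc hE
    have e1 := hc.sz
    have e2 := hE.sz
    simp only [sz] at e1
    have : k = nil := eq_nil_of_sz (by omega)
    subst this
    exact h3 (hc.trans (hE.symm.C (E.refl _)))

theorem good_bi {a b : RT} (hs : sz a = sz b) (h : AutFree (g (C a b))) : Good (C a b) := by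
  have hr := rigid_C.1 (rigid_of_autFree h)
  rcases Two _ a b le_rfl hs hr.1 hr.2.1 (not_E_of_autFree h) with
    ⟨c, c1, c2, c3⟩ | ⟨c, c1, c2, c3⟩
  · exact good_bi_aux hs hr.2.1 c1 c2 c3
  · exact (good_bi_aux hs.symm hr.1 c1 c2 c3).of_iso (flp a b)

theorem autFree_E {t s : RT} (h : E t s) (hs : AutFree (g s)) : AutFree (g t) :=
  autFree_iso h.choose.symm hs

theorem good_deg2_aux {D K D' : RT} (hs : sz D = sz K) (hK : Rigid K) (h1 : LD D D')
    (h2 : Rigid D') (h3 : ¬ E K (C D' nil)) : Good (C D (C K nil)) := by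
  have h1s := h1.sz
  refine Good.of_LD (h1.left _) (autFree_E (E.swap _ _ _) (U2 ?_ hK (rigid_C_nil.2 h2) h3))
  simp only [sz]; omega

/-- the tree `E7` -/
def e7 : RT := C (P 2) (C (P 1) (C nil nil))

theorem good_deg3 {D K : RT} {m : ℕ} (hD : sz D = m) (hK : sz K + 1 = m)
    (hr : Rigid (C D (C K (C nil nil)))) :
    Good (C D (C K (C nil nil))) ∨ E (C D (C K (C nil nil))) e7 := by
  have hr1 := rigid_C.1 hr
  have hr2 := rigid_C.1 hr1.2.1
  have hK1 : sz K ≠ 1 := by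
    intro h
    rw [eq_nil_of_sz h] at hr2
    exact hr2.2.2 nil nil (E.refl _) (E.refl _)
  have hKpos := sz_pos K
  by_cases h1 : E D (C K nil)
  swap
  · left
    refine Good.of_LD ?_ (U2 (a := D) (b := C K nil) (by simp only [sz]; omega) hr1.1
      (rigid_C_nil.2 hr2.1) h1)
    exact ((LD.base nil).right K).right D
  by_cases h2 : ∀ K', LD K K' → Rigid K' → E K (C K' nil)
  swap
  · push Not at h2
    obtain ⟨K', k1, k2, k3⟩ := h2
    have ks := k1.sz
    left
    refine Good.of_LD (((k1.left nil).of_E h1).left _) (U1 ?_ (rigid_C.2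
      ⟨rigid_C_nil.2 k2, hr1.2.1, ?_⟩))
    · intro c k hc
      simp only [sz]
      rcases hc.child with hc | ⟨k', hc⟩
      · have := hc.sz
        simp only [sz] at this
        omega
      · rcases hc.child with hc | ⟨k', hc⟩
        · have := hc.sz
          omega
        · have := sz_pos k'
          have := hc.sz
          simp only [sz] at this
          omega
    · intro c k hc hE
      rcases hc.child with hc | ⟨k', hc⟩
      · exact k3 (hc.trans hE.symm)
      · have e1 := (E_nil_right hc).1.sz
        have e2 := hE.sz
        simp only [sz] at e1 e2
        have := sz_pos K'
        omega
  obtain ⟨n, hn⟩ : ∃ n, sz K = n + 2 := ⟨sz K - 2, by omega⟩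
  have hKP : E K (P (n + 1)) := path_of _ K (by omega) hr2.1 h2
  have hDP : E D (P (n + 2)) := h1.trans (hKP.C (E.refl _))
  have hEE := hDP.C (hKP.C (E.refl (C nil nil)))
  rcases n with _ | n
  · right
    exact hEE
  · left
    refine Good.of_LD ((((LD_P (n + 1)).left (C nil nil)).right _).of_E hEE) (U2 ?_ (rigid_P _) ?_ ?_)
    · simp only [sz, sz_P]
    · refine rigid_C.2 ⟨rigid_P _, rigid_C_nil.2 rigid_nil, fun c k hc hE => ?_⟩
      have e1 := (E_nil_right hc).1.sz
      have e2 := hE.sz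
      rw [sz_P] at e2
      simp only [sz] at e1
      omega
    · intro h
      have := (E_nil_right h).2
      cases this

theorem main_step (t : RT) (h2 : 2 ≤ sz t) (h : AutFree (g t)) : Good t ∨ Nonempty (g t ≃g g e7) := by
  obtain ⟨s, ⟨φ⟩, hs⟩ := centroid t
  have hss := sz_iso φ
  rw [hss] at h2
  have hA := autFree_iso φ h
  suffices Good s ∨ Nonempty (g s ≃g g e7) by
    rcases this with h | ⟨⟨ψ⟩⟩
    · exact Or.inl (h.of_iso φ)
    · exact Or.inr ⟨φ.trans ψ⟩
  clear h hss φ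
  have hr := rigid_of_autFree hA
  by_cases hbi : ∃ a b, E s (C a b) ∧ 2 * sz a = sz s
  · obtain ⟨a, b, ⟨φ, hφ⟩, he⟩ := hbi
    have := sz_iso φ
    simp only [sz] at this
    exact Or.inl ((good_bi (by omega) (autFree_iso φ hA)).of_iso φ)
  have hlt : ∀ a b, E s (C a b) → 2 * sz a < sz s := fun a b hab => by
    have := hs a b hab
    have : 2 * sz a ≠ sz s := fun h => hbi ⟨a, b, hab, h⟩
    omega
  by_cases hbig : ∃ D K, E s (C D K) ∧ 2 * sz D + 1 = sz s
  swap
  · obtain ⟨s', h1, h2, h3⟩ := Rdel _ s le_rfl hr (by rintro rfl; simp only [sz] at h2; omega)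
    refine Or.inl (Good.of_LD h1 (U1 ?_ h2))
    intro c k hc
    obtain ⟨c', k', hc', hle⟩ := h3 c k hc
    have := hlt _ _ hc'
    have : 2 * sz c' + 1 ≠ sz s := fun h => hbig ⟨_, _, hc', h⟩
    have := h1.sz
    omega
  obtain ⟨D, K, hE, he⟩ := hbig
  have hDK := hE.sz
  simp only [sz] at hDK
  have hr' := hr.of_E hE
  have hr1 := rigid_C.1 hr'
  obtain ⟨ε, -⟩ := id hE
  by_cases hK : ∃ F, E K (C F nil)
  · obtain ⟨F, hF⟩ := hK
    have hFs := hF.sz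
    simp only [sz] at hFs
    have hE2 := hE.trans ((E.refl D).C hF)
    have hrF := rigid_C_nil.1 (hr1.2.1.of_E hF)
    have hDF : sz D = sz F := by omega
    rcases Two _ D F le_rfl hDF hr1.1 hrF (fun h => hr1.2.2 _ _ hF h) with
      ⟨c, c1, c2, c3⟩ | ⟨c, c1, c2, c3⟩
    · obtain ⟨φ, -⟩ := hE2
      exact Or.inl ((good_deg2_aux hDF hrF c1 c2 c3).of_iso φ)
    · obtain ⟨φ, -⟩ := hE2.trans (E.swap _ _ _)
      exact Or.inl ((good_deg2_aux hDF.symm hr1.1 c1 c2 c3).of_iso φ)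
  by_cases hK2 : ∃ F k, E K (C F k) ∧ sz F + 1 = sz D
  · obtain ⟨F, k, hF, hFD⟩ := hK2
    have hFs := hF.sz
    simp only [sz] at hFs
    have : k = C nil nil := by
      cases k with
      | nil => exact absurd ⟨F, hF⟩ hK
      | C x y =>
        have := sz_pos x
        have := sz_pos y
        simp only [sz] at hFs
        rw [eq_nil_of_sz (t := x) (by omega), eq_nil_of_sz (t := y) (by omega)]
    subst this
    have hE2 := hE.trans ((E.refl D).C hF)
    obtain ⟨φ, -⟩ := id hE2
    rcases good_deg3 rfl hFD (hr.of_E hE2) with h | ⟨ψ, -⟩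
    · exact Or.inl (h.of_iso φ)
    · exact Or.inr ⟨φ.trans ψ⟩
  · have hch : ∀ F k, E K (C F k) → sz F + 1 < sz D := by
      intro F k hF
      have h1 := hF.sz
      simp only [sz] at h1
      have h2 : sz F + 1 ≠ sz D := fun h => hK2 ⟨_, _, hF, h⟩
      have h3 : sz k ≠ 1 := fun h => hK ⟨F, by rw [eq_nil_of_sz h] at hF; exact hF⟩
      have := sz_pos k
      omega
    have hDn : D ≠ nil := by
      rintro rfl
      cases K with
      | nil => simp only [sz] at *; omega
      | C x y =>
        have := hch x y (E.refl _)
        simp only [sz] at this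
        omega
    obtain ⟨D', k1, k2, -⟩ := Rdel _ D le_rfl hr1.1 hDn
    have ks := k1.sz
    refine Or.inl (Good.of_iso ε (Good.of_LD (k1.left K) (U1 ?_ (rigid_C.2 ⟨k2, hr1.2.1, ?_⟩))))
    · intro c k hc
      simp only [sz]
      rcases hc.child with hc | ⟨k', hc⟩
      · have := hc.sz
        omega
      · have := hch _ _ hc
        omega
    · intro c k hc hE
      have := hch _ _ hc
      have := hE.sz
      omega

end RT

namespace RT

theorem ofTree : ∀ (n : ℕ) {W : Type*} [Fintype W] (G : SimpleGraph W), Fintype.card W = n →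
    G.IsTree → ∃ t, Nonempty (G ≃g g t)
  | 0, W, _, G, h, hT => by
    have := hT.connected.nonempty
    exact absurd h Fintype.card_ne_zero
  | 1, W, _, G, h, hT => by
    obtain ⟨w, hw⟩ := Fintype.card_eq_one_iff.1 h
    refine ⟨nil, ⟨⟨⟨fun _ => (), fun _ => w, fun x => (hw x).symm, fun _ => rfl⟩, ?_⟩⟩⟩
    intro x y
    rw [hw x, hw y]
    simp
  | n + 2, W, _, G, h, hT => by
    classical
    have : Nontrivial W := Fintype.one_lt_card_iff_nontrivial.1 (by omega)
    obtain ⟨v, hv⟩ := hT.exists_vert_degree_one_of_nontrivial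
    have hT' : (G.induce {v}ᶜ).IsTree :=
      ⟨hT.connected.induce_compl_singleton_of_degree_eq_one hv, hT.isAcyclic.induce _⟩
    obtain ⟨t', ⟨ψ⟩⟩ := ofTree (n + 1) (G.induce {v}ᶜ) (by
      rw [Fintype.card_compl_set]; simp [h]) hT'
    obtain ⟨u, hu, huu⟩ := degree_eq_one_iff_existsUnique_adj.1 hv
    have huv : u ∈ ({v}ᶜ : Set W) := fun h => hu.ne h.symm
    obtain ⟨t, f, l, h1, h2, h3, h4, h5, h6⟩ := addLeaf t' (ψ ⟨u, huv⟩)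
    let F : W → V t := fun x => if hx : x = v then l else f (ψ ⟨x, hx⟩)
    have Fv : F v = l := by simp [F]
    have Fn : ∀ (x : W) (hx : x ∈ ({v}ᶜ : Set W)), F x = f (ψ ⟨x, hx⟩) := fun x hx => by
      have : x ≠ v := hx
      simp [F, this]
    have Fb : Function.Bijective F := by
      constructor
      · intro x y hxy
        by_cases hx : x = v <;> by_cases hy : y = v
        · rw [hx, hy]
        · rw [hx, Fv, Fn y hy] at hxy
          exact absurd hxy.symm (h5 _)
        · rw [hy, Fv, Fn x hx] at hxy
          exact absurd hxy (h5 _)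
        · rw [Fn x hx, Fn y hy] at hxy
          exact congrArg Subtype.val (ψ.injective (h1 hxy))
      · intro z
        rcases h4 z with rfl | ⟨x, rfl⟩
        · exact ⟨v, Fv⟩
        · refine ⟨(ψ.symm x).1, ?_⟩
          rw [Fn _ (ψ.symm x).2]
          simp
    have key : ∀ y : W, y ≠ v → ((g t).Adj l (F y) ↔ G.Adj v y) := by
      intro y hy
      rw [Fn y hy, h6]
      constructor
      · intro h
        have this : y = u := congrArg Subtype.val (ψ.injective h)
        rw [this]; exact hu
      · intro h
        have := huu y h
        subst this
        rfl
    refine ⟨t, ⟨⟨Equiv.ofBijective F Fb, ?_⟩⟩⟩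
    intro x y
    show (g t).Adj (F x) (F y) ↔ G.Adj x y
    by_cases hx : x = v <;> by_cases hy : y = v
    · rw [hx, hy]; simp
    · rw [hx, Fv, key y hy]
    · rw [hy, Fv, (g t).adj_comm, G.adj_comm, key x hx]
    · rw [Fn x hx, Fn y hy, h2]
      exact ψ.map_rel_iff

/-- decidable equality of vertices -/
def decV : (t : RT) → DecidableEq (V t)
  | nil => inferInstanceAs (DecidableEq Unit)
  | C a b => letI := decV a; letI := decV b; inferInstanceAs (DecidableEq (V a ⊕ V b))

/-- decidable adjacency -/
def decA : (t : RT) → (x y : V t) → Decidable (A t x y)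
  | nil, _, _ => isFalse id
  | C a _, Sum.inl x, Sum.inl y => decA a x y
  | C _ b, Sum.inr x, Sum.inr y => decA b x y
  | C a b, Sum.inl x, Sum.inr y =>
    letI := decV a; letI := decV b; inferInstanceAs (Decidable (x = root a ∧ y = root b))
  | C a b, Sum.inr y, Sum.inl x =>
    letI := decV a; letI := decV b; inferInstanceAs (Decidable (x = root a ∧ y = root b))

/-- the numbering of the vertices of `e7` -/
def K7 : Fin 7 → V e7 := ![Sum.inr (Sum.inr (Sum.inr ())), Sum.inr (Sum.inr (Sum.inl ())),
  Sum.inr (Sum.inl (Sum.inr ())), Sum.inr (Sum.inl (Sum.inl ())), Sum.inl (Sum.inr ()),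
  Sum.inl (Sum.inl (Sum.inr ())), Sum.inl (Sum.inl (Sum.inl ()))]

theorem K7_bij : Function.Bijective K7 := by
  refine (Fintype.bijective_iff_injective_and_card _).2 ⟨?_, ?_⟩
  · letI := decV e7
    have : ∀ i j, K7 i = K7 j → i = j := by decide
    exact fun i j h => this i j h
  · rw [card_V]; rfl

theorem E7_adj (i j : Fin 7) : E7.Adj i j ↔
    (s(i, j) ∈ ({s(0, 1), s(0, 2), s(2, 3), s(0, 4), s(4, 5), s(5, 6)} : Finset (Sym2 (Fin 7))))
      ∧ i ≠ j := by
  simp only [E7, fromEdgeSet_adj, Set.mem_insert_iff, Set.mem_singleton_iff, Finset.mem_insert,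
    Finset.mem_singleton]

theorem K7_adj : ∀ i j : Fin 7, A e7 (K7 i) (K7 j) ↔
    (s(i, j) ∈ ({s(0, 1), s(0, 2), s(2, 3), s(0, 4), s(4, 5), s(5, 6)} : Finset (Sym2 (Fin 7))))
      ∧ i ≠ j := by
  letI := decA e7
  decide

/-- identification with `E7` -/
noncomputable def e7iso : g e7 ≃g E7 :=
  RelIso.symm ⟨Equiv.ofBijective K7 K7_bij, by
    intro i j
    rw [E7_adj]
    exact K7_adj i j⟩

theorem step_in {W : Type*} (G : SimpleGraph W) (S : Set W) {s t' : RT}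
    (θ : G.induce S ≃g g s) (h : LD s t') :
    ∃ l ∈ S, (G.neighborSet l ∩ S).ncard = 1 ∧ Nonempty (G.induce (S \ {l}) ≃g g t') := by
  obtain ⟨p, f, l, h1, h2, h3, h4, h5, h6⟩ := h
  have had : ∀ x y : V s, G.Adj (θ.symm x).1 (θ.symm y).1 ↔ (g s).Adj x y :=
    fun x y => θ.symm.map_rel_iff
  refine ⟨(θ.symm l).1, (θ.symm l).2, ?_, ?_⟩
  · rw [Set.ncard_eq_one]
    refine ⟨(θ.symm (f p)).1, ?_⟩
    ext x
    simp only [Set.mem_inter_iff, mem_neighborSet, Set.mem_singleton_iff]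
    constructor
    · rintro ⟨hx, hxS⟩
      obtain ⟨z, hz⟩ := θ.symm.surjective ⟨x, hxS⟩
      have hx' : x = (θ.symm z).1 := by rw [hz]
      subst hx'
      rw [had] at hx
      rcases h4 z with rfl | ⟨y, rfl⟩
      · exact absurd hx (by simp)
      · rw [h6] at hx
        rw [hx]
    · rintro rfl
      exact ⟨by rw [had, h6], (θ.symm (f p)).2⟩
  · have hmem : ∀ y, (θ.symm (f y)).1 ∈ S \ {(θ.symm l).1} := by
      intro y
      refine ⟨(θ.symm (f y)).2, fun h => h5 y ?_⟩
      exact θ.symm.injective (Subtype.ext h)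
    let F : V t' → (S \ {(θ.symm l).1} : Set W) := fun y => ⟨(θ.symm (f y)).1, hmem y⟩
    have Fb : Function.Bijective F := by
      constructor
      · intro x y hxy
        have := congrArg Subtype.val hxy
        exact h1 (θ.symm.injective (Subtype.ext this))
      · rintro ⟨x, hxS, hxl⟩
        obtain ⟨z, hz⟩ := θ.symm.surjective ⟨x, hxS⟩
        have hx' : x = (θ.symm z).1 := by rw [hz]
        subst hx'
        rcases h4 z with rfl | ⟨y, rfl⟩
        · exact absurd rfl hxl
        · exact ⟨y, rfl⟩
    have : g t' ≃g G.induce (S \ {(θ.symm l).1}) := ⟨Equiv.ofBijective F Fb, by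
      intro x y
      show G.Adj (θ.symm (f x)).1 (θ.symm (f y)).1 ↔ _
      rw [had, h2]⟩
    exact ⟨this.symm⟩

theorem two_le {t : RT} (h : AutFree (g t)) (h2 : 2 ≤ sz t) : sz t ≠ 2 := by
  intro h3
  cases t with
  | nil => simp only [sz] at h3; omega
  | C a b =>
    have := sz_pos a
    have := sz_pos b
    simp only [sz] at h3
    apply not_E_of_autFree h
    rw [eq_nil_of_sz (t := a) (by omega), eq_nil_of_sz (t := b) (by omega)]
    exact E.refl _

theorem chain {W : Type*} (G : SimpleGraph W) : ∀ (n : ℕ) (S₀ : Set W) (t : RT), sz t = n → 2 ≤ n →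
    AutFree (g t) → Nonempty (G.induce S₀ ≃g g t) →
    ∃ (k : ℕ) (S : ℕ → Set W),
      S 0 = S₀ ∧
      (∀ i < k, ∃ l ∈ S i, S (i + 1) = S i \ {l} ∧
        (G.neighborSet l ∩ S i).ncard = 1) ∧
      (∀ i ≤ k, AutFree (G.induce (S i))) ∧
      Nonempty ((G.induce (S k)) ≃g E7)
  | 0, _, _, _, h, _, _ => by omega
  | n + 1, S₀, t, hs, h2, hA, ⟨θ⟩ => by
    have hA0 : AutFree (G.induce S₀) := autFree_iso θ.symm hA
    rcases main_step t (by omega) hA with ⟨s, t', ⟨φ⟩, hLD, hA'⟩ | ⟨⟨φ⟩⟩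
    · have e1 := hLD.sz
      have e2 := sz_iso φ
      have e3 := two_le hA (by omega)
      obtain ⟨l, hl, hn, hiso⟩ := step_in G S₀ (θ.trans φ) hLD
      obtain ⟨k, S, c1, c2, c3, c4⟩ := chain G n (S₀ \ {l}) t' (by omega) (by omega) hA' hiso
      refine ⟨k + 1, fun i => Nat.casesOn i S₀ S, rfl, ?_, ?_, c4⟩
      · rintro (_ | i) hi
        · exact ⟨l, hl, c1, hn⟩
        · exact c2 i (by omega)
      · rintro (_ | i) hi
        · exact hA0
        · exact c3 i (by omega)
    · exact ⟨0, fun _ => S₀, rfl, fun i hi => absurd hi (by omega), fun _ _ => hA0,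
        ⟨(θ.trans φ).trans e7iso⟩⟩

end RT

/-- From every finite automorphism-free tree `T`, a tree isomorphic to `E7` can be
obtained by successively deleting one leaf at a time, all intermediate trees being
automorphism-free.  This is expressed by a chain of vertex subsets
`V(T) = S 0 ⊇ S 1 ⊇ ⋯ ⊇ S k` of `T`, whose induced subgraphs are the intermediate
trees: each step removes a vertex that is a leaf of the current tree, each intermediate
tree is automorphism-free, and the last one is isomorphic to `E7`. -/
theorem stmt_2 {V : Type*} [Fintype V] (G : SimpleGraph V)
    (hT : G.IsTree) (h2 : 2 ≤ Fintype.card V) (hAF : AutFree G) :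
    ∃ (k : ℕ) (S : ℕ → Set V),
      S 0 = Set.univ ∧
      (∀ i < k, ∃ l ∈ S i, S (i + 1) = S i \ {l} ∧
        (G.neighborSet l ∩ S i).ncard = 1) ∧
      (∀ i ≤ k, AutFree (G.induce (S i))) ∧
      Nonempty ((G.induce (S k)) ≃g E7) := by
  obtain ⟨t, ⟨φ⟩⟩ := RT.ofTree _ G rfl hT
  have hs : RT.sz t = Fintype.card V := by
    rw [← RT.card_V]; exact (Fintype.card_congr φ.toEquiv).symm
  exact RT.chain G _ Set.univ t hs h2 (RT.autFree_iso φ hAF)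
    ⟨(SimpleGraph.induceUnivIso G).trans φ⟩
end

section
/- Every finite automorphism-free tree T with |V(T)| ≥ 8 has a leaf l such that the tree T \ l obtained by deleting l is also automorphism-free. -/
open SimpleGraph

/-- A leaf of a graph is a vertex of degree one. -/
def IsLeaf {V : Type*} (G : SimpleGraph V) (l : V) : Prop :=
  (G.neighborSet l).ncard = 1

namespace AFT
open Classical Finset

noncomputable section

set_option linter.unusedSectionVars false

variable {V : Type*} [Fintype V]

/-- The branch at `v` seen from `u`. -/
def br (G : SimpleGraph V) (u v : V) : Finset V :=
  univ.filter fun x => ∃ p : G.Walk v x, p.IsPath ∧ u ∉ p.support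

/-- The children in `S` of `v` seen from `u`. -/
def ch (G : SimpleGraph V) (S : Finset V) (u v : V) : Finset V :=
  S.filter fun w => G.Adj v w ∧ w ≠ u

def enc (m : Multiset ℕ) : ℕ := Encodable.encode m

lemma enc_inj {m m' : Multiset ℕ} (h : enc m = enc m') : m = m' :=
  Encodable.encode_injective h

/-- Code of the isomorphism type of a rooted branch. -/
def code (G : SimpleGraph V) (S : Finset V) (u v : V) : ℕ :=
  enc ((ch G S u v).val.map fun w =>
    if _h : (br G v w).card < (br G u v).card then code G S v w else 0)
termination_by (br G u v).card

variable {G : SimpleGraph V}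

lemma mem_br {u v x : V} : x ∈ br G u v ↔ ∃ p : G.Walk v x, p.IsPath ∧ u ∉ p.support := by
  simp [br]

lemma mem_ch {S : Finset V} {u v w : V} : w ∈ ch G S u v ↔ w ∈ S ∧ G.Adj v w ∧ w ≠ u := by
  simp [ch]

lemma self_mem_br {u v : V} (h : G.Adj u v) : v ∈ br G u v := by
  rw [mem_br]
  exact ⟨Walk.nil, by simp, by simpa using h.ne⟩

lemma not_mem_br {u v : V} : u ∉ br G u v := by
  rw [mem_br]
  rintro ⟨p, _, hp⟩
  exact hp p.end_mem_support

lemma path_uniq (hT : G.IsTree) {u v : V} {p q : G.Walk u v} (hp : p.IsPath) (hq : q.IsPath) :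
    p = q := (hT.existsUnique_path u v).unique hp hq

lemma br_compl (hT : G.IsTree) {u v : V} (h : G.Adj u v) (x : V) :
    x ∈ br G u v ↔ x ∉ br G v u := by
  constructor
  · intro h1 h2
    obtain ⟨p, hp, hpu⟩ := mem_br.1 h1
    obtain ⟨q, hq, hqv⟩ := mem_br.1 h2
    have h3 : (Walk.cons h p).IsPath := by
      rw [Walk.cons_isPath_iff]; exact ⟨hp, hpu⟩
    have := path_uniq hT h3 hq
    apply hqv
    rw [← this]
    simp
  · intro h2
    obtain ⟨p, hp, -⟩ := hT.existsUnique_path v x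
    rw [mem_br]
    refine ⟨p, hp, fun hu => h2 ?_⟩
    rw [mem_br]
    refine ⟨p.dropUntil u hu, hp.dropUntil hu, fun hv => ?_⟩
    have h4 : p.support = (p.takeUntil u hu).support ++ (p.dropUntil u hu).support.tail := by
      rw [← Walk.support_append, Walk.take_spec]
    have h5 := hp.support_nodup
    rw [h4, List.nodup_append] at h5
    have h6 : v ∈ (p.dropUntil u hu).support.tail := by
      rw [← Walk.cons_tail_support] at hv
      rcases List.mem_cons.1 hv with h7 | h'
      · exact absurd h7.symm (G.ne_of_adj ‹G.Adj u v›)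
      · exact h'
    exact h5.2.2 v (Walk.start_mem_support _) v h6 rfl

lemma br_disj (hT : G.IsTree) {v w w' x : V} (h : G.Adj v w) (h' : G.Adj v w')
    (hx : x ∈ br G v w) (hx' : x ∈ br G v w') : w = w' := by
  obtain ⟨p, hp, hpu⟩ := mem_br.1 hx
  obtain ⟨q, hq, hqu⟩ := mem_br.1 hx'
  have h3 : (Walk.cons h p).IsPath := by
    rw [Walk.cons_isPath_iff]; exact ⟨hp, hpu⟩
  have h4 : (Walk.cons h' q).IsPath := by
    rw [Walk.cons_isPath_iff]; exact ⟨hq, hqu⟩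
  have := path_uniq hT h3 h4
  have h5 := congrArg Walk.snd this
  simpa using h5

lemma br_exists (hT : G.IsTree) {v x : V} (h : x ≠ v) : ∃ w, G.Adj v w ∧ x ∈ br G v w := by
  obtain ⟨p, hp, -⟩ := hT.existsUnique_path v x
  cases p with
  | nil => exact absurd rfl h
  | cons ha p =>
    rw [Walk.cons_isPath_iff] at hp
    exact ⟨_, ha, mem_br.2 ⟨p, hp⟩⟩

lemma br_rec (hT : G.IsTree) {u v : V} (h : G.Adj u v) (x : V) :
    x ∈ br G u v ↔ x = v ∨ ∃ w, G.Adj v w ∧ w ≠ u ∧ x ∈ br G v w := by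
  constructor
  · intro hx
    by_cases hxv : x = v
    · exact Or.inl hxv
    obtain ⟨w, hw, hxw⟩ := br_exists hT hxv
    refine Or.inr ⟨w, hw, ?_, hxw⟩
    rintro rfl
    exact (br_compl hT h x).1 hx hxw
  · rintro (rfl | ⟨w, hw, hwu, hxw⟩)
    · exact self_mem_br h
    · rw [br_compl hT h]
      intro hx
      exact hwu (br_disj hT hw h.symm hxw hx)

lemma br_cross (hT : G.IsTree) {u v x y : V} (h : G.Adj u v) (hxy : G.Adj x y)
    (hx : x ∈ br G u v) (hy : y ∉ br G u v) : x = v ∧ y = u := by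
  obtain ⟨p, hp, hpu⟩ := mem_br.1 hx
  have hyp : y ∉ p.support := by
    intro hyp
    apply hy
    rw [mem_br]
    exact ⟨p.takeUntil y hyp, hp.takeUntil hyp,
      fun hu => hpu (p.support_takeUntil_subset_support hyp hu)⟩
  have hyu : y = u := by
    by_contra hne
    apply hy
    rw [mem_br]
    refine ⟨p.concat hxy, hp.concat hyp hxy, ?_⟩
    rw [Walk.support_concat]
    simp only [List.mem_append, List.mem_singleton]
    rintro (h | h)
    · exact hpu h
    · exact hne h.symm
  subst hyu
  refine ⟨?_, rfl⟩
  by_contra hxv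
  apply (br_compl hT h x).1 hx
  rw [mem_br]
  refine ⟨Walk.cons hxy.symm Walk.nil, ?_, ?_⟩
  · rw [Walk.cons_isPath_iff]
    simpa using hxy.ne.symm
  · simp only [Walk.support_cons, Walk.support_nil, List.mem_cons, List.not_mem_nil, or_false, not_or]
    exact ⟨h.ne.symm, fun h => hxv h.symm⟩

lemma br_walk (hT : G.IsTree) {c w a b : V} (h : G.Adj c w) (p : G.Walk a b)
    (ha : a ∈ br G c w) (hp : c ∉ p.support) : b ∈ br G c w := by
  induction p with
  | nil => exact ha
  | cons hxy p ih =>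
    rw [Walk.support_cons, List.mem_cons, not_or] at hp
    refine ih ?_ hp.2
    by_contra hy
    have := (br_cross hT h hxy ha hy).2
    apply hp.2
    rw [← this]
    exact p.start_mem_support

lemma br_cover (hT : G.IsTree) {c w c' w' : V} (h : G.Adj c w) (h' : G.Adj c' w')
    (hc : c' ∈ br G c w) (hc' : c ∈ br G c' w') (x : V) : x ∈ br G c w ∨ x ∈ br G c' w' := by
  by_cases hx : x ∈ br G c w
  · exact Or.inl hx
  right
  rw [br_compl hT h, not_not] at hx
  obtain ⟨p, hp, hpu⟩ := mem_br.1 hx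
  refine br_walk hT h' p hc' fun hcp => ?_
  apply (br_compl hT h c').1 hc
  rw [mem_br]
  exact ⟨p.takeUntil c' hcp, hp.takeUntil hcp,
      fun hu => hpu (p.support_takeUntil_subset_support hcp hu)⟩

lemma br_ssub (hT : G.IsTree) {u v w : V} (h : G.Adj u v) (hw : G.Adj v w) (hwu : w ≠ u) :
    br G v w ⊂ br G u v := by
  rw [Finset.ssubset_iff_of_subset]
  · exact ⟨v, self_mem_br h, not_mem_br⟩
  · intro x hx
    rw [br_rec hT h]
    exact Or.inr ⟨w, hw, hwu, hx⟩

lemma dart_ind (hT : G.IsTree) {P : V → V → Prop}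
    (hP : ∀ u v, G.Adj u v → (∀ w, G.Adj v w → w ≠ u → P v w) → P u v) :
    ∀ u v, G.Adj u v → P u v := by
  have : ∀ n u v, (br G u v).card < n → G.Adj u v → P u v := by
    intro n
    induction n with
    | zero => intro u v h; omega
    | succ n ih =>
      intro u v hn h
      refine hP u v h fun w hw hwu => ih v w ?_ hw
      have := Finset.card_lt_card (br_ssub hT h hw hwu)
      omega
  intro u v h
  exact this _ u v (Nat.lt_succ_self _) h

lemma code_eq (hT : G.IsTree) (S : Finset V) {u v : V} (h : G.Adj u v) :
    code G S u v = enc ((ch G S u v).val.map (code G S v)) := by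
  rw [code]
  congr 1
  apply Multiset.map_congr rfl
  intro w hw
  have hw := mem_ch.1 (Finset.mem_def.2 hw)
  rw [dif_pos (Finset.card_lt_card (br_ssub hT h hw.2.1 hw.2.2))]

/-- A matching from equality of multisets. -/
lemma exists_bij (s t : Finset V) (f g : V → ℕ) (h : s.val.map f = t.val.map g) :
    ∃ e : V → V, (∀ x ∈ s, e x ∈ t) ∧ (∀ x ∈ s, g (e x) = f x) ∧
      (∀ x ∈ s, ∀ y ∈ s, e x = e y → x = y) ∧ (∀ y ∈ t, ∃ x ∈ s, e x = y) := by
  induction s using Finset.induction_on generalizing t with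
  | empty =>
    have ht : t = ∅ := by
      have : t.val.map g = 0 := by rw [← h]; simp
      rw [Multiset.map_eq_zero] at this
      exact Finset.val_eq_zero.1 this
    subst ht
    exact ⟨id, by simp⟩
  | insert a s ha ih =>
    rw [Finset.insert_val_of_notMem ha, Multiset.map_cons] at h
    have hmem : f a ∈ t.val.map g := by rw [← h]; exact Multiset.mem_cons_self _ _
    obtain ⟨b, hb, hgb⟩ := Multiset.mem_map.1 hmem
    have hb' : b ∈ t := hb
    have h2 : s.val.map f = (t.erase b).val.map g := by
      have h3 : t.val = b ::ₘ (t.erase b).val := by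
        rw [Finset.erase_val, Multiset.cons_erase hb]
      rw [h3, Multiset.map_cons, hgb] at h
      exact (Multiset.cons_inj_right _).1 h
    obtain ⟨e, h1, h2, h3, h4⟩ := ih _ h2
    have hne : ∀ x ∈ s, x ≠ a := fun x hx hxa => ha (hxa ▸ hx)
    refine ⟨Function.update e a b, ?_, ?_, ?_, ?_⟩
    · intro x hx
      rcases Finset.mem_insert.1 hx with rfl | hx
      · simpa using hb'
      · rw [Function.update_of_ne (hne x hx)]
        exact Finset.mem_of_mem_erase (h1 x hx)
    · intro x hx
      rcases Finset.mem_insert.1 hx with rfl | hx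
      · simpa using hgb
      · rw [Function.update_of_ne (hne x hx)]
        exact h2 x hx
    · intro x hx y hy hxy
      rcases Finset.mem_insert.1 hx with hxa | hx1 <;>
        rcases Finset.mem_insert.1 hy with hya | hy1
      · rw [hxa, hya]
      · rw [hxa, Function.update_self, Function.update_of_ne (hne y hy1)] at hxy
        exact absurd hxy.symm (Finset.ne_of_mem_erase (h1 y hy1))
      · rw [hya, Function.update_self, Function.update_of_ne (hne x hx1)] at hxy
        exact absurd hxy (Finset.ne_of_mem_erase (h1 x hx1))
      · rw [Function.update_of_ne (hne x hx1), Function.update_of_ne (hne y hy1)] at hxy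
        exact h3 x hx1 y hy1 hxy
    · intro y hy
      by_cases hyb : y = b
      · exact ⟨a, Finset.mem_insert_self _ _, by simp [hyb]⟩
      · obtain ⟨x, hx, hxy⟩ := h4 y (Finset.mem_erase.2 ⟨hyb, hy⟩)
        exact ⟨x, Finset.mem_insert_of_mem hx, by rw [Function.update_of_ne (hne x hx), hxy]⟩

lemma iso_of_code (hT : G.IsTree) : ∀ u v, G.Adj u v → ∀ u' v', G.Adj u' v' →
    code G univ u v = code G univ u' v' →
    ∃ f : V → V, f v = v' ∧ (∀ x ∈ br G u v, f x ∈ br G u' v') ∧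
      (∀ x ∈ br G u v, ∀ y ∈ br G u v, f x = f y → x = y) ∧
      (∀ x ∈ br G u v, ∀ y ∈ br G u v, G.Adj x y → G.Adj (f x) (f y)) := by
  refine dart_ind hT ?_
  intro u v h ih u' v' h' hc
  rw [code_eq hT _ h, code_eq hT _ h'] at hc
  obtain ⟨e, e1, e2, e3, -⟩ := exists_bij _ _ _ _ (enc_inj hc)
  have e1' : ∀ w, G.Adj v w → w ≠ u → G.Adj v' (e w) ∧ e w ≠ u' := fun w hw hwu =>
    (mem_ch.1 (e1 w (mem_ch.2 ⟨mem_univ _, hw, hwu⟩))).2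
  have hF : ∀ w, ∃ f : V → V, (G.Adj v w ∧ w ≠ u) → f w = e w ∧
      (∀ x ∈ br G v w, f x ∈ br G v' (e w)) ∧
      (∀ x ∈ br G v w, ∀ y ∈ br G v w, f x = f y → x = y) ∧
      (∀ x ∈ br G v w, ∀ y ∈ br G v w, G.Adj x y → G.Adj (f x) (f y)) := by
    intro w
    by_cases hw : G.Adj v w ∧ w ≠ u
    · obtain ⟨f, hf⟩ := ih w hw.1 hw.2 v' (e w) (e1' w hw.1 hw.2).1
        (e2 w (mem_ch.2 ⟨mem_univ _, hw⟩)).symm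
      exact ⟨f, fun _ => hf⟩
    · exact ⟨id, fun h => absurd h hw⟩
  choose F hF using hF
  have hnb : ∀ x, ∃ w, x ∈ br G u v → x ≠ v → (G.Adj v w ∧ w ≠ u) ∧ x ∈ br G v w := by
    intro x
    by_cases hx : x ∈ br G u v ∧ x ≠ v
    · rcases (br_rec hT h x).1 hx.1 with h1 | ⟨w, h1, h2, h3⟩
      · exact absurd h1 hx.2
      · exact ⟨w, fun _ _ => ⟨⟨h1, h2⟩, h3⟩⟩
    · exact ⟨x, fun h1 h2 => absurd ⟨h1, h2⟩ hx⟩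
  choose nb hnb using hnb
  have key : ∀ x ∈ br G u v, x ≠ v → F (nb x) x ∈ br G v' (e (nb x)) := by
    intro x hx hxv
    have := hnb x hx hxv
    exact (hF _ this.1).2.1 x this.2
  have key2 : ∀ x ∈ br G u v, x ≠ v → F (nb x) x ≠ v' := by
    intro x hx hxv h1
    have := key x hx hxv
    rw [h1] at this
    exact not_mem_br this
  have adjv : ∀ y ∈ br G u v, G.Adj v y → y ≠ v → nb y = y := by
    intro y hy hvy hyv
    have := hnb y hy hyv
    exact br_disj hT this.1.1 hvy this.2 (self_mem_br hvy)
  have nbadj : ∀ x ∈ br G u v, ∀ y ∈ br G u v, x ≠ v → y ≠ v → G.Adj x y → nb x = nb y := by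
    intro x hx y hy hxv hyv hxy
    have h1 := hnb x hx hxv
    have h2 := hnb y hy hyv
    by_cases h3 : y ∈ br G v (nb x)
    · exact br_disj hT h1.1.1 h2.1.1 h3 h2.2
    · exact absurd (br_cross hT h1.1.1 hxy h1.2 h3).2 hyv
  refine ⟨fun x => if x = v then v' else F (nb x) x, by simp, ?_, ?_, ?_⟩
  · intro x hx
    by_cases hxv : x = v
    · simpa [hxv] using self_mem_br h'
    · simp only [hxv, if_false]
      have := e1' _ (hnb x hx hxv).1.1 (hnb x hx hxv).1.2
      exact (br_ssub hT h' this.1 this.2).1 (key x hx hxv)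
  · intro x hx y hy hxy
    by_cases hxv : x = v <;> by_cases hyv : y = v
    · rw [hxv, hyv]
    · simp only [hxv, hyv, if_true, if_false] at hxy
      exact absurd hxy.symm (key2 y hy hyv)
    · simp only [hxv, hyv, if_true, if_false] at hxy
      exact absurd hxy (key2 x hx hxv)
    · simp only [hxv, hyv, if_false] at hxy
      have h1 := hnb x hx hxv
      have h2 := hnb y hy hyv
      have h3 : e (nb x) = e (nb y) := by
        refine br_disj hT (e1' _ h1.1.1 h1.1.2).1 (e1' _ h2.1.1 h2.1.2).1 (key x hx hxv) ?_
        rw [hxy]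
        exact key y hy hyv
      have h4 : nb x = nb y := e3 _ (mem_ch.2 ⟨mem_univ _, h1.1⟩) _ (mem_ch.2 ⟨mem_univ _, h2.1⟩) h3
      rw [← h4] at hxy h2
      exact (hF _ h1.1).2.2.1 x h1.2 y h2.2 hxy
  · intro x hx y hy hxy
    by_cases hxv : x = v <;> by_cases hyv : y = v
    · rw [hxv, hyv] at hxy
      exact absurd rfl hxy.ne
    · subst hxv
      simp only [hyv, if_true, if_false]
      have h2 := hnb y hy hyv
      have h1 := adjv y hy hxy hyv
      rw [h1] at h2 ⊢
      rw [(hF _ h2.1).1]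
      exact (e1' _ h2.1.1 h2.1.2).1
    · subst hyv
      simp only [hxv, if_true, if_false]
      have h2 := hnb x hx hxv
      have h1 := adjv x hx hxy.symm hxv
      rw [h1] at h2 ⊢
      rw [(hF _ h2.1).1]
      exact (e1' _ h2.1.1 h2.1.2).1.symm
    · simp only [hxv, hyv, if_false]
      have h1 := hnb x hx hxv
      have h2 := hnb y hy hyv
      have h4 := nbadj x hx y hy hxv hyv hxy
      rw [← h4] at h2 ⊢
      exact (hF _ h1.1).2.2.2 x h1.2 y h2.2 hxy

/-- An injective endomorphism of a finite graph is an automorphism. -/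
lemma fix_of_autFree (hA : AutFree G) (σ : V → V) (hi : Function.Injective σ)
    (ha : ∀ x y, G.Adj x y → G.Adj (σ x) (σ y)) (v : V) : σ v = v := by
  have hb : Function.Bijective σ := Finite.injective_iff_bijective.1 hi
  let D := {p : V × V // G.Adj p.1 p.2}
  let F : D → D := fun p => ⟨(σ p.1.1, σ p.1.2), ha _ _ p.2⟩
  have hF : Function.Injective F := by
    rintro ⟨⟨a, b⟩, h⟩ ⟨⟨c, d⟩, h'⟩ hE
    replace hE := Prod.mk.inj (congrArg Subtype.val hE)
    have h1 := hi hE.1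
    have h2 := hi hE.2
    subst h1
    subst h2
    rfl
  have hF2 : Function.Surjective F := Finite.surjective_of_injective hF
  let φ : G ≃g G := ⟨Equiv.ofBijective σ hb, by
    intro a b
    simp only [Equiv.ofBijective_apply]
    constructor
    · intro h
      obtain ⟨⟨⟨c, d⟩, h'⟩, hE⟩ := hF2 ⟨(σ a, σ b), h⟩
      replace hE := Prod.mk.inj (congrArg Subtype.val hE)
      rw [← hi hE.1, ← hi hE.2]
      exact h'
    · exact ha a b⟩
  exact hA φ v

lemma swap (hT : G.IsTree) (hA : AutFree G) {u v u' v' : V} (h : G.Adj u v) (h' : G.Adj u' v')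
    (hd : ∀ x, x ∈ br G u v → x ∉ br G u' v') (hu : u = u' ∨ (u = v' ∧ u' = v))
    (hc : code G univ u v = code G univ u' v') : False := by
  obtain ⟨f, f1, f2, f3, f4⟩ := iso_of_code hT _ _ h _ _ h' hc
  obtain ⟨g, g1, g2, g3, g4⟩ := iso_of_code hT _ _ h' _ _ h hc.symm
  have hd' : ∀ x, x ∈ br G u' v' → x ∉ br G u v := fun x h1 h2 => hd x h2 h1
  let σ : V → V := fun x => if x ∈ br G u v then f x else if x ∈ br G u' v' then g x else x
  have s1 : ∀ x, x ∈ br G u v → σ x = f x := fun x hx => by simp [σ, hx]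
  have s2 : ∀ x, x ∈ br G u' v' → σ x = g x := fun x hx => by simp [σ, hx, hd' x hx]
  have s3 : ∀ x, x ∉ br G u v → x ∉ br G u' v' → σ x = x := fun x hx hx' => by simp [σ, hx, hx']
  have hi : Function.Injective σ := by
    intro x y hxy
    by_cases hx : x ∈ br G u v
    · by_cases hy : y ∈ br G u v
      · rw [s1 x hx, s1 y hy] at hxy
        exact f3 x hx y hy hxy
      · by_cases hy' : y ∈ br G u' v'
        · rw [s1 x hx, s2 y hy'] at hxy
          exact absurd (hxy ▸ f2 x hx) (hd _ (g2 y hy'))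
        · rw [s1 x hx, s3 y hy hy'] at hxy
          exact absurd (hxy ▸ f2 x hx) hy'
    · by_cases hx' : x ∈ br G u' v'
      · by_cases hy : y ∈ br G u v
        · rw [s2 x hx', s1 y hy] at hxy
          exact absurd (hxy ▸ g2 x hx') (hd' _ (f2 y hy))
        · by_cases hy' : y ∈ br G u' v'
          · rw [s2 x hx', s2 y hy'] at hxy
            exact g3 x hx' y hy' hxy
          · rw [s2 x hx', s3 y hy hy'] at hxy
            exact absurd (hxy ▸ g2 x hx') hy
      · by_cases hy : y ∈ br G u v
        · rw [s3 x hx hx', s1 y hy] at hxy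
          exact absurd (hxy ▸ f2 y hy) hx'
        · by_cases hy' : y ∈ br G u' v'
          · rw [s3 x hx hx', s2 y hy'] at hxy
            exact absurd (hxy ▸ g2 y hy') hx
          · rw [s3 x hx hx', s3 y hy hy'] at hxy
            exact hxy
  have c1 : ∀ x y, G.Adj x y → x ∈ br G u v → y ∉ br G u v → G.Adj (σ x) (σ y) := by
    intro x y hxy hx hy
    obtain ⟨rfl, rfl⟩ := br_cross hT h hxy hx hy
    rw [s1 x hx, f1]
    rcases hu with rfl | ⟨rfl, rfl⟩
    · rw [s3 _ hy not_mem_br]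
      exact h'.symm
    · rw [s2 _ (self_mem_br h'), g1]
      exact h
  have c2 : ∀ x y, G.Adj x y → x ∈ br G u' v' → y ∉ br G u v → y ∉ br G u' v' →
      G.Adj (σ x) (σ y) := by
    intro x y hxy hx hy hy'
    obtain ⟨rfl, rfl⟩ := br_cross hT h' hxy hx hy'
    rw [s2 x hx, g1]
    rcases hu with rfl | ⟨rfl, rfl⟩
    · rw [s3 _ hy hy']
      exact h.symm
    · exact absurd (self_mem_br h) hy
  have ha : ∀ x y, G.Adj x y → G.Adj (σ x) (σ y) := by
    intro x y hxy
    by_cases hx : x ∈ br G u v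
    · by_cases hy : y ∈ br G u v
      · rw [s1 x hx, s1 y hy]
        exact f4 x hx y hy hxy
      · exact c1 x y hxy hx hy
    · by_cases hy : y ∈ br G u v
      · exact (c1 y x hxy.symm hy hx).symm
      · by_cases hx' : x ∈ br G u' v'
        · by_cases hy' : y ∈ br G u' v'
          · rw [s2 x hx', s2 y hy']
            exact g4 x hx' y hy' hxy
          · exact c2 x y hxy hx' hy hy'
        · by_cases hy' : y ∈ br G u' v'
          · exact (c2 y x hxy.symm hy' hx hx').symm
          · rw [s3 x hx hx', s3 y hy hy']
            exact hxy
  have h1 := fix_of_autFree hA σ hi ha v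
  rw [s1 v (self_mem_br h), f1] at h1
  apply hd v (self_mem_br h)
  rw [← h1]
  exact self_mem_br h'

lemma code_inj (hT : G.IsTree) (hA : AutFree G) {v w w' : V} (h : G.Adj v w) (h' : G.Adj v w')
    (hc : code G univ v w = code G univ v w') : w = w' := by
  by_contra hne
  exact swap hT hA h h' (fun x hx hx' => hne (br_disj hT h h' hx hx')) (Or.inl rfl) hc

lemma code_edge (hT : G.IsTree) (hA : AutFree G) {u v : V} (h : G.Adj u v) :
    code G univ u v ≠ code G univ v u := fun hc =>
  swap hT hA h h.symm (fun x hx => (br_compl hT h x).1 hx) (Or.inr ⟨rfl, rfl⟩) hc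

/-- Size of a branch inside `S`. -/
def sz (G : SimpleGraph V) (S : Finset V) (u v : V) : ℕ := (br G u v ∩ S).card

/-- `S` is closed under first steps of paths. -/
def Con (G : SimpleGraph V) (S : Finset V) : Prop :=
  ∀ v w x, G.Adj v w → v ∈ S → x ∈ br G v w → x ∈ S → w ∈ S

def Lf (G : SimpleGraph V) (l : V) : Prop := ∃ p, ∀ w, G.Adj l w ↔ w = p

lemma con_univ : Con G univ := fun _ _ _ _ _ _ _ => mem_univ _

lemma br_leaf (hT : G.IsTree) {l v x : V} (hl : Lf G l) (h : G.Adj v l) (hx : x ∈ br G v l) :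
    x = l := by
  rcases (br_rec hT h x).1 hx with h1 | ⟨w, h1, h2, -⟩
  · exact h1
  · obtain ⟨p, hp⟩ := hl
    exact absurd (((hp w).1 h1).trans ((hp v).1 h.symm).symm) h2

lemma con_erase (hT : G.IsTree) {l : V} (hl : Lf G l) : Con G (univ.erase l) := by
  intro v w x h _ hx hxS
  rw [Finset.mem_erase] at hxS ⊢
  refine ⟨?_, mem_univ _⟩
  rintro rfl
  exact hxS.1 (br_leaf hT hl h hx)

lemma sz_union (hT : G.IsTree) {S : Finset V} {u v : V} :
    ((ch G S u v).biUnion fun w => br G v w ∩ S).card = ∑ w ∈ ch G S u v, sz G S v w := by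
  rw [Finset.card_biUnion]
  · rfl
  · intro w hw w' hw' hne
    rw [Finset.mem_coe] at hw hw'
    rw [Function.onFun, Finset.disjoint_left]
    intro x hx hx'
    exact hne (br_disj hT (mem_ch.1 hw).2.1 (mem_ch.1 hw').2.1 (Finset.mem_inter.1 hx).1
      (Finset.mem_inter.1 hx').1)

lemma sz_rec (hT : G.IsTree) {S : Finset V} (hS : Con G S) {u v : V} (h : G.Adj u v)
    (hv : v ∈ S) : sz G S u v = 1 + ∑ w ∈ ch G S u v, sz G S v w := by
  rw [← sz_union hT, add_comm, ← Finset.card_insert_of_notMem (a := v)]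
  · rw [sz]
    congr 1
    ext x
    simp only [Finset.mem_inter, Finset.mem_insert, Finset.mem_biUnion, mem_ch, br_rec hT h x]
    constructor
    · rintro ⟨h1 | ⟨w, h1, h2, h3⟩, hx⟩
      · exact Or.inl h1
      · exact Or.inr ⟨w, ⟨hS v w x h1 hv h3 hx, h1, h2⟩, h3, hx⟩
    · rintro (rfl | ⟨w, ⟨h0, h1, h2⟩, h3, hx⟩)
      · exact ⟨Or.inl rfl, hv⟩
      · exact ⟨Or.inr ⟨w, h1, h2, h3⟩, hx⟩
  · simp only [Finset.mem_biUnion, Finset.mem_inter, not_exists, not_and]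
    intro w _ hvw
    exact absurd hvw not_mem_br

lemma sum_nb (hT : G.IsTree) {S : Finset V} (hS : Con G S) {c : V}
    (hv : c ∈ S) : S.card = 1 + ∑ w ∈ ch G S c c, sz G S c w := by
  rw [← sz_union hT, add_comm, ← Finset.card_insert_of_notMem (a := c)]
  · congr 1
    ext x
    simp only [Finset.mem_inter, Finset.mem_insert, Finset.mem_biUnion, mem_ch]
    constructor
    · intro hx
      by_cases hxc : x = c
      · exact Or.inl hxc
      · obtain ⟨w, hw, hxw⟩ := br_exists hT hxc
        exact Or.inr ⟨w, ⟨hS c w x hw hv hxw hx, hw, hw.ne.symm⟩, hxw, hx⟩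
    · rintro (rfl | ⟨w, ⟨h0, h1, h2⟩, h3, hx⟩)
      · exact hv
      · exact hx
  · simp only [Finset.mem_biUnion, Finset.mem_inter, not_exists, not_and]
    intro w _ hvw
    exact absurd hvw not_mem_br

lemma sz_pos {S : Finset V} {u v : V} (h : G.Adj u v) (hv : v ∈ S) : 0 < sz G S u v :=
  Finset.card_pos.2 ⟨v, Finset.mem_inter.2 ⟨self_mem_br h, hv⟩⟩

lemma two_nb (hT : G.IsTree) {S : Finset V} (hS : Con G S) {c w w' : V} (hc : c ∈ S)
    (hw : w ∈ S) (hw' : w' ∈ S) (h : G.Adj c w) (h' : G.Adj c w') (hne : w ≠ w') :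
    sz G S c w + sz G S c w' + 1 ≤ S.card := by
  rw [sum_nb hT hS hc]
  have : ∑ x ∈ {w, w'}, sz G S c x ≤ ∑ x ∈ ch G S c c, sz G S c x := by
    apply Finset.sum_le_sum_of_subset
    intro x hx
    simp only [Finset.mem_insert, Finset.mem_singleton] at hx
    rcases hx with rfl | rfl
    · exact mem_ch.2 ⟨hw, h, h.ne.symm⟩
    · exact mem_ch.2 ⟨hw', h', h'.ne.symm⟩
  rw [Finset.sum_pair hne] at this
  omega

lemma sz_compl (hT : G.IsTree) {S : Finset V} {u v : V} (h : G.Adj u v) :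
    sz G S u v + sz G S v u = S.card := by
  rw [sz, sz, ← Finset.card_union_of_disjoint]
  · congr 1
    ext x
    have := br_compl hT h x
    simp only [Finset.mem_union, Finset.mem_inter]
    tauto
  · rw [Finset.disjoint_left]
    intro x hx hx'
    exact (br_compl hT h x).1 (Finset.mem_inter.1 hx).1 (Finset.mem_inter.1 hx').1

lemma code_sz (hT : G.IsTree) {S S' : Finset V} (hS : Con G S) (hS' : Con G S') :
    ∀ u v, G.Adj u v → ∀ u' v', G.Adj u' v' → v ∈ S → v' ∈ S' →
    code G S u v = code G S' u' v' → sz G S u v = sz G S' u' v' := by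
  refine dart_ind hT ?_
  intro u v h ih u' v' h' hv hv' hc
  rw [code_eq hT _ h, code_eq hT _ h'] at hc
  obtain ⟨e, e1, e2, e3, e4⟩ := exists_bij _ _ _ _ (enc_inj hc)
  rw [sz_rec hT hS h hv, sz_rec hT hS' h' hv']
  congr 1
  refine Finset.sum_bij (fun x _ => e x) e1 (fun x hx y hy => e3 x hx y hy) ?_ ?_
  · intro y hy
    obtain ⟨x, hx, hxy⟩ := e4 y hy
    exact ⟨x, hx, hxy⟩
  · intro w hw
    have h1 := mem_ch.1 hw
    have h2 := mem_ch.1 (e1 w hw)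
    exact ih w h1.2.1 h1.2.2 _ _ h2.2.1 h1.1 h2.1 (e2 w hw).symm

lemma code_map (hT : G.IsTree) {S : Finset V} (σ : Equiv.Perm V) (hS : ∀ x, σ x ∈ S ↔ x ∈ S)
    (ha : ∀ x ∈ S, ∀ y ∈ S, (G.Adj (σ x) (σ y) ↔ G.Adj x y)) :
    ∀ u v, G.Adj u v → u ∈ S → v ∈ S → code G S (σ u) (σ v) = code G S u v := by
  refine dart_ind hT ?_
  intro u v h ih hu hv
  rw [code_eq hT _ h, code_eq hT _ ((ha u hu v hv).2 h)]
  have : ch G S (σ u) (σ v) = (ch G S u v).map σ.toEmbedding := by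
    ext x
    rw [Finset.mem_map_equiv, mem_ch, mem_ch]
    obtain ⟨y, rfl⟩ := σ.surjective x
    rw [Equiv.symm_apply_apply, hS]
    constructor
    · rintro ⟨h1, h2, h3⟩
      exact ⟨h1, (ha v hv y h1).1 h2, fun h => h3 (by rw [h])⟩
    · rintro ⟨h1, h2, h3⟩
      exact ⟨h1, (ha v hv y h1).2 h2, fun h => h3 (σ.injective h)⟩
  rw [this, Finset.map_val, Multiset.map_map]
  congr 1
  apply Multiset.map_congr rfl
  intro w hw
  have hw := mem_ch.1 (Finset.mem_def.2 hw)
  exact ih w hw.2.1 hw.2.2 hv hw.1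

/-- Rooted asymmetry of a branch. -/
inductive Good (G : SimpleGraph V) (S : Finset V) : V → V → Prop
  | mk (u v : V)
      (inj : ∀ w ∈ ch G S u v, ∀ w' ∈ ch G S u v, code G S v w = code G S v w' → w = w')
      (h : ∀ w ∈ ch G S u v, Good G S v w) : Good G S u v

lemma good_fix (hT : G.IsTree) {S : Finset V} (hC : Con G S) (σ : Equiv.Perm V)
    (hS : ∀ x, σ x ∈ S ↔ x ∈ S)
    (ha : ∀ x ∈ S, ∀ y ∈ S, (G.Adj (σ x) (σ y) ↔ G.Adj x y)) {u v : V} (hg : Good G S u v)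
    (h : G.Adj u v) (hu : u ∈ S) (hv : v ∈ S) (hσu : σ u = u) (hσv : σ v = v) (x : V)
    (hx : x ∈ br G u v) (hxS : x ∈ S) : σ x = x := by
  induction hg with
  | mk u v inj hgw ih =>
    rcases (br_rec hT h x).1 hx with rfl | ⟨w, h1, h2, h3⟩
    · exact hσv
    have hw : w ∈ S := hC v w x h1 hv h3 hxS
    have hwc : w ∈ ch G S u v := mem_ch.2 ⟨hw, h1, h2⟩
    have hadj : G.Adj v (σ w) := by
      have := (ha v hv w hw).2 h1
      rwa [hσv] at this
    refine ih w hwc h1 hv hw hσv ?_ h3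
    refine inj (σ w) (mem_ch.2 ⟨(hS w).2 hw, hadj, ?_⟩) w hwc ?_
    · intro hE
      rw [← hσu] at hE
      exact h2 (σ.injective hE)
    · have := code_map hT σ hS ha v w h1 hv hw
      rwa [hσv] at this

lemma autFree_of (hT : G.IsTree) {l c : V} (hl : Lf G l) (hcl : c ≠ l)
    (hle : ∀ w ∈ ch G (univ.erase l) c c, 2 * sz G (univ.erase l) c w + 1 ≤ Fintype.card V)
    (inj : ∀ w ∈ ch G (univ.erase l) c c, ∀ w' ∈ ch G (univ.erase l) c c,
      code G (univ.erase l) c w = code G (univ.erase l) c w' → w = w')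
    (hg : ∀ w ∈ ch G (univ.erase l) c c, Good G (univ.erase l) c w)
    (hsw : ∀ w ∈ ch G (univ.erase l) c c, 2 * sz G (univ.erase l) c w + 1 = Fintype.card V →
      code G (univ.erase l) c w ≠ code G (univ.erase l) w c) :
    AutFree (G.induce {x : V | x ≠ l}) := by
  have hC := con_erase hT hl
  have hcard : (univ.erase l : Finset V).card + 1 = Fintype.card V := by
    rw [Finset.card_erase_add_one (mem_univ _), Finset.card_univ]
  generalize hSdef : (univ.erase l : Finset V) = S at *
  have hmem : ∀ x, x ∈ S ↔ x ≠ l := by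
    intro x
    rw [← hSdef]
    simp
  intro φ
  let σ : Equiv.Perm V := Equiv.Perm.ofSubtype (p := fun x => x ∈ {x : V | x ≠ l}) φ.toEquiv
  have hσ1 : ∀ x (hx : x ∈ {x : V | x ≠ l}), σ x = (φ ⟨x, hx⟩ : V) := by
    intro x hx
    exact Equiv.Perm.ofSubtype_apply_of_mem (p := fun x => x ∈ {x : V | x ≠ l}) φ.toEquiv hx
  have hσ2 : σ l = l :=
    Equiv.Perm.ofSubtype_apply_of_not_mem (p := fun x => x ∈ {x : V | x ≠ l}) φ.toEquiv
      (fun h => h rfl)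
  have hS : ∀ x, σ x ∈ S ↔ x ∈ S := by
    intro x
    rw [hmem, hmem, not_iff_not]
    constructor
    · intro h
      rw [← hσ2] at h
      exact σ.injective h
    · rintro rfl
      exact hσ2
  have ha : ∀ x ∈ S, ∀ y ∈ S, (G.Adj (σ x) (σ y) ↔ G.Adj x y) := by
    intro x hx y hy
    rw [hσ1 x ((hmem x).1 hx), hσ1 y ((hmem y).1 hy)]
    exact φ.map_adj_iff (v := ⟨x, (hmem x).1 hx⟩) (w := ⟨y, (hmem y).1 hy⟩)
  have hcS : c ∈ S := (hmem c).2 hcl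
  have hfix : σ c = c := by
    by_contra hne
    have hc'S : σ c ∈ S := (hS c).2 hcS
    obtain ⟨w, hw, hcw⟩ := br_exists hT hne
    obtain ⟨w', hw', hcw'⟩ := br_exists hT (Ne.symm hne)
    have hwS : w ∈ S := hC c w _ hw hcS hcw hc'S
    have hw'S : w' ∈ S := hC _ w' _ hw' hc'S hcw' hcS
    obtain ⟨w0, rfl⟩ := σ.surjective w'
    have hw0S : w0 ∈ S := (hS _).1 hw'S
    have hw0 : G.Adj c w0 := (ha c hcS w0 hw0S).1 hw'
    have hcode := code_map hT σ hS ha c w0 hw0 hcS hw0S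
    have hsz : sz G S (σ c) (σ w0) = sz G S c w0 :=
      code_sz hT hC hC _ _ hw' _ _ hw0 hw'S hw0S hcode
    have hb1 := hle w (mem_ch.2 ⟨hwS, hw, hw.ne.symm⟩)
    have hb2 := hle w0 (mem_ch.2 ⟨hw0S, hw0, hw0.ne.symm⟩)
    have hun : (br G c w ∩ S) ∪ (br G (σ c) (σ w0) ∩ S) = S := by
      ext x
      have := br_cover hT hw hw' hcw hcw' x
      simp only [Finset.mem_union, Finset.mem_inter]
      tauto
    have hin := Finset.card_union_add_card_inter (br G c w ∩ S) (br G (σ c) (σ w0) ∩ S)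
    rw [hun] at hin
    change _ = sz G S c w + sz G S (σ c) (σ w0) at hin
    have hcw2 : σ c = w := by
      by_contra hne2
      have hwb : w ∈ br G (σ c) (σ w0) := by
        by_contra hnb
        exact hne2 (br_cross hT hw' hw hcw' hnb).2.symm
      have : 0 < ((br G c w ∩ S) ∩ (br G (σ c) (σ w0) ∩ S)).card :=
        Finset.card_pos.2 ⟨w, by simp [hwb, hwS, self_mem_br hw]⟩
      omega
    have hw0c : σ w0 = c := by
      refine br_disj hT hw' (w' := c) ?_ hcw' (self_mem_br ?_) <;>
      · rw [hcw2]; exact hw.symm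
    have hww0 : w0 = w := by
      by_contra hne3
      have := two_nb hT hC hcS hw0S hwS hw0 hw hne3
      omega
    subst hww0
    rw [hw0c, hcw2] at hcode
    refine hsw w0 (mem_ch.2 ⟨hwS, hw, hw.ne.symm⟩) ?_ hcode.symm
    omega
  rintro ⟨x, hx⟩
  apply Subtype.ext
  rw [← hσ1 x hx]
  change σ x = x
  by_cases hxc : x = c
  · rw [hxc, hfix]
  obtain ⟨w, hw, hxw⟩ := br_exists hT hxc
  have hxS : x ∈ S := (hmem x).2 hx
  have hwS : w ∈ S := hC c w x hw hcS hxw hxS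
  have hwc : w ∈ ch G S c c := mem_ch.2 ⟨hwS, hw, hw.ne.symm⟩
  have hadj : G.Adj c (σ w) := by
    have := (ha c hcS w hwS).2 hw
    rwa [hfix] at this
  have hσw : σ w = w := by
    refine inj _ (mem_ch.2 ⟨(hS w).2 hwS, hadj, hadj.ne.symm⟩) _ hwc ?_
    have := code_map hT σ hS ha c w hw hcS hwS
    rwa [hfix] at this
  exact good_fix hT hC σ hS ha (hg w hwc) hw hcS hwS hfix hσw x hxw hxS

lemma ch_erase {l u v : V} : ch G (univ.erase l) u v = (ch G univ u v).erase l := by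
  ext x
  simp only [mem_ch, Finset.mem_erase]
  tauto

lemma code_erase (hT : G.IsTree) {l : V} : ∀ u v, G.Adj u v → l ∉ br G u v →
    code G (univ.erase l) u v = code G univ u v := by
  refine dart_ind hT ?_
  intro u v h ih hl
  have hlw : ∀ w, G.Adj v w → w ≠ u → l ∉ br G v w := fun w hw hwu hlw =>
    hl ((br_ssub hT h hw hwu).1 hlw)
  rw [code_eq hT _ h, code_eq hT _ h, ch_erase, Finset.erase_eq_of_notMem (s := ch G univ u v)]
  · congr 1
    apply Multiset.map_congr rfl
    intro w hw
    have hw := mem_ch.1 (Finset.mem_def.2 hw)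
    exact ih w hw.2.1 hw.2.2 (hlw w hw.2.1 hw.2.2)
  · intro hlc
    have := mem_ch.1 hlc
    exact hlw l this.2.1 this.2.2 (self_mem_br this.2.1)

lemma sz_erase_not {l u v : V} (hl : l ∉ br G u v) : sz G (univ.erase l) u v = sz G univ u v := by
  rw [sz, sz]
  congr 1
  ext x
  simp only [Finset.mem_inter, Finset.mem_erase, mem_univ, and_true, and_iff_left_iff_imp]
  rintro hx rfl
  exact hl hx

lemma sz_erase {l u v : V} (hl : l ∈ br G u v) :
    sz G (univ.erase l) u v + 1 = sz G univ u v := by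
  have : br G u v ∩ univ.erase l = (br G u v ∩ univ).erase l := by
    ext x
    simp only [Finset.mem_inter, Finset.mem_erase, mem_univ, and_true]
    tauto
  rw [sz, sz, this, Finset.card_erase_add_one (by simpa using hl)]

lemma good_erase (hT : G.IsTree) (hA : AutFree G) {l : V} : ∀ u v, G.Adj u v → l ∉ br G u v →
    Good G (univ.erase l) u v := by
  refine dart_ind hT ?_
  intro u v h ih hl
  have hlw : ∀ w, G.Adj v w → w ≠ u → l ∉ br G v w := fun w hw hwu hlw =>
    hl ((br_ssub hT h hw hwu).1 hlw)
  refine Good.mk u v ?_ ?_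
  · intro w hw w' hw' hc
    have hw := (mem_ch.1 hw).2
    have hw' := (mem_ch.1 hw').2
    rw [code_erase hT _ _ hw.1 (hlw w hw.1 hw.2), code_erase hT _ _ hw'.1 (hlw w' hw'.1 hw'.2)] at hc
    exact code_inj hT hA hw.1 hw'.1 hc
  · intro w hw
    have hw := (mem_ch.1 hw).2
    exact ih w hw.1 hw.2 (hlw w hw.1 hw.2)

/-- Rooted deletion. -/
lemma del (hT : G.IsTree) (hA : AutFree G) : ∀ u v, G.Adj u v →
    ∃ l ∈ br G u v, Lf G l ∧ (2 ≤ sz G univ u v → l ≠ v) ∧ Good G (univ.erase l) u v := by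
  refine dart_ind hT ?_
  intro u v h ih
  by_cases hne : (ch G univ u v).Nonempty
  · obtain ⟨w, hwc, hmin⟩ := Finset.exists_min_image (ch G univ u v) (sz G univ v) hne
    have hw := (mem_ch.1 hwc).2
    obtain ⟨l, hlw, hlf, -, hg⟩ := ih w hw.1 hw.2
    have hlu : l ∈ br G u v := (br_ssub hT h hw.1 hw.2).1 hlw
    have hlv : l ≠ v := by
      rintro rfl
      exact not_mem_br hlw
    have hout : ∀ w', G.Adj v w' → w' ≠ w → l ∉ br G v w' := fun w' hw' hne hl' =>
      hne (br_disj hT hw' hw.1 hl' hlw)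
    have hC := con_erase hT hlf
    have hdiff : ∀ w' ∈ ch G (univ.erase l) u v, w' ≠ w → w ∈ univ.erase l →
        code G (univ.erase l) v w ≠ code G (univ.erase l) v w' := by
      intro w' hw' hne hwl hc
      have hw1 := mem_ch.1 hw'
      have h1 := code_sz hT hC hC _ _ hw.1 _ _ hw1.2.1 hwl hw1.1 hc
      have h2 := sz_erase hlw
      have h3 := sz_erase_not (hout w' hw1.2.1 hne)
      have h4 := hmin w' (mem_ch.2 ⟨mem_univ _, hw1.2⟩)
      omega
    refine ⟨l, hlu, hlf, fun _ => hlv, Good.mk u v ?_ ?_⟩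
    · intro a ha b hb hab
      have ha' := mem_ch.1 ha
      have hb' := mem_ch.1 hb
      by_cases haw : a = w
      · by_cases hbw : b = w
        · rw [haw, hbw]
        · rw [haw] at hab ha'
          exact absurd hab (hdiff b hb hbw ha'.1)
      · by_cases hbw : b = w
        · rw [hbw] at hab hb'
          exact absurd hab.symm (hdiff a ha haw hb'.1)
        · rw [code_erase hT _ _ ha'.2.1 (hout a ha'.2.1 haw),
            code_erase hT _ _ hb'.2.1 (hout b hb'.2.1 hbw)] at hab
          exact code_inj hT hA ha'.2.1 hb'.2.1 hab
    · intro a ha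
      have ha' := mem_ch.1 ha
      by_cases haw : a = w
      · rw [haw]
        exact hg
      · exact good_erase hT hA _ _ ha'.2.1 (hout a ha'.2.1 haw)
  · rw [Finset.not_nonempty_iff_eq_empty] at hne
    have hno : ∀ w, G.Adj v w → w = u := by
      intro w hw
      by_contra hwu
      have : w ∈ ch G univ u v := mem_ch.2 ⟨mem_univ _, hw, hwu⟩
      rw [hne] at this
      simp at this
    refine ⟨v, self_mem_br h, ⟨u, fun w => ⟨hno w, fun hw => hw ▸ h.symm⟩⟩, ?_, ?_⟩
    · rw [sz_rec hT con_univ h (mem_univ _), hne]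
      simp
    · refine Good.mk u v ?_ ?_ <;>
      · rw [ch_erase, hne]
        simp

lemma code_single (hT : G.IsTree) {S : Finset V} {u v : V} {k : ℕ} (h : G.Adj u v)
    (hc : code G S u v = enc {k}) : ∃ w, ch G S u v = {w} ∧ code G S v w = k := by
  rw [code_eq hT _ h] at hc
  have hc := enc_inj hc
  obtain ⟨w, hw, hk⟩ := Multiset.map_eq_singleton.1 hc
  exact ⟨w, Finset.val_inj.1 (by rw [hw]; rfl), hk⟩

lemma code_of_single (hT : G.IsTree) {S : Finset V} {u v w : V} (h : G.Adj u v)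
    (hc : ch G S u v = {w}) : code G S u v = enc {code G S v w} := by
  rw [code_eq hT _ h, hc]
  rfl

lemma code_of_empty (hT : G.IsTree) {S : Finset V} {u v : V} (h : G.Adj u v)
    (hc : ch G S u v = ∅) : code G S u v = enc 0 := by
  rw [code_eq hT _ h, hc]
  rfl

lemma ch_leaf {S : Finset V} {v l : V} (hl : Lf G l) (h : G.Adj v l) : ch G S v l = ∅ := by
  obtain ⟨p, hp⟩ := hl
  rw [Finset.eq_empty_iff_forall_notMem]
  intro w hw
  have := mem_ch.1 hw
  exact this.2.2 (((hp w).1 this.2.1).trans ((hp v).1 h.symm).symm)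

lemma mem_single (hT : G.IsTree) {u v w l : V} (h : G.Adj u v) (hc : ch G univ u v = {w})
    (hl : l ∈ br G u v) (hlv : l ≠ v) : l ∈ br G v w := by
  rcases (br_rec hT h l).1 hl with h1 | ⟨w', h1, h2, h3⟩
  · exact absurd h1 hlv
  · have : w' ∈ ch G univ u v := mem_ch.2 ⟨mem_univ _, h1, h2⟩
    rw [hc, Finset.mem_singleton] at this
    rwa [← this]

lemma xy (hT : G.IsTree) : ∀ u v, G.Adj u v → ∀ x y, G.Adj x y → ∀ l m,
    l ∈ br G u v → l ≠ v → Lf G l → m ∈ br G x y → m ≠ y → Lf G m →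
    code G univ u v = enc {code G (univ.erase m) x y} →
    code G univ x y = enc {code G (univ.erase l) u v} →
    code G univ u v = code G univ x y := by
  refine dart_ind hT ?_
  intro u v h ih x y hxy l m hl hlv hlf hm hmy hmf h1 h2
  obtain ⟨v', hv', hcv⟩ := code_single hT h h1
  obtain ⟨y', hy', hcy⟩ := code_single hT hxy h2
  have hvv : v' ∈ ch G univ u v := by rw [hv']; simp
  have hyy : y' ∈ ch G univ x y := by rw [hy']; simp
  have hvv := (mem_ch.1 hvv).2
  have hyy := (mem_ch.1 hyy).2
  have hl' := mem_single hT h hv' hl hlv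
  have hm' := mem_single hT hxy hy' hm hmy
  rw [code_of_single hT h hv', code_of_single hT hxy hy']
  congr 2
  by_cases hlv' : l = v'
  · have e1 : code G (univ.erase l) u v = enc 0 :=
      code_of_empty hT h (by rw [ch_erase, hv', hlv']; simp)
    rw [hcy, e1]
    subst hlv'
    exact code_of_empty hT hvv.1 (ch_leaf hlf hvv.1)
  by_cases hmy' : m = y'
  · have e1 : code G (univ.erase m) x y = enc 0 :=
      code_of_empty hT hxy (by rw [ch_erase, hy', hmy']; simp)
    rw [hcv, e1]
    subst hmy'
    exact (code_of_empty hT hyy.1 (ch_leaf hmf hyy.1)).symm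
  refine ih v' hvv.1 hvv.2 y y' hyy.1 l m hl' hlv' hlf hm' hmy' hmf ?_ ?_
  · rw [hcv]
    exact code_of_single hT hxy (by
      rw [ch_erase, hy', Finset.erase_eq_of_notMem]; simpa using hmy')
  · rw [hcy]
    exact code_of_single hT h (by
      rw [ch_erase, hv', Finset.erase_eq_of_notMem]; simpa using hlv')

lemma useC (hT : G.IsTree) (hA : AutFree G) {c w0 l : V} (hw0 : G.Adj c w0)
    (hc : ∀ w, G.Adj c w → w ≠ w0 → 2 * sz G univ c w < Fintype.card V)
    (hc0 : 2 * sz G univ c w0 ≤ Fintype.card V)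
    (hl : l ∈ br G c w0) (hlf : Lf G l) (hg : Good G (univ.erase l) c w0)
    (hnot : ¬ AutFree (G.induce {x : V | x ≠ l})) :
    (∃ w, G.Adj c w ∧ w ≠ w0 ∧ sz G univ c w + 1 = sz G univ c w0 ∧
      code G (univ.erase l) c w0 = code G univ c w) ∨
    (∃ w, G.Adj c w ∧ w ≠ w0 ∧ 2 * sz G univ c w + 1 = Fintype.card V ∧
      code G univ c w = code G (univ.erase l) w c) := by
  have hcl : c ≠ l := by
    rintro rfl
    exact not_mem_br hl
  have hout : ∀ w', G.Adj c w' → w' ≠ w0 → l ∉ br G c w' := fun w' hw' hne hl' =>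
    hne (br_disj hT hw' hw0 hl' hl)
  have hC := con_erase hT hlf
  have hs0 := sz_erase hl
  have hsz : ∀ w, G.Adj c w → w ≠ w0 → code G (univ.erase l) c w0 = code G univ c w →
      w0 ∈ univ.erase l → sz G univ c w + 1 = sz G univ c w0 := by
    intro w hw _ hcode hwS
    have := code_sz hT hC con_univ _ _ hw0 _ _ hw hwS (mem_univ _) hcode
    omega
  by_contra hcon
  rw [not_or, not_exists, not_exists] at hcon
  obtain ⟨hcon1, hcon2⟩ := hcon
  apply hnot
  refine autFree_of hT hlf hcl ?_ ?_ ?_ ?_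
  · intro w hw
    have hw := mem_ch.1 hw
    by_cases hww : w = w0
    · subst hww
      omega
    · have := hc w hw.2.1 hww
      rw [sz_erase_not (hout w hw.2.1 hww)]
      omega
  · intro a ha b hb hab
    have ha := mem_ch.1 ha
    have hb := mem_ch.1 hb
    by_cases haw : a = w0
    · by_cases hbw : b = w0
      · rw [haw, hbw]
      · rw [code_erase hT _ _ hb.2.1 (hout b hb.2.1 hbw), haw] at hab
        exact absurd ⟨hb.2.1, hbw, hsz b hb.2.1 hbw hab (haw ▸ ha.1), hab⟩ (hcon1 b)
    · by_cases hbw : b = w0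
      · rw [code_erase hT _ _ ha.2.1 (hout a ha.2.1 haw), hbw] at hab
        exact absurd ⟨ha.2.1, haw, hsz a ha.2.1 haw hab.symm (hbw ▸ hb.1), hab.symm⟩ (hcon1 a)
      · rw [code_erase hT _ _ ha.2.1 (hout a ha.2.1 haw),
            code_erase hT _ _ hb.2.1 (hout b hb.2.1 hbw)] at hab
        exact code_inj hT hA ha.2.1 hb.2.1 hab
  · intro w hw
    have hw := mem_ch.1 hw
    by_cases hww : w = w0
    · rw [hww]
      exact hg
    · exact good_erase hT hA _ _ hw.2.1 (hout w hw.2.1 hww)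
  · intro w hw hs hcode
    have hw := mem_ch.1 hw
    by_cases hww : w = w0
    · subst hww
      omega
    · rw [sz_erase_not (hout w hw.2.1 hww)] at hs
      rw [code_erase hT _ _ hw.2.1 (hout w hw.2.1 hww)] at hcode
      exact hcon2 w ⟨hw.2.1, hww, hs, hcode⟩

/-- Case of a bicentroidal edge. -/
lemma caseE (hT : G.IsTree) (hA : AutFree G) (h8 : 8 ≤ Fintype.card V) {a b : V} (h : G.Adj a b)
    (hs : 2 * sz G univ a b = Fintype.card V) :
    ∃ l, Lf G l ∧ AutFree (G.induce {x : V | x ≠ l}) := by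
  by_contra hcon
  rw [not_exists] at hcon
  have key : ∀ a b, G.Adj a b → 2 * sz G univ a b = Fintype.card V →
      ∃ l ∈ br G b a, l ≠ a ∧ Lf G l ∧
        code G univ a b = enc {code G (univ.erase l) b a} := by
    intro a b h hs
    have hs' := sz_compl hT (S := univ) h
    rw [Finset.card_univ] at hs'
    obtain ⟨l, hl, hlf, hla, hg⟩ := del hT hA b a h.symm
    refine ⟨l, hl, hla (by omega), hlf, ?_⟩
    have hrec := sz_rec hT con_univ h (mem_univ b)
    have hle : ∀ w, G.Adj b w → w ≠ a →
        sz G univ b w ≤ ∑ w ∈ ch G univ a b, sz G univ b w := fun w hw hwa =>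
      Finset.single_le_sum (f := sz G univ b) (fun _ _ => Nat.zero_le _)
        (mem_ch.2 ⟨mem_univ _, hw, hwa⟩)
    rcases useC hT hA h.symm (fun w hw hwa => by have := hle w hw hwa; omega) (by omega) hl hlf hg
      (fun hAF => hcon l ⟨hlf, hAF⟩) with ⟨w, hw, hwa, hsw, hcw⟩ | ⟨w, hw, hwa, hsw, hcw⟩
    · have hch : ch G univ a b = {w} := by
        rw [Finset.eq_singleton_iff_unique_mem]
        refine ⟨mem_ch.2 ⟨mem_univ _, hw, hwa⟩, fun x hx => ?_⟩
        by_contra hxw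
        have hx' := mem_ch.1 hx
        have hpos := sz_pos hx'.2.1 (mem_univ x)
        have : ∑ z ∈ {w, x}, sz G univ b z ≤ ∑ z ∈ ch G univ a b, sz G univ b z := by
          apply Finset.sum_le_sum_of_subset
          intro z hz
          simp only [Finset.mem_insert, Finset.mem_singleton] at hz
          rcases hz with rfl | rfl
          · exact mem_ch.2 ⟨mem_univ _, hw, hwa⟩
          · exact hx
        rw [Finset.sum_pair (Ne.symm hxw)] at this
        omega
      rw [code_of_single hT h hch, hcw]
    · omega
  have hs' := sz_compl hT (S := univ) h
  rw [Finset.card_univ] at hs'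
  obtain ⟨l, hl, hla, hlf, h1⟩ := key a b h hs
  obtain ⟨m, hm, hmb, hmf, h2⟩ := key b a h.symm (by omega)
  exact code_edge hT hA h
    (xy hT a b h b a h.symm m l hm hmb hmf hl hla hlf h1 h2)

/-- Case of a unique centroid. -/
lemma caseC (hT : G.IsTree) (hA : AutFree G) (h8 : 8 ≤ Fintype.card V) {c : V}
    (hc : ∀ w, G.Adj c w → 2 * sz G univ c w < Fintype.card V) :
    ∃ l, Lf G l ∧ AutFree (G.induce {x : V | x ≠ l}) := by
  by_contra hcon
  rw [not_exists] at hcon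
  have hsum := sum_nb hT con_univ (mem_univ c)
  rw [Finset.card_univ] at hsum
  have hnb : ∀ w, G.Adj c w → w ∈ ch G univ c c := fun w hw => mem_ch.2 ⟨mem_univ _, hw, hw.ne.symm⟩
  have sub2 : ∀ x y, G.Adj c x → G.Adj c y → x ≠ y →
      sz G univ c x + sz G univ c y + 1 ≤ Fintype.card V := by
    intro x y hx hy hne
    have := two_nb hT con_univ (mem_univ c) (mem_univ x) (mem_univ y) hx hy hne
    rwa [Finset.card_univ] at this
  have sub3 : ∀ x y z, G.Adj c x → G.Adj c y → G.Adj c z → x ≠ y → x ≠ z → y ≠ z →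
      sz G univ c x + sz G univ c y + sz G univ c z + 1 ≤ Fintype.card V := by
    intro x y z hx hy hz hxy hxz hyz
    have : ∑ a ∈ {x, y, z}, sz G univ c a ≤ ∑ a ∈ ch G univ c c, sz G univ c a := by
      apply Finset.sum_le_sum_of_subset
      intro a ha
      simp only [Finset.mem_insert, Finset.mem_singleton] at ha
      rcases ha with rfl | rfl | rfl
      · exact hnb _ hx
      · exact hnb _ hy
      · exact hnb _ hz
    rw [Finset.sum_insert (by simp [hxy, hxz]), Finset.sum_pair hyz] at this
    omega
  have hne : (ch G univ c c).Nonempty := by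
    rw [Finset.nonempty_iff_ne_empty]
    intro h0
    rw [h0] at hsum
    simp at hsum
    omega
  obtain ⟨w1, hw1c, hmin⟩ := Finset.exists_min_image (ch G univ c c) (sz G univ c) hne
  have hw1 := (mem_ch.1 hw1c).2.1
  have step : ∀ w0, G.Adj c w0 → ∃ l ∈ br G c w0, Lf G l ∧ (2 ≤ sz G univ c w0 → l ≠ w0) ∧
    ((∃ w, G.Adj c w ∧ w ≠ w0 ∧ sz G univ c w + 1 = sz G univ c w0 ∧
      code G (univ.erase l) c w0 = code G univ c w) ∨
    (∃ w, G.Adj c w ∧ w ≠ w0 ∧ 2 * sz G univ c w + 1 = Fintype.card V ∧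
      code G univ c w = code G (univ.erase l) w c)) := by
    intro w0 hw0
    obtain ⟨l, hl, hlf, hla, hg⟩ := del hT hA c w0 hw0
    exact ⟨l, hl, hlf, hla, useC hT hA hw0 (fun w hw _ => hc w hw) (hc w0 hw0).le hl hlf hg
      (fun hAF => hcon l ⟨hlf, hAF⟩)⟩
  obtain ⟨l, hl, hlf, hla, h1⟩ := step w1 hw1
  rcases h1 with ⟨w, hw, hww, hsw, -⟩ | ⟨b, hb, hbw1, hsb, hcb⟩
  · have := hmin w (hnb w hw)
    omega
  obtain ⟨l', hl', hlf', hla', h2⟩ := step b hb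
  rcases h2 with ⟨w, hw, hwb, hsw, hcw⟩ | ⟨w, hw, hwb, hsw, hcw⟩
  · -- three branches
    have hww1 : w ≠ w1 := by
      rintro rfl
      have h3 : ∃ x, G.Adj c x ∧ x ≠ b ∧ x ≠ w := by
        by_contra hno
        have : ch G univ c c ⊆ {b, w} := by
          intro x hx
          by_contra hx'
          simp only [Finset.mem_insert, Finset.mem_singleton, not_or] at hx'
          exact hno ⟨x, (mem_ch.1 hx).2.1, hx'⟩
        have := Finset.sum_le_sum_of_subset (f := sz G univ c) this
        rw [Finset.sum_pair (Ne.symm hwb)] at this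
        omega
      obtain ⟨x, hx, hxb, hxw⟩ := h3
      have h4 := sub3 b w x hb hw hx (Ne.symm hwb) (Ne.symm hxb) (Ne.symm hxw)
      have h5 := hmin x (hnb x hx)
      omega
    have hs1 := sub3 b w w1 hb hw hw1 (Ne.symm hwb) hbw1 hww1
    have hp1 := sz_pos hw1 (mem_univ w1)
    have hbc : ch G univ b c = {w, w1} := by
      ext x
      simp only [Finset.mem_insert, Finset.mem_singleton]
      constructor
      · intro hx
        have hx := mem_ch.1 hx
        by_contra hx'
        rw [not_or] at hx'
        have : ∑ a ∈ {b, w, w1, x}, sz G univ c a ≤ ∑ a ∈ ch G univ c c, sz G univ c a := by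
          apply Finset.sum_le_sum_of_subset
          intro a ha
          simp only [Finset.mem_insert, Finset.mem_singleton] at ha
          rcases ha with rfl | rfl | rfl | rfl
          · exact hnb _ hb
          · exact hnb _ hw
          · exact hnb _ hw1
          · exact hnb _ hx.2.1
        rw [Finset.sum_insert (by simp [Ne.symm hwb, hbw1, Ne.symm hx.2.2]),
          Finset.sum_insert (by simp [hww1, Ne.symm hx'.1]),
          Finset.sum_pair (Ne.symm hx'.2)] at this
        have := sz_pos hx.2.1 (mem_univ x)
        omega
      · rintro (rfl | rfl)
        · exact mem_ch.2 ⟨mem_univ _, hw, hwb⟩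
        · exact mem_ch.2 ⟨mem_univ _, hw1, Ne.symm hbw1⟩
    have hlw1 : l = w1 := by
      have h3 : (br G c w1 ∩ univ).card = 1 := by
        change sz G univ c w1 = 1
        omega
      obtain ⟨z, hz⟩ := Finset.card_eq_one.1 h3
      rw [Finset.inter_univ] at hz
      have h4 := self_mem_br hw1
      rw [hz, Finset.mem_singleton] at hl h4
      rw [hl, h4]
    have hcb' : code G univ c b = enc {code G (univ.erase l) c w} := by
      rw [hcb]
      refine code_of_single hT hb.symm ?_
      rw [ch_erase, hbc, hlw1]
      ext x
      simp only [Finset.mem_erase, Finset.mem_insert, Finset.mem_singleton]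
      constructor
      · tauto
      · rintro rfl
        exact ⟨hww1, Or.inl rfl⟩
    obtain ⟨m, hm, hmf, hma, h3⟩ := step w hw
    rcases h3 with ⟨x, hx, hxw, hsx, hcx⟩ | ⟨x, hx, hxw, hsx, hcx⟩
    · by_cases hxb : x = b
      · subst hxb
        omega
      by_cases hxw1 : x = w1
      · subst hxw1
        omega
      have : x ∈ ch G univ b c := mem_ch.2 ⟨mem_univ _, hx, hxb⟩
      rw [hbc] at this
      simp only [Finset.mem_insert, Finset.mem_singleton] at this
      tauto
    · have hxb : x = b := by
        by_contra hxb
        have := sub2 x b hx hb hxb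
        have := sub3 x b w hx hb hw hxb hxw (Ne.symm hwb)
        omega
      subst hxb
      rw [hcx] at hcb'
      obtain ⟨z, hz, -⟩ := code_single hT hb.symm hcb'
      rw [ch_erase, hbc] at hz
      have hmw : m ≠ w := hma (by omega)
      have hmw1 : m ≠ w1 := by
        rintro rfl
        exact hww1 (br_disj hT hw hw1 hm (self_mem_br hw1))
      rw [Finset.erase_eq_of_notMem (by simp [hmw, hmw1])] at hz
      have := congrArg Finset.card hz
      rw [Finset.card_pair hww1] at this
      simp at this
  · -- two branches
    have hww1 : w = w1 := by
      by_contra hww1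
      have := sub3 b w w1 hb hw hw1 (Ne.symm hwb) hbw1 hww1
      have := sz_pos hw1 (mem_univ w1)
      omega
    subst hww1
    have hno : ∀ x, G.Adj c x → x = b ∨ x = w := by
      intro x hx
      by_contra hx'
      rw [not_or] at hx'
      have := sub3 b w x hb hw hx (Ne.symm hwb) (Ne.symm hx'.1) (Ne.symm hx'.2)
      have := sz_pos hx (mem_univ x)
      omega
    have hbc : ch G univ b c = {w} := by
      ext x
      rw [mem_ch, Finset.mem_singleton]
      constructor
      · rintro ⟨-, h3, h4⟩
        have := hno x h3
        tauto
      · rintro rfl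
        exact ⟨mem_univ _, hw, hwb⟩
    have hwc : ch G univ w c = {b} := by
      ext x
      rw [mem_ch, Finset.mem_singleton]
      constructor
      · rintro ⟨-, h3, h4⟩
        have := hno x h3
        tauto
      · rintro rfl
        exact ⟨mem_univ _, hb, hbw1⟩
    have hlw : l ≠ w := hla (by omega)
    have hlb : l' ≠ b := hla' (by omega)
    apply hwb
    refine code_inj hT hA hw hb ?_
    refine xy hT c w hw c b hb l l' hl hlw hlf hl' hlb hlf' ?_ ?_
    · rw [hcw]
      refine code_of_single hT hw.symm ?_
      rw [ch_erase, hwc, Finset.erase_eq_of_notMem (by simpa using hlb)]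
    · rw [hcb]
      refine code_of_single hT hb.symm ?_
      rw [ch_erase, hbc, Finset.erase_eq_of_notMem (by simpa using hlw)]

lemma exists_centroid (hT : G.IsTree) :
    ∃ c, ∀ w, G.Adj c w → 2 * sz G univ c w ≤ Fintype.card V := by
  let D : Finset (V × V) := univ.filter fun p =>
    G.Adj p.1 p.2 ∧ Fintype.card V < 2 * sz G univ p.1 p.2
  by_cases hD : D.Nonempty
  · obtain ⟨⟨u, v⟩, hp, hmin⟩ := Finset.exists_min_image D (fun p => sz G univ p.1 p.2) hD
    simp only [D, Finset.mem_filter, mem_univ, true_and, Prod.forall] at hp hmin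
    refine ⟨v, fun w hw => ?_⟩
    by_contra hcon
    have h1 := hmin v w ⟨hw, by omega⟩
    have h2 := sz_compl hT (S := univ) hp.1
    rw [Finset.card_univ] at h2
    by_cases hwu : w = u
    · subst hwu
      omega
    · have h3 := Finset.card_lt_card (br_ssub hT hp.1 hw hwu)
      simp only [sz, Finset.inter_univ] at h1
      omega
  · obtain ⟨c⟩ := hT.connected.nonempty
    refine ⟨c, fun w hw => ?_⟩
    by_contra hcon
    exact hD ⟨(c, w), by simp only [D, Finset.mem_filter, mem_univ, true_and]; exact ⟨hw, by omega⟩⟩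

lemma main (hT : G.IsTree) (hA : AutFree G) (h8 : 8 ≤ Fintype.card V) :
    ∃ l, Lf G l ∧ AutFree (G.induce {x : V | x ≠ l}) := by
  obtain ⟨c, hc⟩ := exists_centroid hT
  by_cases h : ∃ w, G.Adj c w ∧ 2 * sz G univ c w = Fintype.card V
  · obtain ⟨w, hw, hs⟩ := h
    exact caseE hT hA h8 hw hs
  · refine caseC hT hA h8 (c := c) fun w hw => lt_of_le_of_ne (hc w hw) fun hE => h ⟨w, hw, hE⟩

end
end AFT

/-- Every finite automorphism-free tree with at least 8 vertices has a leaf whose deletion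
leaves an automorphism-free tree. -/
theorem stmt_12 {V : Type*} [Fintype V] (G : SimpleGraph V)
    (hT : G.IsTree) (h8 : 8 ≤ Fintype.card V) (hAF : AutFree G) :
    ∃ l : V, IsLeaf G l ∧ AutFree (G.induce {x : V | x ≠ l}) := by
  obtain ⟨l, ⟨p, hp⟩, h⟩ := AFT.main hT hAF h8
  refine ⟨l, ?_, h⟩
  rw [IsLeaf, Set.ncard_eq_one]
  refine ⟨p, ?_⟩
  ext w
  simpa using hp w
end

section
/- Let T be a finite automorphism-free tree that is minimal, i.e., there is no leaf l of T such that T \ l is automorphism-free. Then T has exactly one vertex of degree three, all other vertices of T have degree at most two, and the three components of T minus its degree-three vertex are paths on 1, 2, and 3 vertices respectively. -/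
open SimpleGraph

/-- `compOf G v x` is the vertex set of the component of `G \ v` (the graph obtained by
deleting the vertex `v`) containing `x` (for `x ≠ v`): the vertices reachable from `x`
by a walk avoiding `v`. -/
def compOf {V : Type*} (G : SimpleGraph V) (v x : V) : Set V :=
  {y : V | ∃ p : G.Walk x y, v ∉ p.support}

namespace AFT

/-! Basic facts on the branches `compOf G a b` of a tree. -/

lemma self_mem {V : Type*} {G : SimpleGraph V} {a b : V} (h : G.Adj a b) :
    b ∈ compOf G a b := ⟨.nil, by simp [h.ne]⟩

lemma root_notMem {V : Type*} {G : SimpleGraph V} {a b : V} : a ∉ compOf G a b :=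
  fun ⟨p, hp⟩ => hp p.end_mem_support

lemma step {V : Type*} {G : SimpleGraph V} {a b y z : V} (hy : y ∈ compOf G a b)
    (h : G.Adj y z) (hz : z ≠ a) : z ∈ compOf G a b := by
  obtain ⟨p, hp⟩ := hy
  refine ⟨p.concat h, ?_⟩
  rw [Walk.support_concat]
  simp [hp, hz.symm]

lemma adj_unique {V : Type*} {G : SimpleGraph V} (hT : G.IsTree) {a b b' : V}
    (h : G.Adj a b) (h' : G.Adj a b') (hb : b' ∈ compOf G a b) : b = b' := by
  classical
  obtain ⟨p, hp⟩ := hb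
  have hp' : a ∉ p.bypass.support := fun hh => hp (p.support_bypass_subset_support hh)
  have e := hT.isAcyclic.path_unique (⟨_, (p.bypass_isPath.cons hp' : (Walk.cons h p.bypass).IsPath)⟩ : G.Path a b')
    (Path.singleton h')
  have := congrArg (fun q : G.Path a b' => q.1.snd) e
  simpa [Path.singleton] using this

lemma child_unique {V : Type*} {G : SimpleGraph V} (hT : G.IsTree) {a b b' y : V}
    (h : G.Adj a b) (h' : G.Adj a b') (hb : y ∈ compOf G a b) (hb' : y ∈ compOf G a b') :
    b = b' := by
  obtain ⟨p, hp⟩ := hb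
  obtain ⟨q, hq⟩ := hb'
  refine adj_unique hT h h' ⟨p.append q.reverse, ?_⟩
  simp [Walk.mem_support_append_iff, hp, hq]

lemma bdry {V : Type*} {G : SimpleGraph V} (hT : G.IsTree) {a b y : V}
    (h : G.Adj a b) (hy : y ∈ compOf G a b) (h' : G.Adj a y) : y = b :=
  (adj_unique hT h h' hy).symm

lemma exists_child {V : Type*} {G : SimpleGraph V} (hT : G.IsTree) {a y : V} (hy : y ≠ a) :
    ∃ b, G.Adj a b ∧ y ∈ compOf G a b := by
  obtain ⟨p, hp⟩ := hT.connected.exists_isPath a y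
  cases p with
  | nil => exact absurd rfl hy
  | cons h q =>
    rw [Walk.cons_isPath_iff] at hp
    exact ⟨_, h, q, hp.2⟩

lemma compl_iff {V : Type*} {G : SimpleGraph V} (hT : G.IsTree) {a b : V} (h : G.Adj a b)
    (y : V) : y ∈ compOf G b a ↔ y ∉ compOf G a b := by
  classical
  constructor
  · rintro ⟨p, hp⟩ hy
    have hya : y ≠ a := fun e => root_notMem (e ▸ hy)
    have hp' : b ∉ p.bypass.support := fun hh => hp (p.support_bypass_subset_support hh)
    have hpath := p.bypass_isPath
    generalize p.bypass = q at hp' hpath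
    cases q with
    | nil => exact hya rfl
    | @cons _ e _ h1 q =>
      rw [Walk.cons_isPath_iff] at hpath
      have : b = e := child_unique hT h h1 hy ⟨q, hpath.2⟩
      subst this
      simp at hp'
  · intro hy
    by_cases hya : y = a
    · subst hya; exact self_mem h.symm
    obtain ⟨b', h', q, hq⟩ := exists_child hT hya
    refine ⟨.cons h' q, ?_⟩
    rw [Walk.support_cons, List.mem_cons, not_or]
    refine ⟨h.ne', fun hbq => ?_⟩
    have : b' = b := adj_unique hT h' h
      ⟨q.takeUntil b hbq, fun hh => hq (q.support_takeUntil_subset_support hbq hh)⟩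
    subst this
    exact hy ⟨q, hq⟩

lemma sub_branch {V : Type*} {G : SimpleGraph V} (hT : G.IsTree) {a b c : V} (h : G.Adj a b)
    (h' : G.Adj b c) (hc : c ≠ a) : compOf G b c ⊆ compOf G a b := by
  intro y hy
  by_contra hn
  rw [← compl_iff hT h] at hn
  exact hc (child_unique hT h' h.symm hy hn)

/-- Adjacency-preserving bijection between vertex sets. -/
def IsoOn {V : Type*} (G : SimpleGraph V) (f : V → V) (X Y : Set V) : Prop :=
  Set.BijOn f X Y ∧ ∀ x ∈ X, ∀ y ∈ X, (G.Adj (f x) (f y) ↔ G.Adj x y)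

/-- Rooted isomorphism. -/
def RIso {V : Type*} (G : SimpleGraph V) (X : Set V) (b : V) (Y : Set V) (d : V) : Prop :=
  ∃ f, IsoOn G f X Y ∧ f b = d

/-- Rooted asymmetry. -/
def Asym {V : Type*} (G : SimpleGraph V) (X : Set V) (b : V) : Prop :=
  ∀ f, IsoOn G f X X → f b = b → ∀ x ∈ X, f x = x

/-- Unrooted asymmetry. -/
def Free {V : Type*} (G : SimpleGraph V) (X : Set V) : Prop :=
  ∀ f, IsoOn G f X X → ∀ x ∈ X, f x = x

/-- Connectedness of the vertex set `X`, as an induction principle. -/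
def Conn {V : Type*} (G : SimpleGraph V) (X : Set V) (b : V) : Prop :=
  b ∈ X ∧ ∀ P : V → Prop, P b → (∀ y z, y ∈ X → z ∈ X → P y → G.Adj y z → P z) → ∀ y ∈ X, P y

lemma IsoOn.comp {V : Type*} {G : SimpleGraph V} {f g : V → V} {X Y Z : Set V}
    (hg : IsoOn G g Y Z) (hf : IsoOn G f X Y) : IsoOn G (g ∘ f) X Z :=
  ⟨hg.1.comp hf.1, fun x hx y hy =>
    (hg.2 _ (hf.1.mapsTo hx) _ (hf.1.mapsTo hy)).trans (hf.2 x hx y hy)⟩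

lemma IsoOn.inv {V : Type*} {G : SimpleGraph V} {f : V → V} {X Y : Set V}
    (hf : IsoOn G f X Y) : ∃ g, IsoOn G g Y X ∧ (∀ x ∈ X, g (f x) = x) ∧ ∀ y ∈ Y, f (g y) = y := by
  classical
  rcases isEmpty_or_nonempty V with hV | hV
  · exact ⟨f, ⟨by
      have hx : X = ∅ := Set.eq_empty_of_isEmpty X
      have hy : Y = ∅ := Set.eq_empty_of_isEmpty Y
      subst hx; subst hy; exact Set.bijOn_empty f, fun x => (hV.false x).elim⟩,
      fun x => (hV.false x).elim, fun x => (hV.false x).elim⟩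
  have hi := hf.1.invOn_invFunOn
  have hb := hf.1.symm hi.symm
  refine ⟨_, ⟨hb, fun x hx y hy => ?_⟩, hi.1, hi.2⟩
  have := hf.2 _ (hb.mapsTo hx) _ (hb.mapsTo hy)
  rw [hi.2 hx, hi.2 hy] at this
  exact this.symm

lemma RIso.symm {V : Type*} {G : SimpleGraph V} {X Y : Set V} {b d : V} (hb : b ∈ X)
    (h : RIso G X b Y d) : RIso G Y d X b := by
  obtain ⟨f, hf, rfl⟩ := h
  obtain ⟨g, hg, h1, h2⟩ := hf.inv
  exact ⟨g, hg, h1 b hb⟩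

lemma RIso.trans {V : Type*} {G : SimpleGraph V} {X Y Z : Set V} {b d e : V}
    (h : RIso G X b Y d) (h' : RIso G Y d Z e) : RIso G X b Z e := by
  obtain ⟨f, hf, rfl⟩ := h
  obtain ⟨g, hg, rfl⟩ := h'
  exact ⟨_, hg.comp hf, rfl⟩

lemma RIso.ncard {V : Type*} {G : SimpleGraph V} {X Y : Set V} {b d : V}
    (h : RIso G X b Y d) : X.ncard = Y.ncard := by
  obtain ⟨f, hf, rfl⟩ := h
  rw [← hf.1.image_eq, Set.InjOn.ncard_image hf.1.injOn]

lemma RIso.of_singleton {V : Type*} {G : SimpleGraph V} (b d : V) : RIso G {b} b {d} d :=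
  ⟨fun _ => d, ⟨by simp, by simp⟩, rfl⟩

lemma Conn.reroot {V : Type*} {G : SimpleGraph V} {X : Set V} {b d : V} (h : Conn G X b)
    (hd : d ∈ X) : Conn G X d := by
  refine ⟨hd, fun P hP hs => ?_⟩
  refine h.2 P ?_ hs
  by_contra hb
  exact h.2 (fun y => ¬ P y) hb (fun y z hy hz hn hyz hz' => hn (hs z y hz hy hz' hyz.symm)) d hd hP

lemma Conn.map {V : Type*} {G : SimpleGraph V} {f : V → V} {X Y : Set V} {b : V}
    (h : Conn G X b) (hf : IsoOn G f X Y) : Conn G Y (f b) := by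
  refine ⟨hf.1.mapsTo h.1, fun P hP hs y hy => ?_⟩
  obtain ⟨x, hx, rfl⟩ := hf.1.surjOn hy
  exact h.2 (fun x => P (f x)) hP (fun y z hy hz hp ha =>
    hs _ _ (hf.1.mapsTo hy) (hf.1.mapsTo hz) hp ((hf.2 y hy z hz).2 ha)) x hx

lemma conn_univ {V : Type*} {G : SimpleGraph V} (hT : G.IsTree) (b : V) :
    Conn G Set.univ b := by
  refine ⟨trivial, fun P hP hs y _ => ?_⟩
  obtain ⟨p⟩ := hT.connected.preconnected b y
  induction p with
  | nil => exact hP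
  | cons h q ih => exact ih (hs _ _ trivial trivial hP h) trivial

lemma Conn.branch {V : Type*} {G : SimpleGraph V} (hT : G.IsTree) {X : Set V} {b e : V}
    (h : Conn G X b) (he : e ∈ X) (ha : G.Adj b e) : Conn G (X ∩ compOf G b e) e := by
  refine ⟨⟨he, self_mem ha⟩, fun P hP hs y hy => ?_⟩
  refine h.2 (fun y => y ∈ compOf G b e → P y) (fun hh => absurd hh root_notMem) ?_ y hy.1 hy.2
  intro y z hyX hzX hy hyz hz
  by_cases hyb : y ∈ compOf G b e
  · exact hs y z ⟨hyX, hyb⟩ ⟨hzX, hz⟩ (hy hyb) hyz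
  · have : y = b := by
      by_contra hne
      exact hyb (step hz hyz.symm hne)
    subst this
    rw [bdry hT ha hz hyz]; exact hP

/-- In a connected set every other vertex lies in a branch whose root is in the set. -/
lemma Conn.child {V : Type*} {G : SimpleGraph V} {X : Set V} {b y : V}
    (h : Conn G X b) (hy : y ∈ X) (hne : y ≠ b) : ∃ e ∈ X, G.Adj b e ∧ y ∈ compOf G b e := by
  refine h.2 (fun y => y ≠ b → ∃ e ∈ X, G.Adj b e ∧ y ∈ compOf G b e) (fun hh => absurd rfl hh)
    ?_ y hy hne
  intro y z hyX hzX hy hyz hz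
  by_cases hyb : y = b
  · subst hyb; exact ⟨z, hzX, hyz, self_mem hyz⟩
  · obtain ⟨e, he, ha, hye⟩ := hy hyb
    exact ⟨e, he, ha, step hye hyz hz⟩

/-- Converse: if all branches are connected so is the whole. -/
lemma conn_of_branches {V : Type*} {G : SimpleGraph V} {X : Set V} {b : V}
    (hb : b ∈ X) (hc : ∀ y ∈ X, y ≠ b → ∃ e ∈ X, G.Adj b e ∧ y ∈ compOf G b e ∧
      Conn G (X ∩ compOf G b e) e) : Conn G X b := by
  refine ⟨hb, fun P hP hs y hy => ?_⟩
  by_cases hyb : y = b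
  · rw [hyb]; exact hP
  obtain ⟨e, he, ha, hye, hcon⟩ := hc y hy hyb
  exact hcon.2 P (hs b e hb he hP ha) (fun y z hy hz hp h => hs y z hy.1 hz.1 hp h) y ⟨hy, hye⟩

lemma maps_branch {V : Type*} {G : SimpleGraph V} (hT : G.IsTree) {f : V → V} {X Y : Set V}
    {b e : V} (hf : IsoOn G f X Y) (h : Conn G X b) (he : e ∈ X) (ha : G.Adj b e) :
    Set.MapsTo f (X ∩ compOf G b e) (Y ∩ compOf G (f b) (f e)) := by
  have ha' : G.Adj (f b) (f e) := (hf.2 b h.1 e he).2 ha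
  intro y hy
  refine ⟨hf.1.mapsTo hy.1, ?_⟩
  refine (h.branch hT he ha).2 (fun y => f y ∈ compOf G (f b) (f e)) (self_mem ha') ?_ y hy
  intro y z hy hz hp hyz
  refine step hp ((hf.2 y hy.1 z hz.1).2 hyz) fun hh => ?_
  have := hf.1.injOn hz.1 h.1 hh
  subst this
  exact root_notMem hz.2

lemma IsoOn.branch {V : Type*} {G : SimpleGraph V} (hT : G.IsTree) {f : V → V} {X Y : Set V}
    {b e : V} (hf : IsoOn G f X Y) (h : Conn G X b) (he : e ∈ X) (ha : G.Adj b e) :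
    IsoOn G f (X ∩ compOf G b e) (Y ∩ compOf G (f b) (f e)) := by
  refine ⟨⟨maps_branch hT hf h he ha, hf.1.injOn.mono Set.inter_subset_left, ?_⟩,
    fun x hx y hy => hf.2 x hx.1 y hy.1⟩
  intro y hy
  obtain ⟨g, hg, h1, h2⟩ := hf.inv
  have ha' : G.Adj (f b) (f e) := (hf.2 b h.1 e he).2 ha
  have := maps_branch hT hg (h.map hf) (hf.1.mapsTo he) ha' hy
  rw [h1 b h.1, h1 e he] at this
  exact ⟨g y, this, h2 y hy.1⟩

/-- Asymmetry from asymmetry of branches. -/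
lemma asym_of_branches {V : Type*} {G : SimpleGraph V} (hT : G.IsTree) {X : Set V} {b : V}
    (h : Conn G X b) (h1 : ∀ e ∈ X, G.Adj b e → Asym G (X ∩ compOf G b e) e)
    (h2 : ∀ e ∈ X, G.Adj b e → ∀ e' ∈ X, G.Adj b e' → e ≠ e' →
      ¬ RIso G (X ∩ compOf G b e) e (X ∩ compOf G b e') e') : Asym G X b := by
  intro f hf hb x hx
  by_cases hxb : x = b
  · rw [hxb, hb]
  obtain ⟨e, he, ha, hxe⟩ := h.child hx hxb
  have hi := hf.branch hT h he ha
  have ha' := (hf.2 b h.1 e he).2 ha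
  rw [hb] at hi ha'
  have hee : e = f e := by
    by_contra hne
    exact h2 e he ha _ (hf.1.mapsTo he) ha' hne ⟨f, hi, rfl⟩
  rw [← hee] at hi
  exact h1 e he ha f hi hee.symm x ⟨hx, hxe⟩

lemma isoOn_of_invol {V : Type*} {G : SimpleGraph V} {F : V → V} {X : Set V}
    (hm : Set.MapsTo F X X) (hi : ∀ x ∈ X, F (F x) = x)
    (ha : ∀ x ∈ X, ∀ y ∈ X, G.Adj x y → G.Adj (F x) (F y)) : IsoOn G F X X := by
  refine ⟨⟨hm, fun x hx y hy h => by rw [← hi x hx, h, hi y hy],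
    fun x hx => ⟨F x, hm hx, hi x hx⟩⟩, fun x hx y hy => ⟨fun h => ?_, ha x hx y hy⟩⟩
  have := ha _ (hm hx) _ (hm hy) h
  rwa [hi x hx, hi y hy] at this

lemma Asym.branch {V : Type*} {G : SimpleGraph V} (hT : G.IsTree) {X : Set V} {b e : V}
    (h : Asym G X b) (he : e ∈ X) (ha : G.Adj b e) : Asym G (X ∩ compOf G b e) e := by
  classical
  intro f hf hfe
  let F : V → V := fun x => if x ∈ compOf G b e then f x else x
  have F1 : ∀ x, x ∈ compOf G b e → F x = f x := fun x hx => if_pos hx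
  have F2 : ∀ x, x ∉ compOf G b e → F x = x := fun x hx => if_neg hx
  have key : ∀ x ∈ X, ∀ y ∈ X, x ∈ compOf G b e → y ∉ compOf G b e →
      (G.Adj (f x) y ↔ G.Adj x y) := by
    intro x hx y hy hxe hye
    have hfx := hf.1.mapsTo ⟨hx, hxe⟩
    constructor
    · intro hh
      have hyb : y = b := by
        by_contra hne
        exact hye (step hfx.2 hh hne)
      subst hyb
      have h3 := bdry hT ha hfx.2 hh.symm
      have : x = e := hf.1.injOn ⟨hx, hxe⟩ ⟨he, self_mem ha⟩ (h3.trans hfe.symm)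
      rw [this]; exact ha.symm
    · intro hh
      have hyb : y = b := by
        by_contra hne
        exact hye (step hxe hh hne)
      subst hyb
      have h3 := bdry hT ha hxe hh.symm
      rw [h3, hfe]; exact ha.symm
  have hF : IsoOn G F X X := by
    refine ⟨⟨?_, ?_, ?_⟩, ?_⟩
    · intro x hx
      by_cases hxe : x ∈ compOf G b e
      · rw [F1 x hxe]; exact (hf.1.mapsTo ⟨hx, hxe⟩).1
      · rw [F2 x hxe]; exact hx
    · intro x hx y hy hxy
      by_cases hxe : x ∈ compOf G b e <;> by_cases hye : y ∈ compOf G b e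
      · rw [F1 x hxe, F1 y hye] at hxy
        exact hf.1.injOn ⟨hx, hxe⟩ ⟨hy, hye⟩ hxy
      · rw [F1 x hxe, F2 y hye] at hxy
        exact absurd (hxy ▸ (hf.1.mapsTo ⟨hx, hxe⟩).2) hye
      · rw [F2 x hxe, F1 y hye] at hxy
        exact absurd (hxy ▸ (hf.1.mapsTo ⟨hy, hye⟩).2) hxe
      · rwa [F2 x hxe, F2 y hye] at hxy
    · intro y hy
      by_cases hye : y ∈ compOf G b e
      · obtain ⟨x, hx, rfl⟩ := hf.1.surjOn ⟨hy, hye⟩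
        exact ⟨x, hx.1, F1 x hx.2⟩
      · exact ⟨y, hy, F2 y hye⟩
    · intro x hx y hy
      by_cases hxe : x ∈ compOf G b e <;> by_cases hye : y ∈ compOf G b e
      · rw [F1 x hxe, F1 y hye]; exact hf.2 x ⟨hx, hxe⟩ y ⟨hy, hye⟩
      · rw [F1 x hxe, F2 y hye]; exact key x hx y hy hxe hye
      · rw [F2 x hxe, F1 y hye, G.adj_comm, G.adj_comm x y]; exact key y hy x hx hye hxe
      · rw [F2 x hxe, F2 y hye]
  intro x hx
  rw [← F1 x hx.2]
  exact h F hF (F2 b root_notMem) x hx.1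

lemma Asym.not_rIso {V : Type*} {G : SimpleGraph V} (hT : G.IsTree) {X : Set V} {b e e' : V}
    (h : Asym G X b) (he : e ∈ X) (ha : G.Adj b e) (he' : e' ∈ X)
    (ha' : G.Adj b e') (hne : e ≠ e') :
    ¬ RIso G (X ∩ compOf G b e) e (X ∩ compOf G b e') e' := by
  classical
  rintro ⟨f, hf, hfe⟩
  obtain ⟨g, hg, hgf, hfg⟩ := hf.inv
  have hge : g e' = e := by rw [← hfe]; exact hgf e ⟨he, self_mem ha⟩
  let F : V → V := fun x => if x ∈ compOf G b e then f x else
    if x ∈ compOf G b e' then g x else x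
  have hd : ∀ x, x ∈ compOf G b e' → x ∉ compOf G b e := fun x h1 h2 =>
    hne (child_unique hT ha ha' h2 h1)
  have F1 : ∀ x, x ∈ compOf G b e → F x = f x := fun x hx => if_pos hx
  have F2 : ∀ x, x ∈ compOf G b e' → F x = g x := fun x hx => by
    simp only [F]; rw [if_neg (hd x hx), if_pos hx]
  have F3 : ∀ x, x ∉ compOf G b e → x ∉ compOf G b e' → F x = x := fun x hx hx' => by
    simp only [F]; rw [if_neg hx, if_neg hx']
  have Fb : F b = b := F3 b root_notMem root_notMem
  have hF : IsoOn G F X X := by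
    apply isoOn_of_invol
    · intro x hx
      by_cases h1 : x ∈ compOf G b e
      · rw [F1 x h1]; exact (hf.1.mapsTo ⟨hx, h1⟩).1
      by_cases h2 : x ∈ compOf G b e'
      · rw [F2 x h2]; exact (hg.1.mapsTo ⟨hx, h2⟩).1
      · rw [F3 x h1 h2]; exact hx
    · intro x hx
      by_cases h1 : x ∈ compOf G b e
      · rw [F1 x h1, F2 _ (hf.1.mapsTo ⟨hx, h1⟩).2]; exact hgf x ⟨hx, h1⟩
      by_cases h2 : x ∈ compOf G b e'
      · rw [F2 x h2, F1 _ (hg.1.mapsTo ⟨hx, h2⟩).2]; exact hfg x ⟨hx, h2⟩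
      · rw [F3 x h1 h2, F3 x h1 h2]
    · intro x hx y hy hxy
      have edge : ∀ u v, G.Adj u v → ∀ c, u ∈ compOf G b c → v ∉ compOf G b c → v = b := by
        intro u v huv c hu hv
        by_contra hh
        exact hv (step hu huv hh)
      have tob : ∀ x ∈ X, G.Adj b x → G.Adj b (F x) := by
        intro x hx hb
        by_cases h1 : x ∈ compOf G b e
        · rw [bdry hT ha h1 hb, F1 _ (self_mem ha), hfe]; exact ha'
        by_cases h2 : x ∈ compOf G b e'
        · rw [bdry hT ha' h2 hb, F2 _ (self_mem ha'), hge]; exact ha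
        · rw [F3 x h1 h2]; exact hb
      by_cases hxb : x = b
      · subst hxb; rw [Fb]; exact tob y hy hxy
      by_cases hyb : y = b
      · subst hyb; rw [Fb]; exact (tob x hx hxy.symm).symm
      by_cases h1 : x ∈ compOf G b e
      · have h2 := step h1 hxy hyb
        rw [F1 x h1, F1 y h2]; exact (hf.2 x ⟨hx, h1⟩ y ⟨hy, h2⟩).2 hxy
      by_cases h2 : x ∈ compOf G b e'
      · have h3 := step h2 hxy hyb
        rw [F2 x h2, F2 y h3]; exact (hg.2 x ⟨hx, h2⟩ y ⟨hy, h3⟩).2 hxy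
      · rw [F3 x h1 h2, F3 y (fun hh => h1 (step hh hxy.symm hxb))
          (fun hh => h2 (step hh hxy.symm hxb))]
        exact hxy
  have := h F hF Fb e he
  rw [F1 e (self_mem ha), hfe] at this
  exact hne this.symm

lemma inter_diff {V : Type*} (X C : Set V) (l : V) : (X \ {l}) ∩ C = (X ∩ C) \ {l} := by
  ext; simp; tauto

lemma inter_diff' {V : Type*} (X : Set V) {C : Set V} {l : V} (h : l ∉ C) :
    (X \ {l}) ∩ C = X ∩ C := by
  ext x; simp only [Set.mem_inter_iff, Set.mem_sdiff, Set.mem_singleton_iff]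
  constructor
  · tauto
  · rintro ⟨h1, h2⟩
    exact ⟨⟨h1, fun e => h (e ▸ h2)⟩, h2⟩

/-- `l` can be removed from the rooted tree `(X, b)` keeping it an asymmetric rooted tree. -/
def Rem {V : Type*} (G : SimpleGraph V) (X : Set V) (b l : V) : Prop :=
  l ∈ X ∧ l ≠ b ∧ Conn G (X \ {l}) b ∧ Asym G (X \ {l}) b

lemma rem_of_branch {V : Type*} {G : SimpleGraph V} (hT : G.IsTree) {X : Set V} {b e l : V}
    (hC : Conn G X b) (hA : Asym G X b) (he : e ∈ X) (ha : G.Adj b e)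
    (hr : Rem G (X ∩ compOf G b e) e l)
    (hn : ∀ e' ∈ X, G.Adj b e' → e' ≠ e →
      ¬ RIso G ((X ∩ compOf G b e) \ {l}) e (X ∩ compOf G b e') e') : Rem G X b l := by
  obtain ⟨hl, hle, hlC, hlA⟩ := hr
  have hlb : l ≠ b := fun h => root_notMem (h ▸ hl.2)
  have hld : ∀ e', G.Adj b e' → e' ≠ e → l ∉ compOf G b e' := fun e' h' hne hh =>
    hne (child_unique hT h' ha hh hl.2)
  have hlne : ∀ e', G.Adj b e' → e' ≠ e → e' ≠ l := fun e' h' hne hh =>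
    hld e' h' hne (hh ▸ self_mem h')
  have hCon : Conn G (X \ {l}) b := by
    refine conn_of_branches ⟨hC.1, fun h => hlb h.symm⟩ fun y hy hyb => ?_
    obtain ⟨e', he', ha', hye⟩ := hC.child hy.1 hyb
    by_cases hee : e' = e
    · subst hee
      refine ⟨e', ⟨he', fun h => hle h.symm⟩, ha', hye, ?_⟩
      rw [inter_diff]; exact hlC
    · refine ⟨e', ⟨he', hlne e' ha' hee⟩, ha', hye, ?_⟩
      rw [inter_diff' X (hld e' ha' hee)]
      exact hC.branch hT he' ha'
  refine ⟨hl.1, hlb, hCon, asym_of_branches hT hCon ?_ ?_⟩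
  · intro e' he' ha'
    by_cases hee : e' = e
    · subst hee; rw [inter_diff]; exact hlA
    · rw [inter_diff' X (hld e' ha' hee)]
      exact hA.branch hT he'.1 ha'
  · intro e1 he1 ha1 e2 he2 ha2 hne
    by_cases h1 : e1 = e
    · subst h1
      rw [inter_diff, inter_diff' X (hld e2 ha2 hne.symm)]
      exact hn e2 he2.1 ha2 hne.symm
    · by_cases h2 : e2 = e
      · subst h2
        rw [inter_diff' X (hld e1 ha1 hne), inter_diff]
        intro hh
        exact hn e1 he1.1 ha1 hne (hh.symm ⟨he1.1, self_mem ha1⟩)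
      · rw [inter_diff' X (hld e1 ha1 h1), inter_diff' X (hld e2 ha2 h2)]
        exact hA.not_rIso hT he1.1 ha1 he2.1 ha2 hne

lemma rem_leaf {V : Type*} {G : SimpleGraph V} (hT : G.IsTree) {X : Set V} {b e : V}
    (hC : Conn G X b) (hA : Asym G X b) (he : e ∈ X) (ha : G.Adj b e)
    (hs : X ∩ compOf G b e = {e}) : Rem G X b e := by
  have hld : ∀ e', G.Adj b e' → e' ≠ e → e ∉ compOf G b e' := fun e' h' hne hh =>
    hne (child_unique hT h' ha hh (self_mem ha))
  have hCon : Conn G (X \ {e}) b := by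
    refine conn_of_branches ⟨hC.1, ha.ne⟩ fun y hy hyb => ?_
    obtain ⟨e', he', ha', hye⟩ := hC.child hy.1 hyb
    have hee : e' ≠ e := by
      rintro rfl
      have : y ∈ X ∩ compOf G b e' := ⟨hy.1, hye⟩
      rw [hs] at this
      exact hy.2 this
    refine ⟨e', ⟨he', hee⟩, ha', hye, ?_⟩
    rw [inter_diff' X (hld e' ha' hee)]
    exact hC.branch hT he' ha'
  refine ⟨he, ha.ne', hCon, asym_of_branches hT hCon ?_ ?_⟩
  · intro e' he' ha'
    rw [inter_diff' X (hld e' ha' he'.2)]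
    exact hA.branch hT he'.1 ha'
  · intro e1 he1 ha1 e2 he2 ha2 hne
    rw [inter_diff' X (hld e1 ha1 he1.2), inter_diff' X (hld e2 ha2 he2.2)]
    exact hA.not_rIso hT he1.1 ha1 he2.1 ha2 hne

lemma eq_singleton {V : Type*} {X : Set V} {e : V} (he : e ∈ X) (h : X.ncard = 1) :
    X = {e} := by
  obtain ⟨a, rfl⟩ := Set.ncard_eq_one.1 h
  rw [Set.mem_singleton_iff.1 he]

lemma exists_other {V : Type*} [Finite V] {X : Set V} {b : V} (h : 2 ≤ X.ncard) :
    ∃ y ∈ X, y ≠ b := by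
  by_contra! hh
  have : X ⊆ {b} := fun y hy => hh y hy
  have := Set.ncard_le_ncard this (Set.toFinite _)
  rw [Set.ncard_singleton] at this
  omega

/-- Any rooted asymmetric tree can lose a leaf, by descending to a smallest branch. -/
lemma greedy {V : Type*} [Finite V] {G : SimpleGraph V} (hT : G.IsTree) (n : ℕ) :
    ∀ (X : Set V) (b : V), X.ncard = n → Conn G X b → Asym G X b → 2 ≤ X.ncard →
      ∃ l, Rem G X b l := by
  induction n using Nat.strong_induction_on with
  | _ n ih =>
  intro X b hn hC hA h2
  obtain ⟨y, hy, hyb⟩ := exists_other (b := b) h2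
  obtain ⟨e0, he0, ha0, -⟩ := hC.child hy hyb
  obtain ⟨e, ⟨he, ha⟩, hmin⟩ := Set.exists_min_image {e | e ∈ X ∧ G.Adj b e}
    (fun e => (X ∩ compOf G b e).ncard) (Set.toFinite _) ⟨e0, he0, ha0⟩
  have hlt : (X ∩ compOf G b e).ncard < X.ncard :=
    Set.ncard_lt_ncard ⟨Set.inter_subset_left, fun h => root_notMem (h hC.1).2⟩ (Set.toFinite _)
  have hmem : e ∈ X ∩ compOf G b e := ⟨he, self_mem ha⟩
  have hpos : 0 < (X ∩ compOf G b e).ncard := (Set.ncard_pos (Set.toFinite _)).2 ⟨e, hmem⟩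
  rcases Nat.lt_or_ge (X ∩ compOf G b e).ncard 2 with h1 | h1
  · exact ⟨e, rem_leaf hT hC hA he ha (eq_singleton hmem (by omega))⟩
  · obtain ⟨l, hl⟩ := ih _ (hn ▸ hlt) _ e rfl (hC.branch hT he ha) (hA.branch hT he ha) h1
    refine ⟨l, rem_of_branch hT hC hA he ha hl fun e' he' ha' hne hi => ?_⟩
    have h3 := hi.ncard
    rw [Set.ncard_sdiff_singleton_of_mem hl.1] at h3
    have := hmin e' ⟨he', ha'⟩
    omega

/-- `(Y, d)` is a new root `d` put on top of (a copy of) `(X, b)`. -/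
def Up {V : Type*} (G : SimpleGraph V) (Y : Set V) (d : V) (X : Set V) (b : V) : Prop :=
  ∃ e ∈ Y, G.Adj d e ∧ Conn G (Y \ {d}) e ∧ RIso G (Y \ {d}) e X b

lemma up_sub {V : Type*} {G : SimpleGraph V} {Y : Set V} {d e : V} (ha : G.Adj d e)
    (hC : Conn G (Y \ {d}) e) : Y \ {d} ⊆ compOf G d e := fun y hy =>
  hC.2 (fun y => y ∈ compOf G d e) (self_mem ha) (fun _ _ _ hz hp h => step hp h hz.2) y hy

lemma rIso_extend {V : Type*} {G : SimpleGraph V} (hT : G.IsTree) {X Y : Set V} {b d e f : V}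
    (hb : b ∈ X) (hd : d ∈ Y) (ha : G.Adj b e) (ha' : G.Adj d f) (hC : Conn G (X \ {b}) e)
    (hC' : Conn G (Y \ {d}) f) (h : RIso G (X \ {b}) e (Y \ {d}) f) : RIso G X b Y d := by
  classical
  obtain ⟨g, hg, hge⟩ := h
  let F : V → V := fun x => if x = b then d else g x
  have F1 : F b = d := if_pos rfl
  have F2 : ∀ x, x ≠ b → F x = g x := fun x hx => if_neg hx
  have key : ∀ x ∈ X, x ≠ b → (G.Adj d (g x) ↔ G.Adj b x) := by
    intro x hx hxb
    have hgx := hg.1.mapsTo ⟨hx, hxb⟩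
    constructor
    · intro hh
      have h1 := bdry hT ha' (up_sub ha' hC' hgx) hh
      have : x = e := hg.1.injOn ⟨hx, hxb⟩ hC.1 (h1.trans hge.symm)
      rw [this]; exact ha
    · intro hh
      rw [bdry hT ha (up_sub ha hC ⟨hx, hxb⟩) hh, hge]; exact ha'
  refine ⟨F, ⟨⟨?_, ?_, ?_⟩, ?_⟩, F1⟩
  · intro x hx
    by_cases hxb : x = b
    · rw [hxb, F1]; exact hd
    · rw [F2 x hxb]; exact (hg.1.mapsTo ⟨hx, hxb⟩).1
  · intro x hx y hy hxy
    by_cases hxb : x = b <;> by_cases hyb : y = b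
    · rw [hxb, hyb]
    · rw [hxb, F1, F2 y hyb] at hxy
      exact absurd hxy.symm (hg.1.mapsTo ⟨hy, hyb⟩).2
    · rw [hyb, F1, F2 x hxb] at hxy
      exact absurd hxy (hg.1.mapsTo ⟨hx, hxb⟩).2
    · rw [F2 x hxb, F2 y hyb] at hxy
      exact hg.1.injOn ⟨hx, hxb⟩ ⟨hy, hyb⟩ hxy
  · intro y hy
    by_cases hyd : y = d
    · exact ⟨b, hb, by rw [F1, hyd]⟩
    · obtain ⟨x, hx, rfl⟩ := hg.1.surjOn ⟨hy, hyd⟩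
      exact ⟨x, hx.1, F2 x hx.2⟩
  · intro x hx y hy
    by_cases hxb : x = b <;> by_cases hyb : y = b
    · rw [hxb, hyb]; simp
    · rw [hxb, F1, F2 y hyb]; exact key y hy hyb
    · rw [hyb, F1, F2 x hxb, G.adj_comm, G.adj_comm x b]; exact key x hx hxb
    · rw [F2 x hxb, F2 y hyb]; exact hg.2 x ⟨hx, hxb⟩ y ⟨hy, hyb⟩

lemma up_two {V : Type*} {G : SimpleGraph V} (hT : G.IsTree) {X : Set V} {b e : V}
    (he : e ∈ X) (ha : G.Adj b e) (hC : Conn G (X \ {b}) e) (hC' : Conn G (X \ {e}) b) :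
    X.ncard = 2 := by
  have : X = {b, e} := by
    ext y
    constructor
    · intro hy
      by_contra hh
      simp only [Set.mem_insert_iff, Set.mem_singleton_iff, not_or] at hh
      obtain ⟨e', he', ha', -⟩ := hC'.child ⟨hy, hh.2⟩ hh.1
      exact he'.2 (bdry hT ha (up_sub ha hC ⟨he'.1, ha'.ne'⟩) ha')
    · rintro (rfl | rfl)
      · exact hC'.1.1
      · exact he
  rw [this, Set.ncard_pair ha.ne]

lemma up_step {V : Type*} {G : SimpleGraph V} (hT : G.IsTree) {X F : Set V} {b e l f : V}
    (he : e ∈ X) (hle : l ≠ e) (ha : G.Adj b e) (hC : Conn G (X \ {b}) e)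
    (hC' : Conn G (X \ {l}) b) (hf : f ∈ F) (hi : RIso G F f (X \ {l}) b) :
    Conn G ((X \ {b}) \ {l}) e ∧ Up G F f ((X \ {b}) \ {l}) e := by
  obtain ⟨k, hk, hkb⟩ := hi.symm hf
  have heq : (X \ {b}) \ {l} = (X \ {l}) ∩ compOf G b e := by
    ext y
    constructor
    · intro hy
      exact ⟨⟨hy.1.1, hy.2⟩, up_sub ha hC hy.1⟩
    · intro hy
      exact ⟨⟨hy.1.1, fun h => root_notMem (h ▸ hy.2)⟩, hy.1.2⟩
  have hel : e ∈ X \ {l} := ⟨he, hle.symm⟩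
  have hc := hC'.branch hT hel ha
  have hi2 := hk.branch hT hC' hel ha
  have ha' := (hk.2 b hC'.1 e hel).2 ha
  rw [hkb] at hi2 ha'
  have hF : F \ {f} = F ∩ compOf G f (k e) := by
    ext y
    constructor
    · intro hy
      obtain ⟨x, hx, rfl⟩ := hk.1.surjOn hy.1
      have hxb : x ≠ b := fun h => hy.2 (by rw [h, hkb]; rfl)
      exact hi2.1.mapsTo ⟨hx, up_sub ha hC ⟨hx.1, hxb⟩⟩
    · intro hy
      exact ⟨hy.1, fun h => root_notMem (h ▸ hy.2)⟩
  rw [heq]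
  refine ⟨hc, k e, hk.1.mapsTo hel, ha', ?_, ?_⟩
  · rw [hF]; exact hc.map hi2
  · rw [hF]
    exact RIso.symm hc.1 ⟨k, hi2, rfl⟩

lemma rIso_two {V : Type*} [Finite V] {G : SimpleGraph V} {X Y : Set V} {b d e f : V}
    (hX : X.ncard = 2) (hY : Y.ncard = 2) (hb : b ∈ X) (hd : d ∈ Y)
    (he : e ∈ X \ {b}) (hf : f ∈ Y \ {d}) : RIso G (X \ {b}) e (Y \ {d}) f := by
  rw [eq_singleton he (by rw [Set.ncard_sdiff_singleton_of_mem hb, hX]),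
    eq_singleton hf (by rw [Set.ncard_sdiff_singleton_of_mem hd, hY])]
  exact RIso.of_singleton e f

/-- The pair lemma. -/
lemma pair {V : Type*} [Finite V] {G : SimpleGraph V} (hT : G.IsTree) (n : ℕ) :
    ∀ (X Y : Set V) (b d l l' : V), X.ncard = n → Y.ncard = n → b ∈ X → d ∈ Y →
      l ∈ X → l ≠ b → Conn G (X \ {l}) b → l' ∈ Y → l' ≠ d → Conn G (Y \ {l'}) d →
      Up G Y d (X \ {l}) b → Up G X b (Y \ {l'}) d → RIso G X b Y d := by
  induction n with
  | zero =>
    intro X Y b d l l' hX hY hb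
    rw [Set.ncard_eq_zero (Set.toFinite _)] at hX
    simp [hX] at hb
  | succ n ih =>
    rintro X Y b d l l' hX hY hb hd hl hlb hC hl' hld hC' ⟨f, hf, haf, hcF, hiF⟩
      ⟨e, he, hae, hcE, hiE⟩
    refine rIso_extend hT hb hd hae haf hcE hcF ?_
    by_cases h1 : l = e
    · subst h1
      have := up_two hT he hae hcE hC
      exact rIso_two this (by omega) hb hd hcE.1 hcF.1
    by_cases h2 : l' = f
    · subst h2
      have := up_two hT hf haf hcF hC'
      exact rIso_two (by omega) this hb hd hcE.1 hcF.1
    obtain ⟨c1, u1⟩ := up_step hT he h1 hae hcE hC hcF.1 hiF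
    obtain ⟨c2, u2⟩ := up_step hT hf h2 haf hcF hC' hcE.1 hiE
    exact ih _ _ e f l l' (by rw [Set.ncard_sdiff_singleton_of_mem hb]; omega)
      (by rw [Set.ncard_sdiff_singleton_of_mem hd]; omega) hcE.1 hcF.1 ⟨hl, hlb⟩ h1 c1
      ⟨hl', hld⟩ h2 c2 u1 u2

lemma inter_compl {V : Type*} {G : SimpleGraph V} (hT : G.IsTree) {a b : V} (h : G.Adj a b)
    (S : Set V) : S ∩ compOf G b a = S \ compOf G a b := by
  ext y; simp [compl_iff hT h]

lemma card_split {V : Type*} [Finite V] {G : SimpleGraph V} (hT : G.IsTree) {a b : V}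
    (h : G.Adj a b) (S : Set V) :
    (S ∩ compOf G a b).ncard + (S ∩ compOf G b a).ncard = S.ncard := by
  rw [inter_compl hT h]
  exact Set.ncard_inter_add_ncard_sdiff_eq_ncard S _ (Set.toFinite _)

lemma card_two {V : Type*} [Finite V] {G : SimpleGraph V} (hT : G.IsTree) {c d e : V}
    (h : G.Adj c d) (h' : G.Adj c e) (hne : d ≠ e) {S : Set V} (hc : c ∈ S) :
    (S ∩ compOf G c d).ncard + (S ∩ compOf G c e).ncard + 1 ≤ S.ncard := by
  have hd : Disjoint (S ∩ compOf G c d) (S ∩ compOf G c e) :=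
    Set.disjoint_left.2 fun x hx hx' => hne (child_unique hT h h' hx.2 hx'.2)
  rw [← Set.ncard_union_eq hd (Set.toFinite _) (Set.toFinite _)]
  have := Set.ncard_insert_of_notMem (a := c) (s := (S ∩ compOf G c d) ∪ (S ∩ compOf G c e))
    (by rintro (hh | hh) <;> exact root_notMem hh.2) (Set.toFinite _)
  rw [← this]
  refine Set.ncard_le_ncard ?_ (Set.toFinite _)
  rintro x (rfl | hx | hx)
  · exact hc
  · exact hx.1
  · exact hx.1

lemma centroid_map {V : Type*} [Finite V] {G : SimpleGraph V} (hT : G.IsTree) {S : Set V} {c : V}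
    (hC : Conn G S c) (hS : ∀ e ∈ S, G.Adj c e → 2 * (S ∩ compOf G c e).ncard ≤ S.ncard)
    {f : V → V} (hf : IsoOn G f S S) (hne : f c ≠ c) :
    ∃ d ∈ S, G.Adj c d ∧ 2 * (S ∩ compOf G c d).ncard = S.ncard ∧
      RIso G (S ∩ compOf G c d) d (S ∩ compOf G d c) c := by
  obtain ⟨g, hg, hgf, hfg⟩ := hf.inv
  have hdS : f c ∈ S := hf.1.mapsTo hC.1
  have hCd : Conn G S (f c) := hC.map hf
  obtain ⟨e, he, ha, hde⟩ := hC.child hdS hne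
  obtain ⟨e', he', ha', hce⟩ := hCd.child hC.1 hne.symm
  have hu : g e' ∈ S := hg.1.mapsTo he'
  have hau : G.Adj c (g e') := by
    rw [← hf.2 c hC.1 _ hu, hfg e' he']; exact ha'
  have hbr := hf.branch hT hC hu hau
  rw [hfg e' he'] at hbr
  have hcard : (S ∩ compOf G c (g e')).ncard = (S ∩ compOf G (f c) e').ncard :=
    RIso.ncard (b := g e') (d := e') ⟨f, hbr, hfg e' he'⟩
  have h1 := hS _ hu hau
  have h2 := hS e he ha
  have h3 := card_split hT ha S
  have hsub : compOf G e c ⊆ compOf G (f c) e' := by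
    rintro y ⟨p, hp⟩
    by_cases hh : f c ∈ p.support
    · classical
      have : f c ∈ compOf G e c :=
        ⟨p.takeUntil _ hh, fun h => hp (p.support_takeUntil_subset_support hh h)⟩
      rw [compl_iff hT ha] at this
      exact absurd hde this
    · obtain ⟨q, hq⟩ := hce
      exact ⟨q.append p, by simp [Walk.mem_support_append_iff, hq, hh]⟩
  have hed : f c = e := by
    by_contra hh
    have hee : e ∈ compOf G (f c) e' := step hce ha (fun h => hh h.symm)
    have h4 : insert e (S ∩ compOf G e c) ⊆ S ∩ compOf G (f c) e' := by
      rintro y (rfl | hy)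
      · exact ⟨he, hee⟩
      · exact ⟨hy.1, hsub hy.2⟩
    have h5 := Set.ncard_le_ncard h4 (Set.toFinite _)
    rw [Set.ncard_insert_of_notMem (fun h => root_notMem h.2) (Set.toFinite _)] at h5
    omega
  have hec : e' = c := by
    refine child_unique hT ha' ?_ hce ?_
    · rw [hed]; exact ha.symm
    · rw [hed]; exact self_mem ha.symm
  rw [hec, hed] at hcard hbr
  rw [hec] at hau hu h1
  have hgc : g c = e := by
    by_contra hh
    have := card_two hT hau ha hh hC.1
    omega
  rw [hgc] at hbr
  refine ⟨e, he, ha, ?_, f, hbr, ?_⟩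
  · rw [hgc] at hcard; omega
  · rw [← hgc]; exact hfg c hC.1

lemma free_of_centroid {V : Type*} [Finite V] {G : SimpleGraph V} (hT : G.IsTree) {S : Set V}
    {c : V} (hC : Conn G S c) (hA : Asym G S c)
    (hS : ∀ e ∈ S, G.Adj c e → 2 * (S ∩ compOf G c e).ncard ≤ S.ncard)
    (hn : ∀ d ∈ S, G.Adj c d → 2 * (S ∩ compOf G c d).ncard = S.ncard →
      ¬ RIso G (S ∩ compOf G c d) d (S ∩ compOf G d c) c) : Free G S := by
  intro f hf
  refine hA f hf ?_
  by_contra hne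
  obtain ⟨d, hd, ha, h1, h2⟩ := centroid_map hT hC hS hf hne
  exact hn d hd ha h1 h2

lemma exists_centroid_s14 {V : Type*} [Finite V] [Nonempty V] {G : SimpleGraph V} (hT : G.IsTree) :
    ∃ c : V, ∀ e, G.Adj c e → 2 * (compOf G c e).ncard ≤ Nat.card V := by
  by_contra! hh
  obtain ⟨v⟩ := ‹Nonempty V›
  obtain ⟨w, hw, hw'⟩ := hh v
  obtain ⟨⟨a, b⟩, ⟨hab, hlt⟩, hmin⟩ := Set.exists_min_image
    {p : V × V | G.Adj p.1 p.2 ∧ Nat.card V < 2 * (compOf G p.1 p.2).ncard}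
    (fun p => (compOf G p.1 p.2).ncard) (Set.toFinite _) ⟨(v, w), hw, hw'⟩
  simp only at hab hlt hmin
  obtain ⟨c, hc, hc'⟩ := hh b
  have h1 := hmin (b, c) ⟨hc, hc'⟩
  by_cases hca : c = a
  · subst hca
    have := card_split hT hab Set.univ
    rw [Set.univ_inter, Set.univ_inter, Set.ncard_univ] at this
    omega
  · have : (compOf G b c).ncard < (compOf G a b).ncard :=
      Set.ncard_lt_ncard ⟨sub_branch hT hab hc hca, fun h => root_notMem (h (self_mem hab))⟩
        (Set.toFinite _)
    simp only at h1
    omega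

lemma isLeaf_of_conn {V : Type*} {G : SimpleGraph V} (hT : G.IsTree) {l b : V}
    (h : Conn G (Set.univ \ {l}) b) : IsLeaf G l := by
  obtain ⟨e, ha, -⟩ := exists_child hT (a := l) (y := b) h.1.2
  have : G.neighborSet l = {e} := by
    ext x
    constructor
    · intro hx
      have h2 := h.reroot (d := e) ⟨trivial, ha.ne'⟩
      exact bdry hT ha (up_sub ha h2 ⟨trivial, (G.ne_of_adj hx).symm⟩) hx
    · rintro rfl; exact ha
  rw [IsLeaf, this, Set.ncard_singleton]

lemma autFree_of_free {V : Type*} {G : SimpleGraph V} {l : V}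
    (h : Free G (Set.univ \ {l})) : AutFree (G.induce {x : V | x ≠ l}) := by
  classical
  intro φ v
  let F : V → V := fun x => if hx : x ≠ l then (φ ⟨x, hx⟩).1 else x
  have F1 : ∀ x (hx : x ≠ l), F x = (φ ⟨x, hx⟩).1 := fun x hx => dif_pos hx
  have hF : IsoOn G F (Set.univ \ {l}) (Set.univ \ {l}) := by
    refine ⟨⟨?_, ?_, ?_⟩, ?_⟩
    · intro x hx
      rw [F1 x hx.2]; exact ⟨trivial, (φ ⟨x, hx.2⟩).2⟩
    · intro x hx y hy hxy
      rw [F1 x hx.2, F1 y hy.2] at hxy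
      exact congrArg Subtype.val (φ.injective (Subtype.ext hxy))
    · intro y hy
      refine ⟨(φ.symm ⟨y, hy.2⟩).1, ⟨trivial, (φ.symm ⟨y, hy.2⟩).2⟩, ?_⟩
      rw [F1 _ (φ.symm ⟨y, hy.2⟩).2]
      simp
    · intro x hx y hy
      rw [F1 x hx.2, F1 y hy.2]
      exact φ.map_rel_iff (a := ⟨x, hx.2⟩) (b := ⟨y, hy.2⟩)
  have := h F hF v.1 ⟨trivial, v.2⟩
  rw [F1 v.1 v.2] at this
  exact Subtype.ext this

lemma free_univ {V : Type*} {G : SimpleGraph V} (h : AutFree G) : Free G Set.univ := by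
  intro f hf x _
  have hb : Function.Bijective f := Set.bijOn_univ.1 hf.1
  exact h ⟨Equiv.ofBijective f hb, fun {a b} => hf.2 a trivial b trivial⟩ x

/-- If removing `l` keeps rooted asymmetry at a centroid, minimality produces two swapped
halves. -/
lemma crit {V : Type*} [Finite V] {G : SimpleGraph V} (hT : G.IsTree)
    (hmin : ∀ l c : V, Conn G (Set.univ \ {l}) c → ¬ Free G (Set.univ \ {l})) {c l : V}
    (hR : Rem G Set.univ c l)
    (hS : ∀ e, e ≠ l → G.Adj c e →
      2 * ((Set.univ \ {l}) ∩ compOf G c e).ncard + 1 ≤ Nat.card V) :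
    ∃ d, d ≠ l ∧ G.Adj c d ∧ 2 * ((Set.univ \ {l}) ∩ compOf G c d).ncard + 1 = Nat.card V ∧
      RIso G ((Set.univ \ {l}) ∩ compOf G c d) d ((Set.univ \ {l}) ∩ compOf G d c) c := by
  obtain ⟨hl, hlc, hC, hA⟩ := hR
  by_contra! hh
  have hcard : ((Set.univ : Set V) \ {l}).ncard + 1 = Nat.card V := by
    rw [Set.ncard_sdiff_singleton_add_one hl (Set.toFinite _), Set.ncard_univ]
  refine hmin l c hC (free_of_centroid hT hC hA ?_ ?_)
  · intro e he ha
    have := hS e he.2 ha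
    omega
  · intro d hd ha h2
    exact hh d hd.2 ha (by omega)

lemma card_le_of_inter {V : Type*} [Finite V] (l : V) (C : Set V) :
    ((Set.univ \ {l}) ∩ C).ncard ≤ C.ncard :=
  Set.ncard_le_ncard Set.inter_subset_right (Set.toFinite _)

lemma inter_mem {V : Type*} (l : V) (C : Set V) :
    (Set.univ \ {l}) ∩ C = C \ {l} := by
  rw [inter_diff, Set.univ_inter]

lemma inter_notMem {V : Type*} {l : V} {C : Set V} (h : l ∉ C) :
    (Set.univ \ {l}) ∩ C = C := by
  rw [inter_diff' _ h, Set.univ_inter]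

lemma conn_comp {V : Type*} {G : SimpleGraph V} (hT : G.IsTree) {c e : V} (ha : G.Adj c e) :
    Conn G (compOf G c e) e := by
  have := (conn_univ hT c).branch hT trivial ha
  rwa [Set.univ_inter] at this

lemma asym_comp {V : Type*} {G : SimpleGraph V} (hT : G.IsTree) (hF : Free G Set.univ)
    {c e : V} (ha : G.Adj c e) : Asym G (compOf G c e) e := by
  have h : Asym G Set.univ c := fun f hf _ => hF f hf
  have := h.branch hT trivial ha
  rwa [Set.univ_inter] at this

lemma not_rIso_comp {V : Type*} {G : SimpleGraph V} (hT : G.IsTree) (hF : Free G Set.univ)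
    {c e e' : V} (ha : G.Adj c e) (ha' : G.Adj c e') (hne : e ≠ e') :
    ¬ RIso G (compOf G c e) e (compOf G c e') e' := by
  have h : Asym G Set.univ c := fun f hf _ => hF f hf
  have := h.not_rIso hT trivial ha trivial ha' hne
  rwa [Set.univ_inter, Set.univ_inter] at this

lemma rem_comp {V : Type*} {G : SimpleGraph V} (hT : G.IsTree) (hF : Free G Set.univ)
    {c e l : V} (ha : G.Adj c e) (hr : Rem G (compOf G c e) e l)
    (hn : ∀ e', G.Adj c e' → e' ≠ e →
      ¬ RIso G (compOf G c e \ {l}) e (compOf G c e') e') : Rem G Set.univ c l := by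
  refine rem_of_branch hT (conn_univ hT c) (fun f hf _ => hF f hf) trivial ha ?_ ?_
  · rwa [Set.univ_inter]
  · intro e' _ ha' hne
    rw [Set.univ_inter, Set.univ_inter]
    exact hn e' ha' hne

lemma comp_pos {V : Type*} [Finite V] {G : SimpleGraph V} {c e : V} (ha : G.Adj c e) :
    0 < (compOf G c e).ncard := (Set.ncard_pos (Set.toFinite _)).2 ⟨e, self_mem ha⟩

/-- Bicentroidal case. -/
lemma half {V : Type*} [Finite V] {G : SimpleGraph V} (hT : G.IsTree) (hF : Free G Set.univ)
    (hmin : ∀ l c : V, Conn G (Set.univ \ {l}) c → ¬ Free G (Set.univ \ {l})) {c d : V}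
    (ha : G.Adj c d) (h1 : 2 * (compOf G c d).ncard = Nat.card V)
    (h2 : 2 * (compOf G d c).ncard = Nat.card V) (h3 : 2 ≤ (compOf G d c).ncard) :
    ∃ l, l ∈ compOf G d c ∧ l ≠ c ∧ Conn G (compOf G d c \ {l}) c ∧
      Up G (compOf G c d) d (compOf G d c \ {l}) c := by
  obtain ⟨l, hl⟩ := greedy hT _ _ c rfl (conn_comp hT ha.symm) (asym_comp hT hF ha.symm) h3
  refine ⟨l, hl.1, hl.2.1, hl.2.2.1, ?_⟩
  have hlc : (compOf G d c \ {l}).ncard + 1 = (compOf G d c).ncard :=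
    Set.ncard_sdiff_singleton_add_one hl.1 (Set.toFinite _)
  have hlt : ∀ e, G.Adj d e → e ≠ c → compOf G d e ⊆ compOf G c d \ {d} := fun e he hne y hy =>
    ⟨sub_branch hT ha he hne hy, fun h => root_notMem (h ▸ hy)⟩
  have hdc : (compOf G c d \ {d}).ncard + 1 = (compOf G c d).ncard :=
    Set.ncard_sdiff_singleton_add_one (self_mem ha) (Set.toFinite _)
  by_cases hh : ∃ e', G.Adj d e' ∧ e' ≠ c ∧ RIso G (compOf G d c \ {l}) c (compOf G d e') e'
  · obtain ⟨e', he', hne, hi⟩ := hh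
    have heq : compOf G d e' = compOf G c d \ {d} :=
      Set.eq_of_subset_of_ncard_le (hlt e' he' hne) (by have := hi.ncard; omega) (Set.toFinite _)
    refine ⟨e', (hlt e' he' hne (self_mem he')).1, he', ?_, ?_⟩
    · rw [← heq]; exact conn_comp hT he'
    · rw [← heq]; exact hi.symm hl.2.2.1.1
  · push Not at hh
    have hR := rem_comp hT hF ha.symm hl hh
    have key : ∀ e, G.Adj d e →
        2 * ((Set.univ \ {l}) ∩ compOf G d e).ncard + 2 ≤ Nat.card V := by
      intro e he
      by_cases hec : e = c
      · subst hec
        rw [inter_mem]; omega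
      · have := Set.ncard_le_ncard (hlt e he hec) (Set.toFinite _)
        have := card_le_of_inter l (compOf G d e)
        omega
    obtain ⟨x, -, hx, hx2, -⟩ := crit hT hmin hR (fun e _ he => by have := key e he; omega)
    have := key x hx
    omega

/-- Degree-two centroid with two branches of equal size. -/
lemma equal {V : Type*} [Finite V] {G : SimpleGraph V} (hT : G.IsTree) (hF : Free G Set.univ)
    (hmin : ∀ l c : V, Conn G (Set.univ \ {l}) c → ¬ Free G (Set.univ \ {l})) {c e e' : V}
    (ha : G.Adj c e) (ha' : G.Adj c e') (hne : e ≠ e')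
    (h1 : 2 * (compOf G c e).ncard + 1 = Nat.card V)
    (h2 : 2 * (compOf G c e').ncard + 1 = Nat.card V) (h3 : 2 ≤ (compOf G c e').ncard) :
    ∃ l, l ∈ compOf G c e' ∧ l ≠ e' ∧ Conn G (compOf G c e' \ {l}) e' ∧
      Up G (compOf G c e) e (compOf G c e' \ {l}) e' := by
  obtain ⟨l, hl⟩ := greedy hT _ _ e' rfl (conn_comp hT ha') (asym_comp hT hF ha') h3
  refine ⟨l, hl.1, hl.2.1, hl.2.2.1, ?_⟩
  have hlc : (compOf G c e' \ {l}).ncard + 1 = (compOf G c e').ncard :=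
    Set.ncard_sdiff_singleton_add_one hl.1 (Set.toFinite _)
  have hle : l ∉ compOf G c e := fun h => hne (child_unique hT ha ha' h hl.1)
  have hsub : compOf G c e' ⊆ compOf G e c \ {c} := fun y hy => by
    refine ⟨(compl_iff hT ha y).2 fun h => hne (child_unique hT ha ha' h hy),
      fun h => root_notMem (h ▸ hy)⟩
  have hs := card_split hT ha Set.univ
  rw [Set.univ_inter, Set.univ_inter, Set.ncard_univ] at hs
  have hcc : (compOf G e c \ {c}).ncard + 1 = (compOf G e c).ncard :=
    Set.ncard_sdiff_singleton_add_one (self_mem ha.symm) (Set.toFinite _)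
  have heq : compOf G c e' = compOf G e c \ {c} :=
    Set.eq_of_subset_of_ncard_le hsub (by omega) (Set.toFinite _)
  have hch : ∀ x, G.Adj c x → x = e ∨ x = e' := by
    intro x hx
    by_contra! hh
    have : x ∈ compOf G e c \ {c} :=
      ⟨(compl_iff hT ha x).2 fun h => hh.1 (bdry hT ha h hx), hx.ne'⟩
    rw [← heq] at this
    exact hh.2 (bdry hT ha' this hx)
  have hR : Rem G Set.univ c l := by
    refine rem_comp hT hF ha' hl fun x hx hxe hi => ?_
    rcases hch x hx with rfl | rfl
    · have := hi.ncard; omega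
    · exact hxe rfl
  obtain ⟨d, -, had, hd, hi⟩ := crit hT hmin hR (by
    intro x _ hx
    have := card_le_of_inter l (compOf G c x)
    rcases hch x hx with rfl | rfl <;> omega)
  rcases hch d had with rfl | rfl
  · rw [inter_notMem hle, inter_mem] at hi
    have hlX : l ∈ compOf G d c := (hsub hl.1).1
    have hcon : Conn G (compOf G d c \ {l}) c := by
      obtain ⟨f, hf, hfd⟩ := hi
      have h4 := (conn_comp hT ha).map hf
      rwa [hfd] at h4
    have := (up_step hT (X := compOf G d c) (b := c) (e := e') (hsub (self_mem ha')).1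
      hl.2.1 ha' (by rw [← heq]; exact conn_comp hT ha') hcon (self_mem ha) hi).2
    rwa [← heq] at this
  · rw [inter_mem] at hd; omega

lemma structure_main {V : Type*} [Finite V] [Nonempty V] {G : SimpleGraph V} (hT : G.IsTree)
    (hF : Free G Set.univ) (h2 : 2 ≤ Nat.card V)
    (hmin : ∀ l c : V, Conn G (Set.univ \ {l}) c → ¬ Free G (Set.univ \ {l})) :
    ∃ c e e' e'', G.Adj c e ∧ G.Adj c e' ∧ G.Adj c e'' ∧ e ≠ e' ∧ e ≠ e'' ∧ e' ≠ e'' ∧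
      (compOf G c e).ncard = 3 ∧ (compOf G c e').ncard = 2 ∧ (compOf G c e'').ncard = 1 ∧
      ∀ x, G.Adj c x → x = e ∨ x = e' ∨ x = e'' := by
  obtain ⟨c, hc⟩ := exists_centroid_s14 hT
  by_cases hbi : ∃ d, G.Adj c d ∧ 2 * (compOf G c d).ncard = Nat.card V
  · -- bicentroidal case
    exfalso
    obtain ⟨d, ha, hd⟩ := hbi
    have hs := card_split hT ha Set.univ
    rw [Set.univ_inter, Set.univ_inter, Set.ncard_univ] at hs
    have hni : ¬ RIso G (compOf G c d) d (compOf G d c) c := by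
      rintro ⟨f, hf, hfd⟩
      classical
      obtain ⟨g, hg, hgf, hfg⟩ := hf.inv
      have hgc : g c = d := by rw [← hfd]; exact hgf d (self_mem ha)
      let F : V → V := fun x => if x ∈ compOf G c d then f x else g x
      have F1 : ∀ x, x ∈ compOf G c d → F x = f x := fun x hx => if_pos hx
      have F2 : ∀ x, x ∈ compOf G d c → F x = g x := fun x hx =>
        if_neg ((compl_iff hT ha x).1 hx)
      have hcov : ∀ x, x ∈ compOf G c d ∨ x ∈ compOf G d c := fun x => by
        rw [compl_iff hT ha]; tauto
      have cross : ∀ x y, x ∈ compOf G c d → y ∈ compOf G d c → G.Adj x y →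
          G.Adj (F x) (F y) := by
        intro x y hx hy hxy
        have hyc : y = c := by
          by_contra hh
          exact (compl_iff hT ha y).1 hy (step hx hxy hh)
        subst hyc
        have hxd : x = d := bdry hT ha hx hxy.symm
        subst hxd
        rw [F1 _ hx, F2 _ hy, hfd, hgc]; exact ha
      have hFi : IsoOn G F Set.univ Set.univ := by
        apply isoOn_of_invol
        · intro x _; trivial
        · intro x _
          rcases hcov x with hx | hx
          · rw [F1 x hx, F2 _ (hf.1.mapsTo hx), hgf x hx]
          · rw [F2 x hx, F1 _ (hg.1.mapsTo hx), hfg x hx]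
        · intro x _ y _ hxy
          rcases hcov x with hx | hx <;> rcases hcov y with hy | hy
          · rw [F1 x hx, F1 y hy]; exact (hf.2 x hx y hy).2 hxy
          · exact cross x y hx hy hxy
          · exact (cross y x hy hx hxy.symm).symm
          · rw [F2 x hx, F2 y hy]; exact (hg.2 x hx y hy).2 hxy
      have := hF F hFi d trivial
      rw [F1 d (self_mem ha), hfd] at this
      exact ha.ne this
    rcases Nat.lt_or_ge (compOf G c d).ncard 2 with hm | hm
    · have := comp_pos ha
      apply hni
      rw [eq_singleton (self_mem ha) (by omega), eq_singleton (self_mem ha.symm) (by omega)]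
      exact RIso.of_singleton d c
    · obtain ⟨l, hl, hlc, hlC, hlU⟩ := half hT hF hmin ha hd (by omega) (by omega)
      obtain ⟨l', hl', hlc', hlC', hlU'⟩ := half hT hF hmin ha.symm (by omega) hd (by omega)
      exact hni (pair hT _ _ _ d c l' l rfl (by omega) (self_mem ha) (self_mem ha.symm)
        hl' hlc' hlC' hl hlc hlC hlU' hlU)
  have hc' : ∀ e, G.Adj c e → 2 * (compOf G c e).ncard + 1 ≤ Nat.card V := by
    intro e he
    have := hc e he
    have : 2 * (compOf G c e).ncard ≠ Nat.card V := fun h => hbi ⟨e, he, h⟩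
    omega
  by_cases hhalf : ∃ e, G.Adj c e ∧ 2 * (compOf G c e).ncard + 1 = Nat.card V
  swap
  · -- all branches are small
    exfalso
    push Not at hhalf
    obtain ⟨l, hl⟩ := greedy hT _ Set.univ c rfl (conn_univ hT c) (fun f hf _ => hF f hf)
      (by rwa [Set.ncard_univ])
    obtain ⟨d, -, hd, hd2, -⟩ := crit hT hmin hl (by
      intro e _ he
      have := card_le_of_inter l (compOf G c e)
      have := hc' e he
      omega)
    have := card_le_of_inter l (compOf G c d)
    have := hc' d hd
    have := hhalf d hd
    omega
  obtain ⟨e, ha, he⟩ := hhalf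
  by_cases hother : ∃ e', e' ≠ e ∧ G.Adj c e' ∧ (compOf G c e').ncard = (compOf G c e).ncard
  · exfalso
    obtain ⟨e', hne, ha', he'⟩ := hother
    apply not_rIso_comp hT hF ha ha' hne.symm
    rcases Nat.lt_or_ge (compOf G c e).ncard 2 with hm | hm
    · have := comp_pos ha
      rw [eq_singleton (self_mem ha) (by omega), eq_singleton (self_mem ha') (by omega)]
      exact RIso.of_singleton e e'
    · obtain ⟨l, hl, hlc, hlC, hlU⟩ := equal hT hF hmin ha ha' hne.symm he (by omega) (by omega)
      obtain ⟨l', hl', hlc', hlC', hlU'⟩ := equal hT hF hmin ha' ha hne (by omega) he (by omega)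
      exact pair hT _ _ _ e e' l' l rfl he' (self_mem ha) (self_mem ha')
        hl' hlc' hlC' hl hlc hlC hlU' hlU
  push Not at hother
  -- sizes of other branches
  have hsm : ∀ x, G.Adj c x → x ≠ e → (compOf G c x).ncard < (compOf G c e).ncard := by
    intro x hx hxe
    have := hc' x hx
    have := hother x hxe hx
    omega
  have hnotE : ∀ x y, G.Adj c x → x ≠ e → y ∈ compOf G c x → y ∈ compOf G e c \ {c} :=
    fun x y hx hxe hy => ⟨(compl_iff hT ha y).2 fun h => hxe (child_unique hT hx ha hy h),
      fun h => root_notMem (h ▸ hy)⟩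
  have hs := card_split hT ha Set.univ
  rw [Set.univ_inter, Set.univ_inter, Set.ncard_univ] at hs
  have hcc : (compOf G e c \ {c}).ncard + 1 = (compOf G e c).ncard :=
    Set.ncard_sdiff_singleton_add_one (self_mem ha.symm) (Set.toFinite _)
  have hm2 : 2 ≤ (compOf G c e).ncard := by
    by_contra hlt
    have := comp_pos ha
    have h1 : 0 < (compOf G e c \ {c}).ncard := by omega
    obtain ⟨y, hy⟩ := (Set.ncard_pos (Set.toFinite _)).1 h1
    obtain ⟨x, hx, hyx⟩ := exists_child hT hy.2
    have hxe : x ≠ e := by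
      rintro rfl
      exact (compl_iff hT ha y).1 hy.1 hyx
    have := hsm x hx hxe
    have := comp_pos hx
    omega
  obtain ⟨l, hl⟩ := greedy hT _ _ e rfl (conn_comp hT ha) (asym_comp hT hF ha) hm2
  have hlc : (compOf G c e \ {l}).ncard + 1 = (compOf G c e).ncard :=
    Set.ncard_sdiff_singleton_add_one hl.1 (Set.toFinite _)
  have hex : ∃ e', G.Adj c e' ∧ e' ≠ e ∧ RIso G (compOf G c e \ {l}) e (compOf G c e') e' := by
    by_contra! hh
    have hR := rem_comp hT hF ha hl hh
    have key : ∀ x, G.Adj c x →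
        2 * ((Set.univ \ {l}) ∩ compOf G c x).ncard + 1 < Nat.card V := by
      intro x hx
      by_cases hxe : x = e
      · subst hxe
        rw [inter_mem]; omega
      · have := hsm x hx hxe
        have := card_le_of_inter l (compOf G c x)
        omega
    obtain ⟨x, -, hx, hx2, -⟩ := crit hT hmin hR (fun x _ hx => (key x hx).le)
    have := key x hx
    omega
  obtain ⟨e', ha', hne, hi⟩ := hex
  have he' := hi.ncard
  have hsub : compOf G c e' ⊆ compOf G e c \ {c} := fun y hy => hnotE e' y ha' hne hy
  have hW : ((compOf G e c \ {c}) \ compOf G c e').ncard = 1 := by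
    have := Set.ncard_sdiff_add_ncard_of_subset hsub (Set.toFinite _)
    omega
  obtain ⟨z, hz⟩ := Set.ncard_eq_one.1 hW
  have hz' : z ∈ (compOf G e c \ {c}) \ compOf G c e' := by rw [hz]; rfl
  have hin : ∀ x, G.Adj c x → x ≠ e → x ≠ e' → ∀ y ∈ compOf G c x, y = z := by
    intro x hx h1 h2 y hy
    have : y ∈ (compOf G e c \ {c}) \ compOf G c e' :=
      ⟨hnotE x y hx h1 hy, fun h => h2 (child_unique hT hx ha' hy h)⟩
    rw [hz] at this
    exact this
  obtain ⟨e'', ha'', hze⟩ := exists_child hT hz'.1.2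
  have hne1 : e'' ≠ e := by
    rintro rfl
    exact (compl_iff hT ha z).1 hz'.1.1 hze
  have hne2 : e'' ≠ e' := by
    rintro rfl
    exact hz'.2 hze
  have hez : e'' = z := hin e'' ha'' hne1 hne2 e'' (self_mem ha'')
  have hCe : compOf G c e'' = {e''} := by
    ext y
    constructor
    · intro hy
      rw [hez]; exact hin e'' ha'' hne1 hne2 y hy
    · rintro rfl; exact self_mem ha''
  have hCc : (compOf G c e'').ncard = 1 := by rw [hCe, Set.ncard_singleton]
  have hch : ∀ x, G.Adj c x → x = e ∨ x = e' ∨ x = e'' := by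
    intro x hx
    by_cases h1 : x = e
    · exact Or.inl h1
    by_cases h2 : x = e'
    · exact Or.inr (Or.inl h2)
    · exact Or.inr (Or.inr ((hin x hx h1 h2 x (self_mem hx)).trans hez.symm))
  have hm3 : (compOf G c e).ncard ≠ 2 := by
    intro hh
    apply not_rIso_comp hT hF ha' ha'' hne2.symm
    rw [hCe, eq_singleton (self_mem ha') (by omega)]
    exact RIso.of_singleton e' e''
  by_cases hm : (compOf G c e).ncard = 3
  · exact ⟨c, e, e', e'', ha, ha', ha'', hne.symm, hne1.symm, hne2.symm, hm, by omega, hCc, hch⟩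
  exfalso
  -- generic use of `crit`
  have use_crit : ∀ l, Rem G Set.univ c l → l ∉ compOf G c e →
      RIso G (compOf G c e) e ((Set.univ \ {l}) ∩ compOf G e c) c := by
    intro l hR hle
    obtain ⟨d, -, had, hd, hi3⟩ := crit hT hmin hR (by
      intro x _ hx
      have := card_le_of_inter l (compOf G c x)
      have := hc' x hx
      omega)
    have hde : d = e := by
      by_contra hh
      have := hsm d had hh
      have := card_le_of_inter l (compOf G c d)
      omega
    subst hde
    rwa [inter_notMem hle] at hi3
  have hE2 : e'' ∉ compOf G c e := fun h => hne1 (bdry hT ha h ha'')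
  have hE1 : e' ∉ compOf G c e := fun h => hne (bdry hT ha h ha')
  have r1 := use_crit e'' (rem_leaf hT (conn_univ hT c) (fun f hf _ => hF f hf) trivial ha''
    (by rw [Set.univ_inter, hCe])) hE2
  obtain ⟨k, hk⟩ := greedy hT _ _ e' rfl (conn_comp hT ha') (asym_comp hT hF ha') (by omega)
  have hkc : (compOf G c e' \ {k}).ncard + 1 = (compOf G c e').ncard :=
    Set.ncard_sdiff_singleton_add_one hk.1 (Set.toFinite _)
  have r2 := use_crit k (rem_comp hT hF ha' hk (by
    intro x hx hxe hi
    have := hi.ncard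
    rcases hch x hx with rfl | rfl | rfl
    · omega
    · exact hxe rfl
    · omega)) (fun h => hne (child_unique hT ha' ha hk.1 h))
  obtain ⟨h, hh, hhc⟩ := (r2.symm (self_mem ha)).trans r1
  have hke : k ≠ e'' := by
    rintro rfl
    exact hne2 (bdry hT ha' hk.1 ha'')
  have hc0 : c ∈ (Set.univ \ {k}) ∩ compOf G e c :=
    ⟨⟨trivial, fun h => root_notMem (h ▸ hk.1)⟩, self_mem ha.symm⟩
  have m1 : e' ∈ (Set.univ \ {k}) ∩ compOf G e c :=
    ⟨⟨trivial, hk.2.1.symm⟩, (compl_iff hT ha _).2 hE1⟩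
  have m2 : e'' ∈ (Set.univ \ {k}) ∩ compOf G e c :=
    ⟨⟨trivial, hke.symm⟩, (compl_iff hT ha _).2 hE2⟩
  have key : ∀ x ∈ (Set.univ \ {k}) ∩ compOf G e c, G.Adj c x → h x = e' := by
    intro x hx hcx
    have h3 := (hh.2 c hc0 x hx).2 hcx
    rw [hhc] at h3
    have h4 := hh.1.mapsTo hx
    rcases hch _ h3 with h5 | h5 | h5
    · rw [h5] at h4; exact absurd h4.2 root_notMem
    · exact h5
    · exact absurd h5 h4.1.2
  exact hne2.symm (hh.1.injOn m1 m2 ((key e' m1 ha').trans (key e'' m2 ha'').symm))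

lemma path_one {V : Type*} {G : SimpleGraph V} {S : Set V} {a : V} (hS : S = {a}) :
    Nonempty (G.induce S ≃g pathGraph 1) := by
  subst hS
  have e : Fin 1 ≃ ({a} : Set V) := Equiv.ofUnique _ _
  exact ⟨RelIso.symm ⟨e, fun {i j} => by
    have := Subsingleton.elim i j
    subst this
    simp⟩⟩

lemma path_two {V : Type*} {G : SimpleGraph V} {S : Set V} {a b : V} (hS : S = {a, b})
    (hab : G.Adj a b) : Nonempty (G.induce S ≃g pathGraph 2) := by
  subst hS
  let f : Fin 2 → ({a, b} : Set V) := ![⟨a, by simp⟩, ⟨b, by simp⟩]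
  have hf : Function.Bijective f := by
    constructor
    · intro i j h
      fin_cases i <;> fin_cases j <;> simp [f, hab.ne, hab.ne'] at h ⊢
    · rintro ⟨x, rfl | rfl⟩
      · exact ⟨0, rfl⟩
      · exact ⟨1, rfl⟩
  exact ⟨RelIso.symm ⟨Equiv.ofBijective f hf, fun {i j} => by
    fin_cases i <;> fin_cases j <;> simp [f, pathGraph_adj, hab, hab.symm]⟩⟩

lemma path_three {V : Type*} {G : SimpleGraph V} {S : Set V} {a b c : V} (hS : S = {a, b, c})
    (hab : G.Adj a b) (hbc : G.Adj b c) (hac : ¬ G.Adj a c) (hne : a ≠ c) :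
    Nonempty (G.induce S ≃g pathGraph 3) := by
  subst hS
  let f : Fin 3 → ({a, b, c} : Set V) := ![⟨a, by simp⟩, ⟨b, by simp⟩, ⟨c, by simp⟩]
  have hf : Function.Bijective f := by
    constructor
    · intro i j h
      fin_cases i <;> fin_cases j <;>
        simp [f, hab.ne, hab.ne', hbc.ne, hbc.ne', hne, hne.symm] at h ⊢
    · rintro ⟨x, rfl | rfl | rfl⟩
      · exact ⟨0, rfl⟩
      · exact ⟨1, rfl⟩
      · exact ⟨2, rfl⟩
  have hca : ¬ G.Adj c a := fun h => hac h.symm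
  exact ⟨RelIso.symm ⟨Equiv.ofBijective f hf, fun {i j} => by
    fin_cases i <;> fin_cases j <;>
      simp [f, pathGraph_adj, hab, hab.symm, hbc, hbc.symm, hac, hca]⟩⟩

lemma two_struct {V : Type*} [Finite V] {G : SimpleGraph V} {X : Set V} {b : V}
    (hC : Conn G X b) (h : X.ncard = 2) : ∃ z, X = {b, z} ∧ G.Adj b z := by
  obtain ⟨y, hy, hyb⟩ := exists_other (b := b) h.ge
  obtain ⟨z, hz, ha, -⟩ := hC.child hy hyb
  refine ⟨z, ?_, ha⟩
  refine (Set.eq_of_subset_of_ncard_le ?_ ?_ (Set.toFinite _)).symm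
  · rintro x (rfl | rfl)
    · exact hC.1
    · exact hz
  · rw [h, Set.ncard_pair ha.ne]

lemma three_struct {V : Type*} [Finite V] {G : SimpleGraph V} (hT : G.IsTree) {X : Set V} {b : V}
    (hC : Conn G X b) (hA : Asym G X b) (h : X.ncard = 3) :
    ∃ x y, X = {b, x, y} ∧ G.Adj b x ∧ G.Adj x y ∧ ¬ G.Adj b y ∧ b ≠ y := by
  obtain ⟨y0, hy0, hyb0⟩ := exists_other (X := X) (b := b) (by omega)
  obtain ⟨x, hx, ha, -⟩ := hC.child hy0 hyb0
  have h1 : (X \ {b}).ncard = 2 := by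
    rw [Set.ncard_sdiff_singleton_of_mem hC.1]; omega
  obtain ⟨y, hy, hyx⟩ := exists_other (X := X \ {b}) (b := x) h1.ge
  have hyb : y ≠ b := hy.2
  have hX : X = {b, x, y} := by
    refine (Set.eq_of_subset_of_ncard_le ?_ ?_ (Set.toFinite _)).symm
    · rintro w (rfl | rfl | rfl)
      · exact hC.1
      · exact hx
      · exact hy.1
    · rw [h, Set.ncard_eq_three.2 ⟨b, x, y, ha.ne, hyb.symm, hyx.symm, rfl⟩]
  have hn : ¬ G.Adj b y := by
    intro hby
    apply hA.not_rIso hT hx ha hy.1 hby hyx.symm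
    have e1 : X ∩ compOf G b x = {x} := by
      ext w
      constructor
      · rintro ⟨hw, hw'⟩
        rw [hX] at hw
        rcases hw with rfl | rfl | rfl
        · exact absurd hw' root_notMem
        · rfl
        · exact bdry hT ha hw' hby
      · rintro rfl; exact ⟨hx, self_mem ha⟩
    have e2 : X ∩ compOf G b y = {y} := by
      ext w
      constructor
      · rintro ⟨hw, hw'⟩
        rw [hX] at hw
        rcases hw with rfl | rfl | rfl
        · exact absurd hw' root_notMem
        · exact bdry hT hby hw' ha
        · rfl
      · rintro rfl; exact ⟨hy.1, self_mem hby⟩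
    rw [e1, e2]; exact RIso.of_singleton x y
  refine ⟨x, y, hX, ha, ?_, hn, hyb.symm⟩
  obtain ⟨x', hx', ha', hyx'⟩ := hC.child hy.1 hyb
  rw [hX] at hx'
  rcases hx' with rfl | rfl | rfl
  · exact absurd ha' (G.loopless.irrefl _)
  · obtain ⟨w, hw, haw, -⟩ := (hC.branch hT hx ha).child ⟨hy.1, hyx'⟩ hyx
    obtain ⟨hw1, hw2⟩ := hw
    rw [hX] at hw1
    rcases hw1 with rfl | rfl | rfl
    · exact absurd hw2 root_notMem
    · exact absurd haw (G.loopless.irrefl _)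
    · exact haw
  · exact absurd ha' hn

lemma nb {V : Type*} {G : SimpleGraph V} (hT : G.IsTree) {c e v w : V} (ha : G.Adj c e)
    (hv : v ∈ compOf G c e) (h : G.Adj v w) : w ∈ compOf G c e ∨ (w = c ∧ v = e) := by
  by_cases hw : w = c
  · subst hw; exact Or.inr ⟨rfl, bdry hT ha hv h.symm⟩
  · exact Or.inl (step hv h hw)

lemma deg_le {V : Type*} {G : SimpleGraph V} {v a b : V}
    (h : ∀ w, G.Adj v w → w = a ∨ w = b) : (G.neighborSet v).ncard ≤ 2 :=
  (Set.ncard_le_ncard (t := {a, b}) (fun w hw => h w hw) (Set.toFinite _)).trans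
    ((Set.ncard_insert_le a {b}).trans (by rw [Set.ncard_singleton]))

end AFT

/-- A minimal finite automorphism-free tree `T` (no leaf can be deleted keeping
automorphism-freeness) has exactly one vertex `c` of degree three, all other vertices
have degree at most two, and the three components of `T \ c` are paths on 1, 2 and 3
vertices respectively. -/
theorem stmt_14 {V : Type*} [Fintype V] (G : SimpleGraph V)
    (hT : G.IsTree) (h2 : 2 ≤ Fintype.card V)
    (hAF : AutFree G)
    (hmin : ∀ l : V, IsLeaf G l → ¬ AutFree (G.induce {x : V | x ≠ l})) :
    ∃ c : V, (G.neighborSet c).ncard = 3 ∧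
      (∀ w : V, w ≠ c → (G.neighborSet w).ncard ≤ 2) ∧
      ∃ x₁ x₂ x₃ : V, x₁ ≠ c ∧ x₂ ≠ c ∧ x₃ ≠ c ∧
        (∀ y : V, y ≠ c → y ∈ compOf G c x₁ ∨ y ∈ compOf G c x₂ ∨ y ∈ compOf G c x₃) ∧
        (compOf G c x₁).ncard = 1 ∧ (compOf G c x₂).ncard = 2 ∧ (compOf G c x₃).ncard = 3 ∧
        Nonempty ((G.induce (compOf G c x₁)) ≃g pathGraph 1) ∧
        Nonempty ((G.induce (compOf G c x₂)) ≃g pathGraph 2) ∧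
        Nonempty ((G.induce (compOf G c x₃)) ≃g pathGraph 3) := by
  have : Nonempty V := Fintype.card_pos_iff.1 (by omega)
  have hF := AFT.free_univ hAF
  obtain ⟨c, e, e', e'', ha, ha', ha'', n1, n2, n3, k3, k2, k1, hch⟩ :=
    AFT.structure_main hT hF (by rwa [Nat.card_eq_fintype_card])
      (fun l c hC hf => hmin l (AFT.isLeaf_of_conn hT hC) (AFT.autFree_of_free hf))
  obtain ⟨x, y, hX, hex, hxy, hey, hne⟩ :=
    AFT.three_struct hT (AFT.conn_comp hT ha) (AFT.asym_comp hT hF ha) k3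
  obtain ⟨z, hZ, hez⟩ := AFT.two_struct (AFT.conn_comp hT ha') k2
  have hW := AFT.eq_singleton (AFT.self_mem ha'') k1
  have hcov : ∀ y : V, y ≠ c → y ∈ compOf G c e'' ∨ y ∈ compOf G c e' ∨ y ∈ compOf G c e := by
    intro y hy
    obtain ⟨b, hb, hyb⟩ := AFT.exists_child hT hy
    rcases hch b hb with rfl | rfl | rfl
    · exact Or.inr (Or.inr hyb)
    · exact Or.inr (Or.inl hyb)
    · exact Or.inl hyb
  refine ⟨c, ?_, ?_, e'', e', e, ha''.ne', ha'.ne', ha.ne', hcov, k1, k2, k3,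
    AFT.path_one hW, AFT.path_two hZ hez, AFT.path_three hX hex hxy hey hne⟩
  · refine Set.ncard_eq_three.2 ⟨e, e', e'', n1, n2, n3, ?_⟩
    ext w
    constructor
    · intro hw; exact hch w hw
    · rintro (rfl | rfl | rfl)
      · exact ha
      · exact ha'
      · exact ha''
  · intro w hw
    have irr : ∀ v, ¬ G.Adj v v := fun v => G.loopless.irrefl v
    rcases hcov w hw with h | h | h
    · apply AFT.deg_le (a := c) (b := c)
      intro u hu
      rcases AFT.nb hT ha'' h hu with h3 | ⟨rfl, -⟩
      · rw [hW] at h h3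
        rw [Set.mem_singleton_iff] at h h3
        subst h; subst h3; exact absurd hu (irr _)
      · exact Or.inl rfl
    · have hw' := h
      rw [hZ] at hw'
      rcases hw' with hw' | hw'
      · apply AFT.deg_le (a := c) (b := z)
        intro u hu
        rcases AFT.nb hT ha' h hu with h3 | ⟨h3, -⟩
        · rw [hZ] at h3
          rcases h3 with h3 | h3
          · rw [hw', h3] at hu; exact absurd hu (irr _)
          · exact Or.inr h3
        · exact Or.inl h3
      · apply AFT.deg_le (a := c) (b := e')
        intro u hu
        rcases AFT.nb hT ha' h hu with h3 | ⟨h3, -⟩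
        · rw [hZ] at h3
          rcases h3 with h3 | h3
          · exact Or.inr h3
          · rw [hw', h3] at hu; exact absurd hu (irr _)
        · exact Or.inl h3
    · have hw' := h
      rw [hX] at hw'
      rcases hw' with hw' | hw' | hw'
      · apply AFT.deg_le (a := c) (b := x)
        intro u hu
        rcases AFT.nb hT ha h hu with h3 | ⟨h3, -⟩
        · rw [hX] at h3
          rcases h3 with h3 | h3 | h3
          · rw [hw', h3] at hu; exact absurd hu (irr _)
          · exact Or.inr h3
          · rw [hw', h3] at hu; exact absurd hu hey
        · exact Or.inl h3
      · apply AFT.deg_le (a := e) (b := y)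
        intro u hu
        rcases AFT.nb hT ha h hu with h3 | ⟨-, h3⟩
        · rw [hX] at h3
          rcases h3 with h3 | h3 | h3
          · exact Or.inl h3
          · rw [hw', h3] at hu; exact absurd hu (irr _)
          · exact Or.inr h3
        · exact absurd (hw'.symm.trans h3) hex.ne'
      · apply AFT.deg_le (a := x) (b := x)
        intro u hu
        rcases AFT.nb hT ha h hu with h3 | ⟨-, h3⟩
        · rw [hX] at h3
          rcases h3 with h3 | h3 | h3
          · rw [hw', h3] at hu; exact absurd hu.symm hey
          · exact Or.inl h3
          · rw [hw', h3] at hu; exact absurd hu (irr _)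
        · exact absurd (hw'.symm.trans h3) hne.symm
end
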